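/- arXiv:1511.06808 — 2 statements merged into one kernel-verified Lean document; each statement's English description precedes it below -/
import Mathlib

section
/- Let D be a face-convex good drawing of K_n with outer face F and let uv be an edge of K_n such that both Side(uv,1) and Side(uv,2) contain at least three vertices. Then Δ_{Side(uv,1)} ∩ Δ_{Side(uv,2)} = D[{u,v}] ∪ D[uv], i.e. the intersection of the two convex hulls consists exactly of the edge-arc D[uv] together with the points of u and v. -/
open Set Topology

noncomputable section

abbrev Plane : Type := EuclideanSpace ℝ (Fin 2)

abbrev SpherePt : Type := ↥(Metric.sphere (0 : EuclideanSpace ℝ (Fin 3)) 1)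

/-- `γ` crosses the curve `σ` at `p`: `p` lies on both sets, and in every neighbourhood of `p`
there is a smaller neighbourhood `V` such that `V \ σ` splits into two connected "sides",
both of which meet `γ`. -/
def CrossesAt {X : Type*} [TopologicalSpace X] (σ γ : Set X) (p : X) : Prop :=
  p ∈ σ ∧ p ∈ γ ∧ ∀ U ∈ nhds p, ∃ V ∈ nhds p, V ⊆ U ∧
    ∃ C₁ C₂ : Set X, V \ σ = C₁ ∪ C₂ ∧ Disjoint C₁ C₂ ∧
      IsPreconnected C₁ ∧ IsPreconnected C₂ ∧ (γ ∩ C₁).Nonempty ∧ (γ ∩ C₂).Nonempty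

/-- `Δ` is one of the closed regions ("closed discs") bounded by the curve `C`:
it is the union of `C` with a connected component of the complement of `C`. -/
def IsClosedSide {X : Type*} [TopologicalSpace X] (C Δ : Set X) : Prop :=
  ∃ q, q ∉ C ∧ Δ = connectedComponentIn Cᶜ q ∪ C

/-- `Δ` is one of the open regions ("open discs") bounded by the curve `C`. -/
def IsOpenSide {X : Type*} [TopologicalSpace X] (C Δ : Set X) : Prop :=
  ∃ q, q ∉ C ∧ Δ = connectedComponentIn Cᶜ q

/-- `G` is a face (a connected component of the complement) of the point set `A`. -/
def IsFaceOf {X : Type*} [TopologicalSpace X] (A G : Set X) : Prop :=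
  ∃ q, q ∉ A ∧ G = connectedComponentIn Aᶜ q

/-- A good drawing of the complete graph `K_n` in the space `X`. -/
structure GoodDrawing (n : ℕ) (X : Type*) [TopologicalSpace X] where
  vtx : Fin n → X
  arc : Fin n → Fin n → Set X
  vtx_inj : Function.Injective vtx
  arc_symm : ∀ u v, arc u v = arc v u
  isArc : ∀ u v, u ≠ v → ∃ f : ℝ → X, ContinuousOn f (Set.Icc 0 1) ∧
    Set.InjOn f (Set.Icc 0 1) ∧ f 0 = vtx u ∧ f 1 = vtx v ∧ arc u v = f '' Set.Icc 0 1
  vtx_not_mem : ∀ u v w, u ≠ v → w ≠ u → w ≠ v → vtx w ∉ arc u v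
  adj_arcs : ∀ u v w, u ≠ v → u ≠ w → v ≠ w → arc u v ∩ arc u w = {vtx u}
  indep_arcs : ∀ u v x y : Fin n, u ≠ v → x ≠ y → u ≠ x → u ≠ y → v ≠ x → v ≠ y →
    (arc u v ∩ arc x y).Subsingleton ∧
      ∀ p ∈ arc u v ∩ arc x y,
        CrossesAt (arc u v) (arc x y) p ∧ CrossesAt (arc x y) (arc u v) p
  no_triple_pt : ∀ p : X, p ∉ Set.range vtx → ∀ u v x y s t : Fin n,
    u ≠ v → x ≠ y → s ≠ t →
    ({u, v} : Finset (Fin n)) ≠ {x, y} → ({u, v} : Finset (Fin n)) ≠ {s, t} →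
    ({x, y} : Finset (Fin n)) ≠ {s, t} →
    ¬(p ∈ arc u v ∧ p ∈ arc x y ∧ p ∈ arc s t)

namespace GoodDrawing

variable {n : ℕ} {X : Type*} [TopologicalSpace X]

/-- The point set of the subdrawing induced by the set `W` of vertices. -/
def image (D : GoodDrawing n X) (W : Set (Fin n)) : Set X :=
  (D.vtx '' W) ∪ ⋃ u ∈ W, ⋃ v ∈ W, ⋃ (_ : u ≠ v), D.arc u v

/-- The simple closed curve that is the drawing of the 3-cycle on `a`, `b`, `c`. -/
def tri (D : GoodDrawing n X) (a b c : Fin n) : Set X :=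
  D.arc a b ∪ D.arc b c ∪ D.arc a c

/-- `Δ` is convex: it contains the arc between any two vertex points it contains. -/
def ConvexDisc (D : GoodDrawing n X) (Δ : Set X) : Prop :=
  ∀ x y : Fin n, x ≠ y → D.vtx x ∈ Δ → D.vtx y ∈ Δ → D.arc x y ⊆ Δ

/-- `F` is a face of the drawing `D`. -/
def IsFace (D : GoodDrawing n X) (F : Set X) : Prop :=
  IsFaceOf (D.image Set.univ) F

/-- `D` is face-convex with outer face `F`. -/
def FaceConvex (D : GoodDrawing n X) (F : Set X) : Prop :=
  D.IsFace F ∧ ∀ a b c : Fin n, a ≠ b → a ≠ c → b ≠ c →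
    ∀ Δ : Set X, IsClosedSide (D.tri a b c) Δ → ¬F ⊆ Δ → D.ConvexDisc Δ

/-- `D` is a convex drawing: every 3-cycle has at least one convex closed side. -/
def IsConvex (D : GoodDrawing n X) : Prop :=
  ∀ a b c : Fin n, a ≠ b → a ≠ c → b ≠ c →
    ∃ Δ : Set X, IsClosedSide (D.tri a b c) Δ ∧ D.ConvexDisc Δ

/-- The closed curve drawn by the cycle `c 0, c 1, …, c (m-1), c 0` of `K_n`. -/
def cycCurve (D : GoodDrawing n X) {m : ℕ} [NeZero m] (c : Fin m → Fin n) : Set X :=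
  ⋃ i : Fin m, D.arc (c i) (c (i + 1))

/-- `Δ` is the convex hull `Δ_W` of the vertex set `W` (relative to the outer face `F`):
the face of the subdrawing `D[W]` containing `F` is bounded by a cycle `C_W` on vertices
of `W`, and `Δ` is the closed disc bounded by `D[C_W]` disjoint from `F`. -/
def IsHull (D : GoodDrawing n X) (F : Set X) (W : Set (Fin n)) (Δ : Set X) : Prop :=
  ∃ (m : ℕ) (c : Fin (m + 3) → Fin n), Function.Injective c ∧ (∀ i, c i ∈ W) ∧
    (∃ G : Set X, IsFaceOf (D.image W) G ∧ F ⊆ G ∧ frontier G = D.cycCurve c) ∧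
    IsClosedSide (D.cycCurve c) Δ ∧ Disjoint F Δ

/-- The data of the two local sides `C 0`, `C 1` of the arc `D[uv]` at an interior
point `p` of the arc. -/
def LocalSides (D : GoodDrawing n X) (u v : Fin n) (p : X) (C : Fin 2 → Set X) : Prop :=
  p ∈ D.arc u v ∧ p ≠ D.vtx u ∧ p ≠ D.vtx v ∧
    ∃ V ∈ nhds p, C 0 ∪ C 1 = V \ D.arc u v ∧ Disjoint (C 0) (C 1) ∧
      IsPreconnected (C 0) ∧ IsPreconnected (C 1) ∧ (C 0).Nonempty ∧ (C 1).Nonempty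

/-- Relative to the outer face `F` and the local sides `C` of `D[uv]` at `p`, the
vertex `w` is on side `i` of `uv`: the closed disc bounded by `D[{u,v,w}]` not
containing `F` lies locally on side `i` of `D[uv]`. -/
def OnSide (D : GoodDrawing n X) (F : Set X) (u v : Fin n) (p : X) (C : Fin 2 → Set X)
    (i : Fin 2) (w : Fin n) : Prop :=
  w ≠ u ∧ w ≠ v ∧ ∃ Δ : Set X, IsClosedSide (D.tri u v w) Δ ∧ ¬F ⊆ Δ ∧
    ∃ V ∈ nhds p, C i ∩ V ⊆ Δ

/-- `Side(uv, i)`: the set consisting of `u`, `v` and all vertices on side `i` of `uv`. -/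
def SideSet (D : GoodDrawing n X) (F : Set X) (u v : Fin n) (p : X) (C : Fin 2 → Set X)
    (i : Fin 2) : Set (Fin n) :=
  {u, v} ∪ {w : Fin n | D.OnSide F u v p C i w}

/-- The edge-arcs `D[uv]` and `D[xy]` cross: they share a non-vertex point. -/
def Crosses (D : GoodDrawing n X) (u v x y : Fin n) : Prop :=
  ∃ p : X, p ∈ D.arc u v ∩ D.arc x y ∧ p ∉ Set.range D.vtx

/-- The set of empty triangles of `D`: pairs of a 3-set of vertices together with an
open disc bounded by the corresponding triangle containing no vertex point. -/
def emptyTriangles (D : GoodDrawing n X) : Set (Finset (Fin n) × Set X) :=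
  {T | ∃ a b c : Fin n, a ≠ b ∧ a ≠ c ∧ b ≠ c ∧ T.1 = {a, b, c} ∧
    IsOpenSide (D.tri a b c) T.2 ∧ ∀ i, D.vtx i ∉ T.2}

end GoodDrawing

/-- A pseudoline in the plane. -/
def IsPseudoline (σ : Set Plane) : Prop :=
  IsClosed σ ∧ Nonempty (↥σ ≃ₜ ℝ) ∧ ¬IsPreconnected σᶜ

/-- An arrangement of pseudolines: any two distinct members meet in exactly one
point, at which they cross. -/
def IsArrangement (A : Finset (Set Plane)) : Prop :=
  (∀ σ ∈ A, IsPseudoline σ) ∧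
    ∀ σ ∈ A, ∀ τ ∈ A, σ ≠ τ →
      ∃ p : Plane, σ ∩ τ = {p} ∧ CrossesAt σ τ p ∧ CrossesAt τ σ p

/-- A planar good drawing of `K_n` is pseudolinear if some arrangement of pseudolines
contains, for each edge, a distinct pseudoline containing that edge-arc. -/
def GoodDrawing.Pseudolinear {n : ℕ} (D : GoodDrawing n Plane) : Prop :=
  ∃ (A : Finset (Set Plane)) (L : Fin n → Fin n → Set Plane), IsArrangement A ∧
    (∀ u v, u ≠ v → L u v ∈ A ∧ D.arc u v ⊆ L u v) ∧
    (∀ u v, L u v = L v u) ∧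
    ∀ u v x y : Fin n, u ≠ v → x ≠ y →
      ({u, v} : Finset (Fin n)) ≠ {x, y} → L u v ≠ L x y


/-- continuous logs on contractible spaces -/
theorem exists_log_of_contractible {A : Type*} [TopologicalSpace A] [SimplyConnectedSpace A]
    [LocallyPathConnectedSpace A] (h : A → ℂ) (hc : Continuous h) (h0 : ∀ a, h a ≠ 0) :
    ∃ g : A → ℂ, Continuous g ∧ ∀ a, Complex.exp (g a) = h a := by
  obtain ⟨a0⟩ : Nonempty A := inferInstance
  obtain ⟨G, ⟨-, hG⟩, -⟩ := Complex.isCoveringMap_exp.existsUnique_continuousMap_lifts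
    (⟨fun a => ⟨h a, h0 a⟩, by fun_prop⟩ : C(A, {z : ℂ // z ≠ 0})) a0 (Complex.log (h a0))
    (by simp [Complex.exp_log (h0 a0)])
  refine ⟨G, G.continuous, fun a => ?_⟩
  have := congrFun hG a
  simpa [Subtype.ext_iff] using this

theorem exists_log_Icc (h : ℝ → ℂ) (hc : ContinuousOn h (Icc 0 1)) (h0 : ∀ t ∈ Icc (0:ℝ) 1, h t ≠ 0) :
    ∃ g : ℝ → ℂ, ContinuousOn g (Icc 0 1) ∧ ∀ t ∈ Icc (0:ℝ) 1, Complex.exp (g t) = h t := by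
  obtain ⟨g, hg, hg'⟩ := exists_log_of_contractible
    (fun t : ℝ => h (projIcc (0:ℝ) 1 zero_le_one t))
    (by
      have := hc.domRestrict
      exact this.comp (continuous_projIcc (h := zero_le_one)))
    (fun t => h0 _ (Subtype.property _))
  refine ⟨g, hg.continuousOn, fun t ht => ?_⟩
  rw [hg', projIcc_of_mem _ ht]


theorem discreteTopology_range_int : DiscreteTopology (range (Int.cast : ℤ → ℂ)) := by
  have h : range (Int.cast : ℤ → ℂ) = (AddSubgroup.zmultiples (1:ℂ) : Set ℂ) := by
    ext z; simp [AddSubgroup.mem_zmultiples_iff]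
  have := NormedSpace.discreteTopology_zmultiples (1:ℂ)
  rw [h]; exact this

theorem int_valued_const {X : Type*} [TopologicalSpace X] {S : Set X} (hS : IsPreconnected S)
    {η : X → ℂ} (hη : ContinuousOn η S) (hi : ∀ z ∈ S, ∃ k : ℤ, η z = k) {a b : X}
    (ha : a ∈ S) (hb : b ∈ S) : η a = η b := by
  have := discreteTopology_range_int
  exact hS.constant_of_mapsTo (T := range (Int.cast : ℤ → ℂ)) ⟨this⟩ hη
    (fun z hz => by obtain ⟨k, hk⟩ := hi z hz; exact ⟨k, hk.symm⟩) ha hb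

theorem int_valued_eventually {X : Type*} [TopologicalSpace X] {S : Set X} (hS : IsOpen S)
    {η : X → ℂ} (hη : ContinuousOn η S) (hi : ∀ z ∈ S, ∃ k : ℤ, η z = k) {a : X}
    (ha : a ∈ S) : ∀ᶠ z in 𝓝 a, η z = η a := by
  have h1 : ∀ᶠ z in 𝓝 a, z ∈ S := hS.mem_nhds ha
  have h2 : ∀ᶠ z in 𝓝 a, dist (η z) (η a) < 1 :=
    (hη.continuousAt (hS.mem_nhds ha)).eventually (Metric.ball_mem_nhds _ one_pos)
  filter_upwards [h1, h2] with z hz hd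
  obtain ⟨k, hk⟩ := hi z hz
  obtain ⟨l, hl⟩ := hi a ha
  rw [hk, hl] at hd ⊢
  rw [dist_eq_norm] at hd
  have : ‖((k - l : ℤ) : ℂ)‖ < 1 := by push_cast; exact hd
  rw [Complex.norm_intCast] at this
  have h3 : |k - l| < 1 := by exact_mod_cast this
  have : k = l := by have := Int.abs_lt_one_iff.1 h3; omega
  rw [this]

/-- two logs on a preconnected set differ by a constant -/
theorem logs_diff_const {X : Type*} [TopologicalSpace X] {K : Set X} (hK : IsPreconnected K)
    {g g' : X → ℂ} (hg : ContinuousOn g K) (hg' : ContinuousOn g' K)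
    (h : ∀ z ∈ K, Complex.exp (g z) = Complex.exp (g' z)) {a b : X} (ha : a ∈ K) (hb : b ∈ K) :
    g b - g a = g' b - g' a := by
  have key := int_valued_const (η := fun z => (g z - g' z) / (2 * Real.pi * Complex.I)) hK
    (by fun_prop) (fun z hz => by
      obtain ⟨k, hk⟩ := Complex.exp_eq_exp_iff_exists_int.1 (h z hz)
      refine ⟨k, ?_⟩
      rw [hk]; field_simp [Complex.two_pi_I_ne_zero]; ring) ha hb
  have := Complex.two_pi_I_ne_zero
  rw [div_left_inj' this] at key
  linear_combination -key

theorem no_log_circle (c : ℂ) (r : ℝ) (hr : 0 < r) (l : ℕ) (hl : l ≠ 0) (g : ℂ → ℂ)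
    (hg : ContinuousOn g (Metric.sphere c r))
    (he : ∀ z ∈ Metric.sphere c r, Complex.exp (g z) = (z - c) ^ l) : False := by
  have hm : ∀ t : ℝ, circleMap c r t ∈ Metric.sphere c r := fun t => circleMap_mem_sphere c hr.le t
  have key := logs_diff_const (K := (univ : Set ℝ)) isPreconnected_univ
    (g := fun t => g (circleMap c r t)) (g' := fun t => l * (Complex.log r + t * Complex.I))
    ((hg.comp (continuous_circleMap c r).continuousOn (fun t _ => hm t)))
    (by fun_prop) (fun t _ => by
      rw [he _ (hm t), Complex.exp_nat_mul, Complex.exp_add, Complex.exp_log (by exact_mod_cast hr.ne')]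
      simp [circleMap]) (mem_univ 0) (mem_univ (2 * Real.pi))
  have h0 : circleMap c r (2 * Real.pi) = circleMap c r 0 := by
    simpa using (periodic_circleMap c r) 0
  simp only [h0] at key
  have h2 := Complex.two_pi_I_ne_zero
  have h3 : (l : ℂ) * (2 * Real.pi * Complex.I) = 0 := by
    push_cast at key
    linear_combination -key
  exact (mul_ne_zero (by exact_mod_cast hl) h2) h3

/-- the key extension lemma -/
theorem no_log_frontier (U : Set ℂ) (hU : IsOpen U) (hb : Bornology.IsBounded U) (p : ℂ)
    (hp : p ∈ U) (l : ℕ) (hl : l ≠ 0) (h : ℂ → ℂ) (hh : ContinuousOn h (closure U))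
    (h0 : ∀ z ∈ closure U, h z ≠ 0) (g : ℂ → ℂ) (hg : ContinuousOn g (frontier U))
    (he : ∀ z ∈ frontier U, Complex.exp (g z) = (z - p) ^ l * h z) : False := by
  classical
  -- Tietze
  obtain ⟨G, hG⟩ := ContinuousMap.exists_restrict_eq (isClosed_frontier (s := U))
    (⟨fun z : frontier U => g z, continuousOn_iff_continuous_domRestrict.1 hg⟩ : C(frontier U, ℂ))
  have hG' : ∀ z ∈ frontier U, G z = g z := fun z hz => by
    have := congrArg (fun f => f ⟨z, hz⟩) hG
    exact this
  let Φ : ℂ → ℂ := fun z => if z ∈ closure U then Complex.exp (G z) / h z else (z - p) ^ l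
  have hΦc : Continuous Φ := by
    refine continuous_if (fun z hz => ?_) ?_ (by fun_prop)
    · have hz' : z ∈ frontier U := frontier_closure_subset hz
      rw [hG' z hz', he z hz']
      field_simp [h0 z (frontier_subset_closure hz')]
    · have : closure {x | x ∈ closure U} = closure U := closure_closure
      rw [this]
      exact ContinuousOn.div (by fun_prop) hh h0
  have hΦ0 : ∀ z, Φ z ≠ 0 := by
    intro z
    by_cases hz : z ∈ closure U
    · simp only [Φ, hz, if_true]
      exact div_ne_zero (Complex.exp_ne_zero _) (h0 z hz)
    · simp only [Φ, hz, if_false]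
      refine pow_ne_zero _ (sub_ne_zero.2 ?_)
      rintro rfl; exact hz (subset_closure hp)
  obtain ⟨L, hL, hL'⟩ := exists_log_of_contractible Φ hΦc hΦ0
  obtain ⟨R, hR⟩ := hb.closure.subset_ball p
  refine no_log_circle p (max R 1) (by positivity) l hl L hL.continuousOn (fun z hz => ?_)
  rw [hL']
  have : z ∉ closure U := fun hz' => by
    have h1 := hR hz'
    rw [Metric.mem_ball] at h1
    rw [Metric.mem_sphere] at hz
    rw [hz] at h1
    exact absurd h1 (not_lt.2 (le_max_left _ _))
  simp [Φ, this]


structure PlaneChart (X : Type*) [TopologicalSpace X] where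
  inf : X
  φ : X → ℂ
  ψ : ℂ → X
  ψ_cont : Continuous ψ
  φ_cont : ContinuousOn φ {inf}ᶜ
  left : ∀ x, x ≠ inf → ψ (φ x) = x
  right : ∀ z, φ (ψ z) = z
  ne : ∀ z, ψ z ≠ inf

namespace PlaneChart

variable {X : Type*} [TopologicalSpace X] (P : PlaneChart X)

theorem φ_inj {x y : X} (hx : x ≠ P.inf) (hy : y ≠ P.inf) (h : P.φ x = P.φ y) : x = y := by
  rw [← P.left x hx, ← P.left y hy, h]

theorem ψ_preimage [T1Space X] {U : Set X} (hU : IsOpen U) : IsOpen (P.ψ ⁻¹' U) :=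
  hU.preimage P.ψ_cont

theorem ψ_open [T1Space X] : IsOpenMap P.ψ := by
  intro V hV
  have : P.ψ '' V = {P.inf}ᶜ ∩ P.φ ⁻¹' V := by
    ext x
    constructor
    · rintro ⟨z, hz, rfl⟩
      exact ⟨P.ne z, by simpa [P.right] using hz⟩
    · rintro ⟨hx, hx'⟩
      exact ⟨P.φ x, hx', P.left x hx⟩
  rw [this]
  exact P.φ_cont.isOpen_inter_preimage isOpen_compl_singleton hV

def LogOn (K : Set X) (p : X) (g : X → ℂ) : Prop :=
  ContinuousOn g K ∧ ∀ z ∈ K, Complex.exp (g z) = P.φ z - P.φ p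

structure Tame (K : Set X) : Prop where
  closed : IsClosed K
  ninf : P.inf ∉ K
  conn : IsPreconnected K
  log : ∀ p, p ∉ K → p ≠ P.inf → ∃ g, P.LogOn K p g

open Classical in
noncomputable def theta (K : Set X) (a b p : X) : ℂ :=
  if h : p ≠ P.inf ∧ ∃ g, P.LogOn K p g then
    (h.2.choose b - h.2.choose a) / (2 * Real.pi * Complex.I) else 0

theorem theta_inf (K : Set X) (a b : X) : P.theta K a b P.inf = 0 := by
  simp [theta]

variable {P}

theorem Tame.φ_cont {K : Set X} (hK : P.Tame K) : ContinuousOn P.φ K :=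
  P.φ_cont.mono (fun x hx => by rintro rfl; exact hK.ninf hx)

theorem theta_eq {K : Set X} (hK : P.Tame K) {a b p : X} (ha : a ∈ K) (hb : b ∈ K)
    (hp : p ≠ P.inf) {g : X → ℂ} (hg : P.LogOn K p g) :
    P.theta K a b p = (g b - g a) / (2 * Real.pi * Complex.I) := by
  have h : p ≠ P.inf ∧ ∃ g, P.LogOn K p g := ⟨hp, g, hg⟩
  rw [theta, dif_pos h]
  have hs := h.2.choose_spec
  rw [logs_diff_const hK.conn hs.1 hg.1 (fun z hz => by rw [hs.2 z hz, hg.2 z hz]) ha hb]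

theorem theta_symm (K : Set X) (a b p : X) : P.theta K b a p = - P.theta K a b p := by
  unfold theta
  split_ifs
  · ring
  · simp

theorem theta_mono {K K' : Set X} (hK : P.Tame K) (hK' : P.Tame K') (hs : K ⊆ K') {a b p : X}
    (ha : a ∈ K) (hb : b ∈ K) (hp : p ∉ K') : P.theta K a b p = P.theta K' a b p := by
  by_cases hpi : p = P.inf
  · subst hpi; rw [theta_inf, theta_inf]
  obtain ⟨g, hg⟩ := hK'.log p hp hpi
  rw [theta_eq hK' (hs ha) (hs hb) hpi hg, theta_eq hK ha hb hpi
    ⟨hg.1.mono hs, fun z hz => hg.2 z (hs hz)⟩]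

theorem theta_add {K : Set X} (hK : P.Tame K) {a b c p : X}
    (ha : a ∈ K) (hb : b ∈ K) (hc : c ∈ K) (hp : p ∉ K) :
    P.theta K a b p + P.theta K b c p = P.theta K a c p := by
  by_cases hpi : p = P.inf
  · subst hpi; simp [theta_inf]
  obtain ⟨g, hg⟩ := hK.log p hp hpi
  rw [theta_eq hK ha hb hpi hg, theta_eq hK hb hc hpi hg, theta_eq hK ha hc hpi hg]
  ring

theorem exp_theta {K : Set X} (hK : P.Tame K) {a b p : X}
    (ha : a ∈ K) (hb : b ∈ K) (hp : p ∉ K) (hpi : p ≠ P.inf) :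
    Complex.exp (2 * Real.pi * Complex.I * P.theta K a b p) =
      (P.φ b - P.φ p) / (P.φ a - P.φ p) := by
  obtain ⟨g, hg⟩ := hK.log p hp hpi
  rw [theta_eq hK ha hb hpi hg, mul_div_cancel₀ _ Complex.two_pi_I_ne_zero, Complex.exp_sub,
    hg.2 b hb, hg.2 a ha]

theorem sub_ne_zero' {a p : X} (ha : a ≠ P.inf) (hp : p ≠ P.inf) (h : a ≠ p) :
    P.φ a - P.φ p ≠ 0 :=
  sub_ne_zero.2 (fun h' => h (P.φ_inj ha hp h'))

theorem theta_contAt [T2Space X] [CompactSpace X] {K : Set X} (hK : P.Tame K) {a b : X}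
    (ha : a ∈ K) (hb : b ∈ K) {p : X} (hp : p ∉ K) (hpi : p ≠ P.inf) :
    ContinuousAt (P.theta K a b) p := by
  obtain ⟨g, hg⟩ := hK.log p hp hpi
  -- distance
  have hcomp : IsCompact (P.φ '' K) := hK.closed.isCompact.image_of_continuousOn hK.φ_cont
  have hpK : P.φ p ∉ P.φ '' K := by
    rintro ⟨z, hz, hzp⟩
    exact hp (P.φ_inj (fun h => hK.ninf (h ▸ hz)) hpi hzp ▸ hz)
  obtain ⟨r, hr, hr'⟩ := Metric.isOpen_iff.1 hcomp.isClosed.isOpen_compl _ hpK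
  have hφ : ContinuousAt P.φ p := P.φ_cont.continuousAt (isOpen_compl_singleton.mem_nhds hpi)
  have hd : ∀ z ∈ K, r ≤ ‖P.φ z - P.φ p‖ := by
    intro z hz
    by_contra hlt
    push Not at hlt
    rw [← dist_eq_norm] at hlt
    exact hr' (Metric.mem_ball.2 hlt) ⟨z, hz, rfl⟩
  have hnz : ∀ z ∈ K, P.φ z - P.φ p ≠ 0 := fun z hz h => by
    have := hd z hz; rw [h] at this; simp at this; linarith
  -- formula nearby
  have hslit : ∀ q, ‖P.φ q - P.φ p‖ < r → ∀ z ∈ K,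
      1 - (P.φ q - P.φ p) / (P.φ z - P.φ p) ∈ Complex.slitPlane := by
    intro q hq z hz
    have : ‖(P.φ q - P.φ p) / (P.φ z - P.φ p)‖ < 1 := by
      rw [norm_div, div_lt_one (norm_pos_iff.2 (hnz z hz))]
      exact hq.trans_le (hd z hz)
    have h2 := Complex.mem_slitPlane_of_norm_lt_one (z := -((P.φ q - P.φ p) / (P.φ z - P.φ p)))
      (by rwa [norm_neg])
    rwa [← sub_eq_add_neg] at h2
  have hev : ∀ᶠ q in 𝓝 p, P.theta K a b q =
      (g b + Complex.log (1 - (P.φ q - P.φ p) / (P.φ b - P.φ p)) -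
        (g a + Complex.log (1 - (P.φ q - P.φ p) / (P.φ a - P.φ p)))) /
          (2 * Real.pi * Complex.I) := by
    have h1 : ∀ᶠ q in 𝓝 p, q ≠ P.inf := isOpen_compl_singleton.mem_nhds hpi
    have h2 : ∀ᶠ q in 𝓝 p, dist (P.φ q) (P.φ p) < r := hφ.eventually (Metric.ball_mem_nhds _ hr)
    filter_upwards [h1, h2] with q hq1 hq2
    rw [dist_eq_norm] at hq2
    have hl : P.LogOn K q (fun z => g z + Complex.log (1 - (P.φ q - P.φ p) / (P.φ z - P.φ p))) := by
      refine ⟨hg.1.add (ContinuousOn.clog ?_ (hslit q hq2)), fun z hz => ?_⟩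
      · exact continuousOn_const.sub
          (continuousOn_const.div (hK.φ_cont.sub continuousOn_const) hnz)
      · rw [Complex.exp_add, hg.2 z hz,
          Complex.exp_log (Complex.slitPlane_ne_zero (hslit q hq2 z hz))]
        have := hnz z hz
        field_simp
        ring
    rw [theta_eq hK ha hb hq1 hl]
  refine ContinuousAt.congr_of_eventuallyEq ?_ hev
  have hL : ∀ z ∈ K, ContinuousAt
      (fun q => Complex.log (1 - (P.φ q - P.φ p) / (P.φ z - P.φ p))) p := by
    intro z hz
    refine ContinuousAt.clog ?_ (by simp)
    exact continuousAt_const.sub ((hφ.sub continuousAt_const).div_const _)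
  exact ((continuousAt_const.add (hL b hb)).sub (continuousAt_const.add (hL a ha))).div_const _

theorem theta_contAt_inf [T2Space X] [CompactSpace X] {K : Set X} (hK : P.Tame K) {a b : X}
    (ha : a ∈ K) (hb : b ∈ K) : ContinuousAt (P.theta K a b) P.inf := by
  have hcomp : IsCompact (P.φ '' K) := hK.closed.isCompact.image_of_continuousOn hK.φ_cont
  obtain ⟨R, hR⟩ := hcomp.isBounded.exists_norm_le
  -- φ → ∞ 
  have hinf : Filter.Tendsto (fun q => (P.φ q)⁻¹) (𝓝[≠] P.inf) (𝓝 0) := by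
    refine Filter.tendsto_inv₀_cobounded.comp ?_
    rw [Filter.tendsto_def]
    intro s hs
    have hb := Metric.isBounded_iff_subset_closedBall (0:ℂ) |>.1 (Bornology.isBounded_compl_iff.2 hs)
    obtain ⟨r, hr⟩ := hb
    have hcl : IsClosed (P.ψ '' Metric.closedBall 0 r) :=
      ((isCompact_closedBall 0 r).image P.ψ_cont).isClosed
    have hmem : (P.ψ '' Metric.closedBall 0 r)ᶜ ∈ 𝓝 P.inf :=
      hcl.isOpen_compl.mem_nhds (by rintro ⟨z, -, hz⟩; exact P.ne z hz)
    filter_upwards [mem_nhdsWithin_of_mem_nhds hmem, self_mem_nhdsWithin] with q hq1 hq2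
    by_contra hqs
    exact hq1 ⟨P.φ q, hr hqs, P.left q hq2⟩
  rw [continuousAt_iff_punctured_nhds, theta_inf]
  have hsm : ∀ᶠ q in 𝓝[≠] P.inf, ‖(P.φ q)⁻¹‖ * (R + 1) < 1 := by
    have : Filter.Tendsto (fun q => ‖(P.φ q)⁻¹‖ * (R + 1)) (𝓝[≠] P.inf) (𝓝 (‖(0:ℂ)‖ * (R + 1))) :=
      hinf.norm.mul_const _
    exact this.eventually_lt_const (by simp)
  have hnz : ∀ᶠ q in 𝓝[≠] P.inf, P.φ q ≠ 0 := by
    have hmem : ({P.ψ 0}ᶜ : Set X) ∈ 𝓝 P.inf :=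
      isOpen_compl_singleton.mem_nhds (fun h => P.ne 0 h.symm)
    filter_upwards [mem_nhdsWithin_of_mem_nhds hmem, self_mem_nhdsWithin] with q hq1 hq2 h
    exact hq1 (by rw [← h, P.left q hq2]; rfl)
  have hslit : ∀ q, ‖(P.φ q)⁻¹‖ * (R + 1) < 1 → ∀ z ∈ K,
      1 - P.φ z * (P.φ q)⁻¹ ∈ Complex.slitPlane := by
    intro q hq z hz
    have : ‖P.φ z * (P.φ q)⁻¹‖ < 1 := by
      rw [norm_mul, mul_comm]
      refine lt_of_le_of_lt ?_ hq
      exact mul_le_mul_of_nonneg_left ((hR _ ⟨z, hz, rfl⟩).trans (by linarith)) (norm_nonneg _)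
    have h2 := Complex.mem_slitPlane_of_norm_lt_one (z := -(P.φ z * (P.φ q)⁻¹))
      (by rwa [norm_neg])
    rwa [← sub_eq_add_neg] at h2
  have hev : ∀ᶠ q in 𝓝[≠] P.inf, P.theta K a b q =
      (Complex.log (1 - P.φ b * (P.φ q)⁻¹) - Complex.log (1 - P.φ a * (P.φ q)⁻¹)) /
          (2 * Real.pi * Complex.I) := by
    filter_upwards [hsm, hnz, self_mem_nhdsWithin] with q hq1 hq2 hq3
    have hl : P.LogOn K q (fun z => Complex.log (- P.φ q) +
        Complex.log (1 - P.φ z * (P.φ q)⁻¹)) := by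
      refine ⟨continuousOn_const.add (ContinuousOn.clog ?_ (hslit q hq1)), fun z hz => ?_⟩
      · exact continuousOn_const.sub (hK.φ_cont.mul continuousOn_const)
      · rw [Complex.exp_add, Complex.exp_log (neg_ne_zero.2 hq2),
          Complex.exp_log (Complex.slitPlane_ne_zero (hslit q hq1 z hz))]
        field_simp
        ring
    rw [theta_eq hK ha hb hq3 hl]
    ring
  refine Filter.Tendsto.congr' (hev.mono fun _ h => h.symm) ?_
  have hL : ∀ z, Filter.Tendsto
      (fun q => Complex.log (1 - P.φ z * (P.φ q)⁻¹)) (𝓝[≠] P.inf) (𝓝 0) := by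
    intro z
    have h1 : Filter.Tendsto (fun q => 1 - P.φ z * (P.φ q)⁻¹) (𝓝[≠] P.inf) (𝓝 1) := by
      simpa using tendsto_const_nhds.sub (hinf.const_mul (P.φ z))
    have h2 := h1.clog Complex.one_mem_slitPlane
    simpa using h2
  simpa using ((hL b).sub (hL a)).div_const (2 * Real.pi * Complex.I)

theorem theta_cont [T2Space X] [CompactSpace X] {K : Set X} (hK : P.Tame K) {a b : X}
    (ha : a ∈ K) (hb : b ∈ K) : ContinuousOn (P.theta K a b) Kᶜ := by
  intro p hp
  by_cases hpi : p = P.inf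
  · subst hpi; exact (theta_contAt_inf hK ha hb).continuousWithinAt
  · exact (theta_contAt hK ha hb hp hpi).continuousWithinAt

theorem tame_arc [T2Space X] {K : Set X} {γ : ℝ → X} (hc : ContinuousOn γ (Icc 0 1))
    (hi : InjOn γ (Icc 0 1)) (hK : K = γ '' Icc 0 1) (hinf : P.inf ∉ K) : P.Tame K := by
  subst hK
  refine ⟨(isCompact_Icc.image_of_continuousOn hc).isClosed, hinf,
    isPreconnected_Icc.image _ hc, fun p hp hpi => ?_⟩
  have hφ : ContinuousOn P.φ (γ '' Icc 0 1) :=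
    P.φ_cont.mono (fun x hx => by rintro rfl; exact hinf hx)
  obtain ⟨g, hg, hg'⟩ := exists_log_Icc (fun t => P.φ (γ t) - P.φ p)
    ((hφ.comp hc (mapsTo_image _ _)).sub continuousOn_const)
    (fun t ht => sub_ne_zero' (fun h => hinf (h ▸ mem_image_of_mem _ ht)) hpi
      (fun h => hp (h ▸ mem_image_of_mem _ ht)))
  have hinv : ∀ t ∈ Icc (0:ℝ) 1, Function.invFunOn γ (Icc 0 1) (γ t) = t := fun t ht =>
    hi.leftInvOn_invFunOn ht
  refine ⟨g ∘ Function.invFunOn γ (Icc 0 1), ?_, ?_⟩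
  · -- continuity via closed map
    have hcl : IsClosedEmbedding ((Icc (0:ℝ) 1).domRestrict γ) :=
      Continuous.isClosedEmbedding (by exact hc.domRestrict) (injOn_iff_injective.1 hi)
    rw [continuousOn_iff_continuous_domRestrict]
    have hsurj : range ((Icc (0:ℝ) 1).domRestrict γ) = γ '' Icc 0 1 := by
      simp [Set.range_domRestrict]
    let e := hcl.isEmbedding.toHomeomorph
    have hcont : Continuous (fun x : γ '' Icc 0 1 => g (e.symm ⟨x, by rw [hsurj]; exact x.2⟩)) := by
      have := hg.domRestrict
      refine this.comp (e.symm.continuous.comp ?_)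
      fun_prop
    refine hcont.congr ?_
    rintro ⟨_, t, ht, rfl⟩
    have : e.symm ⟨γ t, ⟨⟨t, ht⟩, rfl⟩⟩ = ⟨t, ht⟩ := by
      rw [Homeomorph.symm_apply_eq]; rfl
    simp [this, hinv t ht]
  · rintro _ ⟨t, ht, rfl⟩
    simp only [Function.comp, hinv t ht, hg' t ht]

theorem tame_union {K K' : Set X} {c : X} (hK : P.Tame K) (hK' : P.Tame K') (hc : K ∩ K' = {c}) :
    P.Tame (K ∪ K') := by
  classical
  have hcK : c ∈ K ∩ K' := by rw [hc]; rfl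
  refine ⟨hK.closed.union hK'.closed, by simp [hK.ninf, hK'.ninf],
    hK.conn.union c hcK.1 hcK.2 hK'.conn, fun p hp hpi => ?_⟩
  obtain ⟨g, hg⟩ := hK.log p (fun h => hp (Or.inl h)) hpi
  obtain ⟨g', hg'⟩ := hK'.log p (fun h => hp (Or.inr h)) hpi
  have hval : ∀ z ∈ K', (if z ∈ K then g z else g' z + (g c - g' c)) = g' z + (g c - g' c) := by
    intro z hz
    split_ifs with h
    · have : z = c := by have : z ∈ K ∩ K' := ⟨h, hz⟩; rw [hc] at this; exact this
      subst this; ring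
    · rfl
  have hval' : ∀ z ∈ K, (if z ∈ K then g z else g' z + (g c - g' c)) = g z := by
    intro z hz; simp [hz]
  refine ⟨fun z => if z ∈ K then g z else g' z + (g c - g' c), ?_, ?_⟩
  · refine ContinuousOn.union_of_isClosed ?_ ?_ hK.closed hK'.closed
    · exact hg.1.congr hval'
    · exact (hg'.1.add continuousOn_const).congr hval
  · rintro z (hz | hz) <;> beta_reduce
    · rw [hval' z hz, hg.2 z hz]
    · rw [hval z hz, Complex.exp_add, Complex.exp_sub, hg.2 c hcK.1, hg'.2 c hcK.2,
        hg'.2 z hz, div_self, mul_one]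
      rw [← hg.2 c hcK.1]; exact Complex.exp_ne_zero _

theorem no_log_X [T2Space X] [CompactSpace X] (U : Set X) (hU : IsOpen U)
    (hinf : P.inf ∉ closure U) (p : X) (hp : p ∈ U) (l : ℕ) (hl : l ≠ 0) (h : X → ℂ)
    (hh : ContinuousOn h (closure U)) (h0 : ∀ z ∈ closure U, h z ≠ 0) (g : X → ℂ)
    (hg : ContinuousOn g (frontier U))
    (he : ∀ z ∈ frontier U, Complex.exp (g z) = (P.φ z - P.φ p) ^ l * h z) : False := by
  have hpi : p ≠ P.inf := fun h' => hinf (h' ▸ subset_closure hp)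
  have hcl : closure (P.ψ ⁻¹' U) = P.ψ ⁻¹' (closure U) :=
    (P.ψ_open.preimage_closure_eq_closure_preimage P.ψ_cont U).symm
  have hfr : frontier (P.ψ ⁻¹' U) = P.ψ ⁻¹' (frontier U) :=
    (P.ψ_open.preimage_frontier_eq_frontier_preimage P.ψ_cont U).symm
  have hb : Bornology.IsBounded (P.ψ ⁻¹' U) := by
    have : IsCompact (P.φ '' closure U) := isClosed_closure.isCompact.image_of_continuousOn
      (P.φ_cont.mono (fun x hx => by rintro rfl; exact hinf hx))
    refine this.isBounded.subset (fun z hz => ⟨P.ψ z, subset_closure hz, P.right z⟩)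
  refine no_log_frontier (P.ψ ⁻¹' U) (hU.preimage P.ψ_cont) hb (P.φ p)
    (by simpa [P.left p hpi] using hp) l hl (h ∘ P.ψ)
    (by rw [hcl]; exact hh.comp P.ψ_cont.continuousOn (mapsTo_preimage _ _))
    (fun z hz => h0 _ (by rw [hcl] at hz; exact hz)) (g ∘ P.ψ)
    (by rw [hfr]; exact hg.comp P.ψ_cont.continuousOn (mapsTo_preimage _ _)) (fun z hz => ?_)
  rw [hfr] at hz
  have := he _ hz
  simpa [P.right] using this

end PlaneChart


namespace PlaneChart

variable {X : Type*} [TopologicalSpace X] {P : PlaneChart X}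

variable (P) in
structure Jordan (A B : Set X) (a b : X) : Prop where
  tA : P.Tame A
  tB : P.Tame B
  inter : A ∩ B = {a, b}
  ne : a ≠ b

variable (P) in
noncomputable def W (A B : Set X) (a b p : X) : ℂ := P.theta A a b p + P.theta B b a p

namespace Jordan

variable {A B : Set X} {a b : X}

theorem aA (h : P.Jordan A B a b) : a ∈ A := by
  have : a ∈ A ∩ B := by rw [h.inter]; simp
  exact this.1
theorem aB (h : P.Jordan A B a b) : a ∈ B := by
  have : a ∈ A ∩ B := by rw [h.inter]; simp
  exact this.2
theorem bA (h : P.Jordan A B a b) : b ∈ A := by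
  have : b ∈ A ∩ B := by rw [h.inter]; simp
  exact this.1
theorem bB (h : P.Jordan A B a b) : b ∈ B := by
  have : b ∈ A ∩ B := by rw [h.inter]; simp
  exact this.2

theorem closed (h : P.Jordan A B a b) : IsClosed (A ∪ B) := h.tA.closed.union h.tB.closed
theorem ninf (h : P.Jordan A B a b) : P.inf ∉ A ∪ B := by simp [h.tA.ninf, h.tB.ninf]

theorem W_inf : P.W A B a b P.inf = 0 := by simp [W, theta_inf]

theorem W_int (h : P.Jordan A B a b) {p : X} (hp : p ∉ A ∪ B) :
    ∃ k : ℤ, P.W A B a b p = k := by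
  by_cases hpi : p = P.inf
  · subst hpi; exact ⟨0, by simp [W_inf]⟩
  have hpA : p ∉ A := fun h' => hp (Or.inl h')
  have hpB : p ∉ B := fun h' => hp (Or.inr h')
  have h1 := exp_theta h.tA h.aA h.bA hpA hpi
  have h2 := exp_theta h.tB h.bB h.aB hpB hpi
  have hane : P.φ a - P.φ p ≠ 0 := sub_ne_zero' (fun h' => h.tA.ninf (h' ▸ h.aA)) hpi
    (fun h' => hpA (h' ▸ h.aA))
  have hbne : P.φ b - P.φ p ≠ 0 := sub_ne_zero' (fun h' => h.tA.ninf (h' ▸ h.bA)) hpi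
    (fun h' => hpA (h' ▸ h.bA))
  have h3 : Complex.exp (2 * Real.pi * Complex.I * P.W A B a b p) = 1 := by
    rw [W, mul_add, Complex.exp_add, h1, h2]
    field_simp
  obtain ⟨k, hk⟩ := Complex.exp_eq_one_iff.1 h3
  refine ⟨k, ?_⟩
  have := Complex.two_pi_I_ne_zero
  rw [mul_comm] at hk
  exact mul_right_cancel₀ this hk

theorem W_cont [T2Space X] [CompactSpace X] (h : P.Jordan A B a b) :
    ContinuousOn (P.W A B a b) (A ∪ B)ᶜ :=
  ((theta_cont h.tA h.aA h.bA).mono (by simp)).add ((theta_cont h.tB h.bB h.aB).mono (by simp))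

theorem W_const [T2Space X] [CompactSpace X] (h : P.Jordan A B a b) {S : Set X}
    (hS : IsPreconnected S) (hd : S ⊆ (A ∪ B)ᶜ) {p q : X} (hp : p ∈ S) (hq : q ∈ S) :
    P.W A B a b p = P.W A B a b q :=
  int_valued_const hS (h.W_cont.mono hd) (fun z hz => h.W_int (hd hz)) hp hq

theorem glue (h : P.Jordan A B a b) {gA gB Φ : X → ℂ} (hA : ContinuousOn gA A)
    (hB : ContinuousOn gB B) (eA : ∀ z ∈ A, Complex.exp (gA z) = Φ z)
    (eB : ∀ z ∈ B, Complex.exp (gB z) = Φ z) (hab : gA b - gA a + (gB a - gB b) = 0) :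
    ∃ g : X → ℂ, ContinuousOn g (A ∪ B) ∧ ∀ z ∈ A ∪ B, Complex.exp (g z) = Φ z := by
  classical
  have hval : ∀ z ∈ B, (if z ∈ A then gA z else gB z + (gA a - gB a)) = gB z + (gA a - gB a) := by
    intro z hz
    split_ifs with h'
    · have : z ∈ A ∩ B := ⟨h', hz⟩
      rw [h.inter] at this
      rcases this with rfl | rfl
      · ring
      · linear_combination hab
    · rfl
  have hval' : ∀ z ∈ A, (if z ∈ A then gA z else gB z + (gA a - gB a)) = gA z := by
    intro z hz; simp [hz]
  refine ⟨fun z => if z ∈ A then gA z else gB z + (gA a - gB a), ?_, ?_⟩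
  · refine ContinuousOn.union_of_isClosed ?_ ?_ h.tA.closed h.tB.closed
    · exact hA.congr hval'
    · exact (hB.add continuousOn_const).congr hval
  · rintro z (hz | hz) <;> beta_reduce
    · rw [hval' z hz, eA z hz]
    · rw [hval z hz, Complex.exp_add, Complex.exp_sub, eA a h.aA, eB a h.aB, eB z hz, div_self,
        mul_one]
      rw [← eA a h.aA]; exact Complex.exp_ne_zero _

end Jordan

theorem preconn_meets_frontier {S u : Set X} (hS : IsPreconnected S) (h1 : (S ∩ u).Nonempty)
    (h2 : (S ∩ uᶜ).Nonempty) : (S ∩ frontier u).Nonempty := by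
  by_contra hno
  have hno' : ∀ x ∈ S, x ∉ frontier u := fun x hx hf => hno ⟨x, hx, hf⟩
  obtain ⟨x, hx, hxu⟩ := h1
  obtain ⟨y, hy, hyu⟩ := h2
  obtain ⟨z, _, hz1, hz2⟩ := hS (interior u) (closure u)ᶜ isOpen_interior
    isClosed_closure.isOpen_compl (fun z hz => by
      by_contra hc
      simp only [mem_union, mem_compl_iff, not_or, not_not] at hc
      exact hno' z hz ⟨hc.2, hc.1⟩)
    ⟨x, hx, by_contra fun hc => hno' x hx ⟨subset_closure hxu, hc⟩⟩
    ⟨y, hy, fun hc => hno' y hy ⟨hc, fun h' => hyu (interior_subset h')⟩⟩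
  exact hz2 (subset_closure (interior_subset hz1))

theorem tame_sub [T2Space X] {γ : ℝ → X} (hc : ContinuousOn γ (Icc 0 1))
    (hi : InjOn γ (Icc 0 1)) (hinf : P.inf ∉ γ '' Icc 0 1) {s r : ℝ} (h0 : 0 ≤ s) (hsr : s < r)
    (h1 : r ≤ 1) : P.Tame (γ '' Icc s r) := by
  have hsub : Icc s r ⊆ Icc 0 1 := Icc_subset_Icc h0 h1
  have him : (fun t : ℝ => (r - s) * t + s) '' Icc 0 1 = Icc s r := by
    rw [image_affine_Icc' (sub_pos.2 hsr)]; simp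
  have hmaps : MapsTo (fun t : ℝ => (r - s) * t + s) (Icc 0 1) (Icc 0 1) := fun t ht =>
    hsub (him ▸ mem_image_of_mem _ ht)
  refine tame_arc (γ := γ ∘ fun t : ℝ => (r - s) * t + s) (hc.comp (by fun_prop) hmaps)
    (hi.comp (fun x _ y _ hxy => ?_) hmaps) (by rw [image_comp, him])
    (fun h' => hinf (image_mono hsub h'))
  have : (r - s) * x = (r - s) * y := by simpa using hxy
  exact mul_left_cancel₀ (sub_pos.2 hsr).ne' this

theorem frontier_comp [LocallyConnectedSpace X] {K : Set X} (hK : IsClosed K) (p : X) :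
    frontier (connectedComponentIn Kᶜ p) ⊆ K := by
  intro x hx
  by_contra hxK
  have hop : IsOpen (connectedComponentIn Kᶜ x) := hK.isOpen_compl.connectedComponentIn
  have hxm : x ∈ connectedComponentIn Kᶜ x := mem_connectedComponentIn hxK
  obtain ⟨y, hy1, hy2⟩ := mem_closure_iff.1 hx.1 _ hop hxm
  have e1 := connectedComponentIn_eq hy1
  have e2 := connectedComponentIn_eq hy2
  have hop' : IsOpen (connectedComponentIn Kᶜ p) := hK.isOpen_compl.connectedComponentIn
  apply hx.2
  rw [hop'.interior_eq, e2, ← e1]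
  exact hxm

namespace Jordan

variable {A B : Set X} {a b : X} [T2Space X] [CompactSpace X] [LocallyConnectedSpace X]

theorem core (h : P.Jordan A B a b) {p : X} (hp : p ∉ A ∪ B)
    (hinf : P.inf ∉ connectedComponentIn (A ∪ B)ᶜ p) (l : ℕ) (hl : l ≠ 0) (H : X → ℂ)
    (hH : ContinuousOn H (closure (connectedComponentIn (A ∪ B)ᶜ p)))
    (H0 : ∀ z ∈ closure (connectedComponentIn (A ∪ B)ᶜ p), H z ≠ 0)
    {gA gB : X → ℂ} (hA : ContinuousOn gA A)
    (hB : ContinuousOn gB B) (eA : ∀ z ∈ A, Complex.exp (gA z) = (P.φ z - P.φ p) ^ l * H z)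
    (eB : ∀ z ∈ B, Complex.exp (gB z) = (P.φ z - P.φ p) ^ l * H z)
    (hab : gA b - gA a + (gB a - gB b) = 0) : False := by
  obtain ⟨g, hg, hg'⟩ := h.glue hA hB eA eB hab
  have hfr := frontier_comp h.closed p
  have hop : IsOpen (connectedComponentIn (A ∪ B)ᶜ p) := h.closed.isOpen_compl.connectedComponentIn
  refine no_log_X (P := P) _ hop ?_ p (mem_connectedComponentIn hp) l hl H hH H0 g
    (hg.mono hfr) (fun z hz => hg' z (hfr hz))
  intro hc
  rw [closure_eq_self_union_frontier] at hc
  rcases hc with hc | hc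
  · exact hinf hc
  · exact h.ninf (hfr hc)

/-- Winding number zero means being in the outer component. -/
theorem mem_outer (h : P.Jordan A B a b) {p : X} (hp : p ∉ A ∪ B) (hW : P.W A B a b p = 0) :
    P.inf ∈ connectedComponentIn (A ∪ B)ᶜ p := by
  by_contra hinf
  have hpi : p ≠ P.inf := fun h' => hinf (h' ▸ mem_connectedComponentIn hp)
  have hpA : p ∉ A := fun h' => hp (Or.inl h')
  have hpB : p ∉ B := fun h' => hp (Or.inr h')
  obtain ⟨gA, hgA⟩ := h.tA.log p hpA hpi
  obtain ⟨gB, hgB⟩ := h.tB.log p hpB hpi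
  refine h.core hp hinf 1 one_ne_zero (fun _ => 1) continuousOn_const (by simp) hgA.1 hgB.1
    (by simpa using hgA.2) (by simpa using hgB.2) ?_
  rw [W, theta_eq h.tA h.aA h.bA hpi hgA, theta_eq h.tB h.bB h.aB hpi hgB, ← add_div,
    div_eq_zero_iff] at hW
  exact hW.resolve_right Complex.two_pi_I_ne_zero

/-- There is only one inner component. -/
theorem mem_inner (h : P.Jordan A B a b) {p q : X} (hp : p ∉ A ∪ B) (hq : q ∉ A ∪ B)
    (hWp : P.W A B a b p ≠ 0) (hWq : P.W A B a b q ≠ 0) :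
    q ∈ connectedComponentIn (A ∪ B)ᶜ p := by
  by_contra hqU
  have hpi : p ≠ P.inf := fun h' => hWp (h' ▸ W_inf)
  have hqi : q ≠ P.inf := fun h' => hWq (h' ▸ W_inf)
  have hinf : P.inf ∉ connectedComponentIn (A ∪ B)ᶜ p := fun h' => hWp (by
    rw [h.W_const isPreconnected_connectedComponentIn (connectedComponentIn_subset _ _)
      (mem_connectedComponentIn hp) h', W_inf])
  have hpA : p ∉ A := fun h' => hp (Or.inl h')
  have hpB : p ∉ B := fun h' => hp (Or.inr h')
  have hqA : q ∉ A := fun h' => hq (Or.inl h')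
  have hqB : q ∉ B := fun h' => hq (Or.inr h')
  obtain ⟨gA, hgA⟩ := h.tA.log p hpA hpi
  obtain ⟨gB, hgB⟩ := h.tB.log p hpB hpi
  obtain ⟨fA, hfA⟩ := h.tA.log q hqA hqi
  obtain ⟨fB, hfB⟩ := h.tB.log q hqB hqi
  obtain ⟨k, hk⟩ := h.W_int hp
  obtain ⟨l, hl⟩ := h.W_int hq
  have hl0 : l ≠ 0 := by rintro rfl; exact hWq (by simp [hl])
  have hk' := hk
  have hl' := hl
  rw [W, theta_eq h.tA h.aA h.bA hpi hgA, theta_eq h.tB h.bB h.aB hpi hgB, ← add_div,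
    div_eq_iff Complex.two_pi_I_ne_zero] at hk'
  rw [W, theta_eq h.tA h.aA h.bA hqi hfA, theta_eq h.tB h.bB h.aB hqi hfB, ← add_div,
    div_eq_iff Complex.two_pi_I_ne_zero] at hl'
  have hfr := frontier_comp h.closed p
  have hcl : ∀ z ∈ closure (connectedComponentIn (A ∪ B)ᶜ p), z ≠ P.inf ∧ z ≠ q := by
    intro z hz
    rw [closure_eq_self_union_frontier] at hz
    rcases hz with hz | hz
    · exact ⟨fun h' => hinf (h' ▸ hz), fun h' => hqU (h' ▸ hz)⟩
    · exact ⟨fun h' => h.ninf (h' ▸ hfr hz), fun h' => hq (h' ▸ hfr hz)⟩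
  have hne : ∀ z ∈ closure (connectedComponentIn (A ∪ B)ᶜ p), P.φ z - P.φ q ≠ 0 :=
    fun z hz => sub_ne_zero' (hcl z hz).1 hqi (hcl z hz).2
  have hsg : (l.natAbs : ℂ) = l.sign * l := by
    have : ((l.natAbs : ℤ)) = l.sign * l := by rw [← Int.abs_eq_natAbs, Int.sign_mul_self_eq_abs]
    calc (l.natAbs : ℂ) = ((l.natAbs : ℤ) : ℂ) := (Int.cast_natCast _).symm
      _ = ((l.sign * l : ℤ) : ℂ) := by rw [this]
      _ = _ := by push_cast; rfl
  refine h.core (gA := fun z => l.natAbs * gA z + ((-(k * l.sign) : ℤ) : ℂ) * fA z)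
    (gB := fun z => l.natAbs * gB z + ((-(k * l.sign) : ℤ) : ℂ) * fB z)
    hp hinf l.natAbs (by simpa using hl0)
    (fun z => (P.φ z - P.φ q) ^ (-(k * l.sign) : ℤ)) ?_ ?_ ?_ ?_ ?_ ?_ ?_
  · refine ContinuousOn.zpow₀ ?_ _ (fun z hz => Or.inl (hne z hz))
    exact (P.φ_cont.mono (fun z hz => (hcl z hz).1)).sub continuousOn_const
  · intro z hz
    exact zpow_ne_zero _ (hne z hz)
  · exact (continuousOn_const.mul hgA.1).add (continuousOn_const.mul hfA.1)
  · exact (continuousOn_const.mul hgB.1).add (continuousOn_const.mul hfB.1)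
  · intro z hz
    rw [Complex.exp_add, Complex.exp_nat_mul, Complex.exp_int_mul, hgA.2 z hz, hfA.2 z hz]
  · intro z hz
    rw [Complex.exp_add, Complex.exp_nat_mul, Complex.exp_int_mul, hgB.2 z hz, hfB.2 z hz]
  · push_cast
    rw [hsg]
    linear_combination (l.sign : ℂ) * l * hk' - k * l.sign * hl'

/-- There is an inner component. -/
theorem exists_inner (h : P.Jordan A B a b) : ∃ p, p ∉ A ∪ B ∧ P.W A B a b p ≠ 0 := by
  classical
  by_contra hno
  push Not at hno
  have hai : a ≠ P.inf := fun h' => h.tA.ninf (h' ▸ h.aA)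
  have hbi : b ≠ P.inf := fun h' => h.tA.ninf (h' ▸ h.bA)
  have hab : P.φ b - P.φ a ≠ 0 := sub_ne_zero' hbi hai h.ne.symm
  have heq : ∀ y, y ∉ A → y ∉ B → P.theta A a b y = P.theta B a b y := by
    intro y hyA hyB
    have := hno y (by simp [hyA, hyB])
    rw [W, theta_symm B a b] at this
    linear_combination this
  let Θ : X → ℂ := fun x => if x ∈ A then P.theta B a b x else P.theta A a b x
  have hΘc : ContinuousOn Θ {x | x ≠ a ∧ x ≠ b} := by
    intro x hx
    refine ContinuousAt.continuousWithinAt ?_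
    by_cases hxA : x ∈ A
    · have hxB : x ∉ B := fun hxB => by
        have : x ∈ A ∩ B := ⟨hxA, hxB⟩
        rw [h.inter] at this
        rcases this with h' | h'
        exacts [hx.1 h', hx.2 h']
      have hB := h.tB.closed.isOpen_compl.mem_nhds hxB
      refine ((theta_cont h.tB h.aB h.bB).continuousAt hB).congr_of_eventuallyEq ?_
      filter_upwards [hB] with y hy
      by_cases hyA : y ∈ A
      · simp [Θ, hyA]
      · simp [Θ, hyA, heq y hyA hy]
    · have hA := h.tA.closed.isOpen_compl.mem_nhds hxA
      refine ((theta_cont h.tA h.aA h.bA).continuousAt hA).congr_of_eventuallyEq ?_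
      filter_upwards [hA] with y hy
      have hyA : y ∉ A := hy
      simp [Θ, hyA]
  have hΘe : ∀ x, x ≠ a → x ≠ b → x ≠ P.inf →
      Complex.exp (2 * Real.pi * Complex.I * Θ x) = (P.φ b - P.φ x) / (P.φ a - P.φ x) := by
    intro x hxa hxb hxi
    by_cases hxA : x ∈ A
    · have hxB : x ∉ B := fun hxB => by
        have : x ∈ A ∩ B := ⟨hxA, hxB⟩
        rw [h.inter] at this
        rcases this with h' | h'
        exacts [hxa h', hxb h']
      simp only [Θ, hxA, if_true]
      exact exp_theta h.tB h.aB h.bB hxB hxi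
    · simp only [Θ, hxA, if_false]
      exact exp_theta h.tA h.aA h.bA hxA hxi
  set r := ‖P.φ b - P.φ a‖ / 2 with hr
  have hrpos : 0 < ‖P.φ b - P.φ a‖ := norm_pos_iff.2 hab
  have hs : ∀ z ∈ Metric.sphere (P.φ a) r, z ≠ P.φ a ∧ z ≠ P.φ b := by
    intro z hz
    rw [mem_sphere_iff_norm] at hz
    constructor
    · rintro rfl; simp at hz; linarith
    · rintro rfl; linarith
  have hs' : ∀ z ∈ Metric.sphere (P.φ a) r, P.ψ z ≠ a ∧ P.ψ z ≠ b := by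
    intro z hz
    refine ⟨fun h' => (hs z hz).1 ?_, fun h' => (hs z hz).2 ?_⟩
    · rw [← h', P.right]
    · rw [← h', P.right]
  have hslit : ∀ z ∈ Metric.sphere (P.φ a) r,
      1 - (z - P.φ a) / (P.φ b - P.φ a) ∈ Complex.slitPlane := by
    intro z hz
    rw [mem_sphere_iff_norm] at hz
    have : ‖(z - P.φ a) / (P.φ b - P.φ a)‖ < 1 := by
      rw [norm_div, div_lt_one hrpos, hz]; linarith
    have h2 := Complex.mem_slitPlane_of_norm_lt_one (z := -((z - P.φ a) / (P.φ b - P.φ a)))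
      (by rwa [norm_neg])
    rwa [← sub_eq_add_neg] at h2
  refine no_log_circle (P.φ a) r (by positivity) 1 one_ne_zero
    (fun z => Complex.log (P.φ b - P.φ a) + Complex.log (1 - (z - P.φ a) / (P.φ b - P.φ a))
      - 2 * Real.pi * Complex.I * Θ (P.ψ z) + Real.pi * Complex.I) ?_ ?_
  · refine ContinuousOn.add (ContinuousOn.sub (continuousOn_const.add
      (ContinuousOn.clog (by fun_prop) hslit)) (continuousOn_const.mul ?_)) continuousOn_const
    exact hΘc.comp P.ψ_cont.continuousOn hs'
  · intro z hz
    have h1 := hΘe (P.ψ z) (hs' z hz).1 (hs' z hz).2 (P.ne z)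
    rw [P.right] at h1
    rw [Complex.exp_add, Complex.exp_sub, Complex.exp_add, Complex.exp_pi_mul_I,
      Complex.exp_log hab, Complex.exp_log (Complex.slitPlane_ne_zero (hslit z hz)), h1]
    have h2 : P.φ b - z ≠ 0 := sub_ne_zero.2 (hs z hz).2.symm
    have h3 : P.φ a - z ≠ 0 := sub_ne_zero.2 (hs z hz).1.symm
    field_simp
    ring


theorem no_bounded {K U : Set X} (hK : P.Tame K) (hU : IsOpen U) (hfr : frontier U ⊆ K)
    (hinf : P.inf ∉ U) {p : X} (hp : p ∈ U) (hpK : p ∉ K) : False := by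
  have hpi : p ≠ P.inf := fun h' => hinf (h' ▸ hp)
  obtain ⟨g, hg⟩ := hK.log p hpK hpi
  refine no_log_X (P := P) U hU ?_ p hp 1 one_ne_zero (fun _ => 1) continuousOn_const (by simp) g
    (hg.1.mono hfr) (fun z hz => by simpa using hg.2 z (hfr hz))
  intro hc
  rw [closure_eq_self_union_frontier] at hc
  rcases hc with hc | hc
  · exact hinf hc
  · exact hK.ninf (hfr hc)

theorem near_inner (h : P.Jordan A B a b) {V K : Set X} (hV : IsOpen V)
    (hK : P.Tame K) (hJK : (A ∪ B) \ V ⊆ K) (hKJ : K ⊆ A ∪ B) :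
    ∃ z ∈ V, z ∉ A ∪ B ∧ P.W A B a b z ≠ 0 := by
  by_contra hno
  push Not at hno
  obtain ⟨p, hp, hW⟩ := h.exists_inner
  have hfr := frontier_comp h.closed p
  have hop : IsOpen (connectedComponentIn (A ∪ B)ᶜ p) := h.closed.isOpen_compl.connectedComponentIn
  have hWU : ∀ z ∈ connectedComponentIn (A ∪ B)ᶜ p, P.W A B a b p = P.W A B a b z := fun z hz =>
    h.W_const isPreconnected_connectedComponentIn (connectedComponentIn_subset _ _)
      (mem_connectedComponentIn hp) hz
  refine no_bounded hK hop (fun x hx => hJK ⟨hfr hx, fun hxV => ?_⟩)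
    (fun hc => hW (by rw [hWU _ hc, W_inf])) (mem_connectedComponentIn hp) (fun h' => hp (hKJ h'))
  obtain ⟨z, hz1, hz2⟩ := mem_closure_iff.1 hx.1 V hV hxV
  have hzJ : z ∉ A ∪ B := connectedComponentIn_subset _ _ hz2
  exact hW ((hWU z hz2).trans (hno z hz1 hzJ))

theorem near_outer (h : P.Jordan A B a b) {m : X} {V K : Set X} (hV : IsOpen V)
    (hK : P.Tame K) (hJK : (A ∪ B) \ V ⊆ K) (hmJ : m ∈ A ∪ B) (hmK : m ∉ K) :
    ∃ z ∈ V, z ∉ A ∪ B ∧ P.W A B a b z = 0 := by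
  by_contra hno
  push Not at hno
  have hp := h.ninf
  have hfr := frontier_comp h.closed P.inf
  have hWU : ∀ z ∈ connectedComponentIn (A ∪ B)ᶜ P.inf, P.W A B a b P.inf = P.W A B a b z :=
    fun z hz =>
    h.W_const isPreconnected_connectedComponentIn (connectedComponentIn_subset _ _)
      (mem_connectedComponentIn hp) hz
  have hfrK : frontier (connectedComponentIn (A ∪ B)ᶜ P.inf) ⊆ K := by
    refine (fun x hx => hJK ⟨hfr hx, fun hxV => ?_⟩)
    obtain ⟨z, hz1, hz2⟩ := mem_closure_iff.1 hx.1 V hV hxV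
    have hzJ : z ∉ A ∪ B := connectedComponentIn_subset _ _ hz2
    exact hno z hz1 hzJ (by rw [← hWU z hz2, W_inf])
  by_cases hi : P.inf ∈ connectedComponentIn Kᶜ m
  · have hne : (connectedComponentIn Kᶜ m ∩ connectedComponentIn (A ∪ B)ᶜ P.inf).Nonempty :=
      ⟨P.inf, hi, mem_connectedComponentIn hp⟩
    obtain ⟨x, hx1, hx2⟩ := preconn_meets_frontier
      (isPreconnected_connectedComponentIn (F := Kᶜ) (x := m)) hne
      ⟨m, mem_connectedComponentIn hmK, fun hc => connectedComponentIn_subset _ _ hc hmJ⟩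
    exact connectedComponentIn_subset _ _ hx1 (hfrK hx2)
  · exact no_bounded hK hK.closed.isOpen_compl.connectedComponentIn (frontier_comp hK.closed m) hi
      (mem_connectedComponentIn hmK) hmK

/-- Every point of an open arc of a Jordan curve is a limit of both sides. -/
theorem exists_cut (h : P.Jordan A B a b) {γ : ℝ → X} (hc : ContinuousOn γ (Icc 0 1))
    (hi : InjOn γ (Icc 0 1)) (hA : A = γ '' Icc 0 1) (h0 : γ 0 = a) (h1 : γ 1 = b) {m : X}
    (hm : m ∈ A) (hma : m ≠ a) (hmb : m ≠ b) {V : Set X} (hV : IsOpen V) (hmV : m ∈ V) :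
    ∃ K, P.Tame K ∧ (A ∪ B) \ V ⊆ K ∧ m ∉ K ∧ K ⊆ A ∪ B := by
  subst hA
  obtain ⟨t, ht, rfl⟩ := hm
  have ht0 : 0 < t := lt_of_le_of_ne ht.1 (fun h' => hma (by rw [← h', h0]))
  have ht1 : t < 1 := lt_of_le_of_ne ht.2 (fun h' => hmb (by rw [h', h1]))
  have hev : ∀ᶠ s in 𝓝[Icc 0 1] t, γ s ∈ V := (hc t ht).eventually (hV.mem_nhds hmV)
  rw [nhdsWithin_eq_nhds.2 (Icc_mem_nhds ht0 ht1)] at hev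
  obtain ⟨ε, hε, hball⟩ := Metric.eventually_nhds_iff.1 hev
  obtain ⟨s, hs0, hs1⟩ := exists_between (max_lt ht0 (show t - ε < t by linarith))
  obtain ⟨r, hr0, hr1⟩ := exists_between (lt_min ht1 (show t < t + ε by linarith))
  rw [max_lt_iff] at hs0
  rw [lt_min_iff] at hr1
  have ninf : P.inf ∉ γ '' Icc 0 1 := h.tA.ninf
  have t1 := tame_sub hc hi ninf le_rfl hs0.1 (by linarith)
  have t2 := tame_sub hc hi ninf (by linarith) hr1.1 le_rfl
  have sub1 : Icc 0 s ⊆ Icc (0 : ℝ) 1 := Icc_subset_Icc le_rfl (by linarith)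
  have sub2 : Icc r 1 ⊆ Icc (0 : ℝ) 1 := Icc_subset_Icc (by linarith) le_rfl
  have i01 : (0 : ℝ) ∈ Icc (0 : ℝ) 1 := by simp
  have i11 : (1 : ℝ) ∈ Icc (0 : ℝ) 1 := by simp
  have key : ∀ x ∈ Icc (0 : ℝ) 1, γ x ∈ B → x = 0 ∨ x = 1 := by
    intro x hx hxB
    have : γ x ∈ ({a, b} : Set X) := h.inter ▸ ⟨mem_image_of_mem _ hx, hxB⟩
    rcases this with h' | h'
    · left; exact hi hx i01 (by rw [h', h0])
    · right; exact hi hx i11 (by rw [h', h1])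
  have t3 : P.Tame (γ '' Icc 0 s ∪ B) := by
    refine tame_union (c := a) t1 h.tB ?_
    ext z
    constructor
    · rintro ⟨⟨x, hx, rfl⟩, hB⟩
      rcases key x (sub1 hx) hB with h' | h'
      · rw [h', h0]; rfl
      · rw [h'] at hx; linarith [hx.2]
    · rintro rfl
      exact ⟨⟨0, ⟨le_rfl, hs0.1.le⟩, h0⟩, h.aB⟩
  have t4 : P.Tame ((γ '' Icc 0 s ∪ B) ∪ γ '' Icc r 1) := by
    refine tame_union (c := b) t3 t2 ?_
    ext z
    constructor
    · rintro ⟨⟨y, hy, rfl⟩ | hB, ⟨x, hx, hxy⟩⟩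
      · have := hi (sub2 hx) (sub1 hy) hxy
        linarith [hx.1, hy.2]
      · subst hxy
        rcases key x (sub2 hx) hB with h' | h'
        · rw [h'] at hx; linarith [hx.1]
        · rw [h', h1]; rfl
    · rintro rfl
      exact ⟨Or.inr h.bB, ⟨1, ⟨hr1.1.le, le_rfl⟩, h1⟩⟩
  refine ⟨_, t4, ?_, ?_, ?_⟩
  · rintro z ⟨⟨x, hx, rfl⟩ | hB, hzV⟩
    · by_cases hxs : x ≤ s
      · exact Or.inl (Or.inl ⟨x, ⟨hx.1, hxs⟩, rfl⟩)
      by_cases hxr : r ≤ x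
      · exact Or.inr ⟨x, ⟨hxr, hx.2⟩, rfl⟩
      · exfalso
        refine hzV (hball ?_)
        rw [Real.dist_eq, abs_lt]
        push Not at hxs hxr
        constructor <;> linarith
    · exact Or.inl (Or.inr hB)
  · rintro ((⟨x, hx, hxt⟩ | hB) | ⟨x, hx, hxt⟩)
    · have := hi (sub1 hx) ht hxt
      linarith [hx.2]
    · rcases key t ht hB with h' | h' <;> linarith
    · have := hi (sub2 hx) ht hxt
      linarith [hx.1]
  · rintro z ((⟨x, hx, rfl⟩ | hB) | ⟨x, hx, rfl⟩)
    · exact Or.inl ⟨x, sub1 hx, rfl⟩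
    · exact Or.inr hB
    · exact Or.inl ⟨x, sub2 hx, rfl⟩

end Jordan

end PlaneChart


instance sphereFact : Fact (Module.finrank ℝ (EuclideanSpace ℝ (Fin 3)) = 2 + 1) := ⟨by simp⟩

noncomputable def sphereChart (f : SpherePt) : PlaneChart SpherePt where
  inf := f
  φ := fun x => Complex.orthonormalBasisOneI.repr.symm (stereographic' 2 f x)
  ψ := fun z => (stereographic' 2 f).symm (Complex.orthonormalBasisOneI.repr z)
  ψ_cont := by
    have h : ContinuousOn (stereographic' 2 f).symm univ := by
      have := (stereographic' 2 f).continuousOn_symm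
      rwa [stereographic'_target] at this
    rw [← continuousOn_univ]
    exact h.comp (by fun_prop) (mapsTo_univ _ _)
  φ_cont := by
    have := (stereographic' 2 f).continuousOn
    rw [stereographic'_source] at this
    exact (Complex.orthonormalBasisOneI.repr.symm.continuous).comp_continuousOn this
  left := by
    intro x hx
    simp only [LinearIsometryEquiv.apply_symm_apply]
    exact (stereographic' 2 f).left_inv (by rw [stereographic'_source]; exact hx)
  right := by
    intro z
    rw [(stereographic' 2 f).right_inv (by rw [stereographic'_target]; trivial)]
    simp
  ne := by
    intro z
    have := (stereographic' 2 f).map_target (x := Complex.orthonormalBasisOneI.repr z)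
      (by rw [stereographic'_target]; trivial)
    rw [stereographic'_source] at this
    exact this

theorem sphere_locConn : LocallyConnectedSpace SpherePt :=
  ChartedSpace.locallyConnectedSpace (EuclideanSpace ℝ (Fin 2)) SpherePt


/-- The data used throughout: the drawing avoids the point at infinity of the chart, and
all discs of triangles away from that point are convex. -/
structure Setup {n : ℕ} {X : Type*} [TopologicalSpace X] (D : GoodDrawing n X)
    (P : PlaneChart X) : Prop where
  ninf : ∀ a b, a ≠ b → P.inf ∉ D.arc a b
  conv : ∀ a b c : Fin n, a ≠ b → a ≠ c → b ≠ c →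
    ∀ Δ : Set X, IsClosedSide (D.tri a b c) Δ → P.inf ∉ Δ → D.ConvexDisc Δ

/-- Pairwise distinct triples. -/
def Dis {α : Type*} (a b c : α) : Prop := a ≠ b ∧ b ≠ c ∧ c ≠ a

theorem Dis.cyc {α : Type*} {a b c : α} (h : Dis a b c) : Dis b c a := ⟨h.2.1, h.2.2, h.1⟩
theorem Dis.swap {α : Type*} {a b c : α} (h : Dis a b c) : Dis b a c :=
  ⟨h.1.symm, h.2.2.symm, h.2.1.symm⟩

theorem int_of_exp {w : ℂ} (h : Complex.exp (2 * Real.pi * Complex.I * w) = 1) :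
    ∃ k : ℤ, w = k := by
  obtain ⟨k, hk⟩ := Complex.exp_eq_one_iff.1 h
  refine ⟨k, ?_⟩
  have := Complex.two_pi_I_ne_zero
  rw [mul_comm] at hk
  exact mul_right_cancel₀ this hk

namespace GoodDrawing

variable {n : ℕ} {X : Type*} [TopologicalSpace X]

theorem vtx_mem_left (D : GoodDrawing n X) {a b : Fin n} (h : a ≠ b) : D.vtx a ∈ D.arc a b := by
  obtain ⟨f, _, _, h0, _, hf⟩ := D.isArc a b h
  rw [hf]; exact ⟨0, by simp, h0⟩

theorem vtx_mem_right (D : GoodDrawing n X) {a b : Fin n} (h : a ≠ b) : D.vtx b ∈ D.arc a b := by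
  rw [D.arc_symm]; exact D.vtx_mem_left h.symm

theorem tri_cyc (D : GoodDrawing n X) (a b c : Fin n) : D.tri b c a = D.tri a b c := by
  unfold tri
  rw [D.arc_symm c a, D.arc_symm b a, union_assoc, union_assoc, union_comm, union_assoc,
    union_comm]
  ac_rfl

theorem tri_swap (D : GoodDrawing n X) (a b c : Fin n) : D.tri b a c = D.tri a b c := by
  unfold tri
  rw [D.arc_symm b a]
  ac_rfl

theorem tri_eq (D : GoodDrawing n X) (a b c : Fin n) :
    D.arc a b ∪ (D.arc b c ∪ D.arc c a) = D.tri a b c := by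
  unfold tri
  rw [D.arc_symm c a, union_assoc]

theorem mem_tri (D : GoodDrawing n X) {a b c : Fin n} {z : X} :
    z ∈ D.tri a b c ↔ z ∈ D.arc a b ∨ z ∈ D.arc b c ∨ z ∈ D.arc c a := by
  rw [← D.tri_eq]; simp

theorem adj_inter (D : GoodDrawing n X) {a b c : Fin n} (h : Dis a b c) {z : X}
    (h1 : z ∈ D.arc a b) (h2 : z ∈ D.arc b c) : z = D.vtx b := by
  have := D.adj_arcs b a c h.1.symm h.2.1 h.2.2.symm
  have h3 : z ∈ D.arc b a ∩ D.arc b c := ⟨by rwa [D.arc_symm], h2⟩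
  rw [this] at h3
  exact h3

/-- winding contribution of an arc -/
noncomputable def th (D : GoodDrawing n X) (P : PlaneChart X) (a b : Fin n) (z : X) : ℂ :=
  P.theta (D.arc a b) (D.vtx a) (D.vtx b) z

/-- winding number of a triangle -/
noncomputable def wd (D : GoodDrawing n X) (P : PlaneChart X) (a b c : Fin n) (z : X) : ℂ :=
  D.th P a b z + D.th P b c z + D.th P c a z

variable (D : GoodDrawing n X) (P : PlaneChart X)

theorem th_symm (a b : Fin n) (z : X) : D.th P b a z = - D.th P a b z := by
  unfold th
  rw [D.arc_symm b a, PlaneChart.theta_symm]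

theorem wd_cyc (a b c : Fin n) (z : X) : D.wd P b c a z = D.wd P a b c z := by
  unfold wd; ring

theorem wd_swap (a b c : Fin n) (z : X) : D.wd P b a c z = - D.wd P a b c z := by
  unfold wd
  rw [D.th_symm P a b, D.th_symm P c a, D.th_symm P b c]; ring

theorem th_inf (a b : Fin n) : D.th P a b P.inf = 0 := PlaneChart.theta_inf _ _ _ _

theorem wd_inf (a b c : Fin n) : D.wd P a b c P.inf = 0 := by simp [wd, th_inf]

theorem wd_sum (t p q r : Fin n) (z : X) :
    D.wd P p q r z = D.wd P t p q z + D.wd P t q r z + D.wd P t r p z := by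
  unfold wd
  rw [D.th_symm P t q, D.th_symm P t r, D.th_symm P t p]; ring

/-- inside of a triangle -/
def Inn (a b c : Fin n) : Set X := {z | z ∉ D.tri a b c ∧ D.wd P a b c z ≠ 0}

/-- outside of a triangle -/
def Ext (a b c : Fin n) : Set X := {z | z ∉ D.tri a b c ∧ D.wd P a b c z = 0}

theorem Inn_cyc (a b c : Fin n) : D.Inn P b c a = D.Inn P a b c := by
  unfold Inn; simp only [D.wd_cyc P a b c, D.tri_cyc a b c]
theorem Inn_swap (a b c : Fin n) : D.Inn P b a c = D.Inn P a b c := by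
  unfold Inn; simp only [D.wd_swap P a b c, D.tri_swap a b c, neg_ne_zero]
theorem Ext_cyc (a b c : Fin n) : D.Ext P b c a = D.Ext P a b c := by
  unfold Ext; simp only [D.wd_cyc P a b c, D.tri_cyc a b c]
theorem Ext_swap (a b c : Fin n) : D.Ext P b a c = D.Ext P a b c := by
  unfold Ext; simp only [D.wd_swap P a b c, D.tri_swap a b c, neg_eq_zero]

open Classical in
/-- the orientation (winding number of the inside) of a triangle -/
noncomputable def om (a b c : Fin n) : ℤ :=
  if h : ∃ k : ℤ, ∃ z ∈ D.Inn P a b c, D.wd P a b c z = k then h.choose else 0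

end GoodDrawing

namespace Setup

variable {n : ℕ} {X : Type*} [TopologicalSpace X] [T2Space X]
  {D : GoodDrawing n X} {P : PlaneChart X}

theorem tame (S : Setup D P) {a b : Fin n} (h : a ≠ b) : P.Tame (D.arc a b) := by
  obtain ⟨f, hc, hi, h0, h1, hf⟩ := D.isArc a b h
  exact PlaneChart.tame_arc hc hi hf (S.ninf a b h)

theorem closed (S : Setup D P) {a b : Fin n} (h : a ≠ b) : IsClosed (D.arc a b) := (S.tame h).closed

theorem tri_closed (S : Setup D P) {a b c : Fin n} (h : Dis a b c) : IsClosed (D.tri a b c) := by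
  rw [← D.tri_eq]
  exact (S.closed h.1).union ((S.closed h.2.1).union (S.closed h.2.2))

theorem tame2 (S : Setup D P) {a b c : Fin n} (h : Dis a b c) :
    P.Tame (D.arc a b ∪ D.arc b c) := by
  refine PlaneChart.tame_union (c := D.vtx b) (S.tame h.1) (S.tame h.2.1) ?_
  rw [D.arc_symm a b]
  exact D.adj_arcs b a c h.1.symm h.2.1 h.2.2.symm

theorem jordan (S : Setup D P) {a b c : Fin n} (h : Dis a b c) :
    P.Jordan (D.arc a b) (D.arc b c ∪ D.arc c a) (D.vtx a) (D.vtx b) where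
  tA := S.tame h.1
  tB := S.tame2 h.cyc
  inter := by
    ext z
    constructor
    · rintro ⟨h1, h2 | h2⟩
      · exact Or.inr (D.adj_inter h h1 h2)
      · exact Or.inl (D.adj_inter h.cyc.cyc h2 h1)
    · rintro (rfl | rfl)
      · exact ⟨D.vtx_mem_left h.1, Or.inr (D.vtx_mem_right h.2.2)⟩
      · exact ⟨D.vtx_mem_right h.1, Or.inl (D.vtx_mem_left h.2.1)⟩
  ne := fun h' => h.1 (D.vtx_inj h')

theorem W_eq (S : Setup D P) {a b c : Fin n} (h : Dis a b c) {z : X} (hz : z ∉ D.tri a b c) :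
    P.W (D.arc a b) (D.arc b c ∪ D.arc c a) (D.vtx a) (D.vtx b) z = D.wd P a b c z := by
  have hB := S.tame2 h.cyc
  have hzB : z ∉ D.arc b c ∪ D.arc c a := fun h' => hz (by rw [← D.tri_eq]; exact Or.inr h')
  rw [PlaneChart.W, GoodDrawing.wd, add_assoc, GoodDrawing.th, GoodDrawing.th, GoodDrawing.th,
    PlaneChart.theta_mono (S.tame h.2.1) hB subset_union_left (D.vtx_mem_left h.2.1)
      (D.vtx_mem_right h.2.1) hzB,
    PlaneChart.theta_mono (S.tame h.2.2) hB subset_union_right (D.vtx_mem_left h.2.2)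
      (D.vtx_mem_right h.2.2) hzB,
    PlaneChart.theta_add hB (Or.inl (D.vtx_mem_left h.2.1)) (Or.inl (D.vtx_mem_right h.2.1))
      (Or.inr (D.vtx_mem_right h.2.2)) hzB]

theorem wd_int (S : Setup D P) {a b c : Fin n} (h : Dis a b c) {z : X} (hz : z ∉ D.tri a b c) :
    ∃ k : ℤ, D.wd P a b c z = k := by
  rw [← S.W_eq h hz]
  exact (S.jordan h).W_int (by rwa [D.tri_eq])

theorem exp_th (S : Setup D P) {a b : Fin n} (h : a ≠ b) {z : X} (hz : z ∉ D.arc a b)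
    (hi : z ≠ P.inf) : Complex.exp (2 * Real.pi * Complex.I * D.th P a b z) =
      (P.φ (D.vtx b) - P.φ z) / (P.φ (D.vtx a) - P.φ z) :=
  PlaneChart.exp_theta (S.tame h) (D.vtx_mem_left h) (D.vtx_mem_right h) hz hi

theorem vtx_ne (S : Setup D P) {a b : Fin n} (h : a ≠ b) {z : X} (hz : z ∉ D.arc a b)
    (hi : z ≠ P.inf) : P.φ (D.vtx a) - P.φ z ≠ 0 :=
  PlaneChart.sub_ne_zero' (fun h' => S.ninf a b h (h' ▸ D.vtx_mem_left h)) hi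
    (fun h' => hz (h' ▸ D.vtx_mem_left h))

variable [CompactSpace X]

theorem th_cont (S : Setup D P) {a b : Fin n} (h : a ≠ b) :
    ContinuousOn (D.th P a b) (D.arc a b)ᶜ :=
  PlaneChart.theta_cont (S.tame h) (D.vtx_mem_left h) (D.vtx_mem_right h)

theorem wd_cont (S : Setup D P) {a b c : Fin n} (h : Dis a b c) :
    ContinuousOn (D.wd P a b c) (D.tri a b c)ᶜ := by
  unfold GoodDrawing.wd
  refine ((S.th_cont h.1).mono ?_ |>.add ((S.th_cont h.2.1).mono ?_)).add
    ((S.th_cont h.2.2).mono ?_)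
  all_goals
    intro z hz h'
    apply hz
    rw [D.mem_tri]
    tauto

theorem wd_const (S : Setup D P) {a b c : Fin n} (h : Dis a b c) {T : Set X}
    (hT : IsPreconnected T) (hd : ∀ z ∈ T, z ∉ D.tri a b c) {y z : X} (hy : y ∈ T) (hz : z ∈ T) :
    D.wd P a b c y = D.wd P a b c z :=
  int_valued_const hT ((S.wd_cont h).mono hd) (fun x hx => S.wd_int h (hd x hx)) hy hz

theorem Inn_prop (S : Setup D P) {a b c : Fin n} (h : Dis a b c) {T : Set X}
    (hT : IsPreconnected T) (hd : ∀ z ∈ T, z ∉ D.tri a b c) {y z : X} (hy : y ∈ T) (hz : z ∈ T)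
    (hyI : y ∈ D.Inn P a b c) : z ∈ D.Inn P a b c :=
  ⟨hd z hz, by rw [← S.wd_const h hT hd hy hz]; exact hyI.2⟩

theorem Ext_prop (S : Setup D P) {a b c : Fin n} (h : Dis a b c) {T : Set X}
    (hT : IsPreconnected T) (hd : ∀ z ∈ T, z ∉ D.tri a b c) {y z : X} (hy : y ∈ T) (hz : z ∈ T)
    (hyI : y ∈ D.Ext P a b c) : z ∈ D.Ext P a b c :=
  ⟨hd z hz, by rw [← S.wd_const h hT hd hy hz]; exact hyI.2⟩

theorem wd_ev (S : Setup D P) {a b c : Fin n} (h : Dis a b c) {z : X} (hz : z ∉ D.tri a b c) :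
    ∀ᶠ y in 𝓝 z, y ∉ D.tri a b c ∧ D.wd P a b c y = D.wd P a b c z :=
  ((S.tri_closed h).isOpen_compl.mem_nhds hz |> Filter.Eventually.and <|
    int_valued_eventually (S.tri_closed h).isOpen_compl (S.wd_cont h)
      (fun _ hx => S.wd_int h hx) hz)

theorem Inn_open (S : Setup D P) {a b c : Fin n} (h : Dis a b c) : IsOpen (D.Inn P a b c) := by
  rw [isOpen_iff_mem_nhds]
  intro z hz
  filter_upwards [S.wd_ev h hz.1] with y hy
  exact ⟨hy.1, by rw [hy.2]; exact hz.2⟩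

theorem Ext_open (S : Setup D P) {a b c : Fin n} (h : Dis a b c) : IsOpen (D.Ext P a b c) := by
  rw [isOpen_iff_mem_nhds]
  intro z hz
  filter_upwards [S.wd_ev h hz.1] with y hy
  exact ⟨hy.1, by rw [hy.2]; exact hz.2⟩

theorem inf_not_tri (S : Setup D P) {a b c : Fin n} (h : Dis a b c) : P.inf ∉ D.tri a b c := by
  rw [D.mem_tri]
  simp [S.ninf _ _ h.1, S.ninf _ _ h.2.1, S.ninf _ _ h.2.2]

theorem inf_Ext (S : Setup D P) {a b c : Fin n} (h : Dis a b c) : P.inf ∈ D.Ext P a b c :=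
  ⟨S.inf_not_tri h, D.wd_inf P a b c⟩

theorem trich (D : GoodDrawing n X) (P : PlaneChart X) (a b c : Fin n) (z : X) :
    z ∈ D.tri a b c ∨ z ∈ D.Inn P a b c ∨ z ∈ D.Ext P a b c := by
  by_cases h : z ∈ D.tri a b c
  · exact Or.inl h
  by_cases h' : D.wd P a b c z = 0
  · exact Or.inr (Or.inr ⟨h, h'⟩)
  · exact Or.inr (Or.inl ⟨h, h'⟩)

theorem Inn_Ext {a b c : Fin n} {z : X} (h1 : z ∈ D.Inn P a b c) (h2 : z ∈ D.Ext P a b c) :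
    False := h1.2 h2.2

variable [LocallyConnectedSpace X]

theorem comp_Inn (S : Setup D P) {a b c : Fin n} (h : Dis a b c) {p : X}
    (hp : p ∈ D.Inn P a b c) : connectedComponentIn (D.tri a b c)ᶜ p = D.Inn P a b c := by
  ext q
  constructor
  · intro hq
    exact S.Inn_prop h isPreconnected_connectedComponentIn
      (fun z hz => connectedComponentIn_subset _ _ hz) (mem_connectedComponentIn hp.1) hq hp
  · intro hq
    have := (S.jordan h).mem_inner (p := p) (q := q) (by rw [D.tri_eq]; exact hp.1)
      (by rw [D.tri_eq]; exact hq.1) (by rw [S.W_eq h hp.1]; exact hp.2)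
      (by rw [S.W_eq h hq.1]; exact hq.2)
    rwa [D.tri_eq] at this

theorem Inn_preconn (S : Setup D P) {a b c : Fin n} (h : Dis a b c) :
    IsPreconnected (D.Inn P a b c) := by
  rcases (D.Inn P a b c).eq_empty_or_nonempty with h' | ⟨p, hp⟩
  · rw [h']; exact isPreconnected_empty
  · rw [← S.comp_Inn h hp]; exact isPreconnected_connectedComponentIn

theorem comp_Ext (S : Setup D P) {a b c : Fin n} (h : Dis a b c) {p : X}
    (hp : p ∈ D.Ext P a b c) : connectedComponentIn (D.tri a b c)ᶜ p = D.Ext P a b c := by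
  have key : ∀ q ∈ D.Ext P a b c, P.inf ∈ connectedComponentIn (D.tri a b c)ᶜ q := by
    intro q hq
    have := (S.jordan h).mem_outer (p := q) (by rw [D.tri_eq]; exact hq.1)
      (by rw [S.W_eq h hq.1]; exact hq.2)
    rwa [D.tri_eq] at this
  ext q
  constructor
  · intro hq
    exact S.Ext_prop h isPreconnected_connectedComponentIn
      (fun z hz => connectedComponentIn_subset _ _ hz) (mem_connectedComponentIn hp.1) hq hp
  · intro hq
    rw [connectedComponentIn_eq (key p hp), ← connectedComponentIn_eq (key q hq)]
    exact mem_connectedComponentIn hq.1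

theorem Ext_preconn (S : Setup D P) {a b c : Fin n} (h : Dis a b c) :
    IsPreconnected (D.Ext P a b c) := by
  rw [← S.comp_Ext h (S.inf_Ext h)]; exact isPreconnected_connectedComponentIn

theorem near_inn (S : Setup D P) {a b c : Fin n} (h : Dis a b c) {m : X} (hm : m ∈ D.arc a b)
    (ha : m ≠ D.vtx a) (hb : m ≠ D.vtx b) {V : Set X} (hV : V ∈ 𝓝 m) :
    ∃ z ∈ V, z ∈ D.Inn P a b c := by
  obtain ⟨f, hc, hi, h0, h1, hf⟩ := D.isArc a b h.1
  obtain ⟨V', hV', ho, hmV⟩ := mem_nhds_iff.1 hV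
  obtain ⟨K, hK, k1, _, k3⟩ := (S.jordan h).exists_cut hc hi hf h0 h1 hm ha hb ho hmV
  obtain ⟨z, hz, hz1, hz2⟩ := (S.jordan h).near_inner ho hK k1 k3
  rw [D.tri_eq] at hz1
  exact ⟨z, hV' hz, hz1, by rwa [S.W_eq h hz1] at hz2⟩

theorem near_ext (S : Setup D P) {a b c : Fin n} (h : Dis a b c) {m : X} (hm : m ∈ D.arc a b)
    (ha : m ≠ D.vtx a) (hb : m ≠ D.vtx b) {V : Set X} (hV : V ∈ 𝓝 m) :
    ∃ z ∈ V, z ∈ D.Ext P a b c := by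
  obtain ⟨f, hc, hi, h0, h1, hf⟩ := D.isArc a b h.1
  obtain ⟨V', hV', ho, hmV⟩ := mem_nhds_iff.1 hV
  obtain ⟨K, hK, k1, k2, _⟩ := (S.jordan h).exists_cut hc hi hf h0 h1 hm ha hb ho hmV
  obtain ⟨z, hz, hz1, hz2⟩ := (S.jordan h).near_outer ho hK k1 (Or.inl hm) k2
  rw [D.tri_eq] at hz1
  exact ⟨z, hV' hz, hz1, by rwa [S.W_eq h hz1] at hz2⟩

theorem exists_Inn (S : Setup D P) {a b c : Fin n} (h : Dis a b c) :
    (D.Inn P a b c).Nonempty := by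
  obtain ⟨z, hz1, hz2⟩ := (S.jordan h).exists_inner
  rw [D.tri_eq] at hz1
  exact ⟨z, hz1, by rwa [S.W_eq h hz1] at hz2⟩

theorem convex (S : Setup D P) {a b c : Fin n} (h : Dis a b c) {x y : Fin n} (hxy : x ≠ y)
    (hx : D.vtx x ∉ D.Ext P a b c) (hy : D.vtx y ∉ D.Ext P a b c) {z : X} (hz : z ∈ D.arc x y) :
    z ∉ D.Ext P a b c := by
  obtain ⟨q, hq⟩ := S.exists_Inn h
  have key : ∀ w, w ∉ D.Ext P a b c ↔ w ∈ connectedComponentIn (D.tri a b c)ᶜ q ∪ D.tri a b c := by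
    intro w
    rw [S.comp_Inn h hq]
    rcases trich D P a b c w with h1 | h1 | h1
    · exact ⟨fun _ => Or.inr h1, fun _ h2 => h2.1 h1⟩
    · exact ⟨fun _ => Or.inl h1, fun _ h2 => Inn_Ext h1 h2⟩
    · refine ⟨fun h2 => (h2 h1).elim, ?_⟩
      rintro (h2 | h2)
      · exact (Inn_Ext h2 h1).elim
      · exact (h1.1 h2).elim
  have := S.conv a b c h.1 h.2.2.symm h.2.1 _ ⟨q, hq.1, rfl⟩
    (fun h' => (key _).2 h' (S.inf_Ext h)) x y hxy ((key _).1 hx) ((key _).1 hy) hz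
  exact (key _).2 this

theorem om_spec (S : Setup D P) {a b c : Fin n} (h : Dis a b c) {z : X}
    (hz : z ∈ D.Inn P a b c) : D.wd P a b c z = D.om P a b c := by
  obtain ⟨k, hk⟩ := S.wd_int h hz.1
  have hex : ∃ k : ℤ, ∃ z ∈ D.Inn P a b c, D.wd P a b c z = k := ⟨k, z, hz, hk⟩
  obtain ⟨y, hy, hy'⟩ := hex.choose_spec
  rw [GoodDrawing.om, dif_pos hex, ← hy']
  exact S.wd_const h (S.Inn_preconn h) (fun z hz => hz.1) hz hy

theorem om_ne (S : Setup D P) {a b c : Fin n} (h : Dis a b c) : D.om P a b c ≠ 0 := by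
  obtain ⟨z, hz⟩ := S.exists_Inn h
  intro h'
  have := S.om_spec h hz
  rw [h'] at this
  exact hz.2 (by simpa using this)

theorem om_cyc (S : Setup D P) {a b c : Fin n} (h : Dis a b c) :
    D.om P b c a = D.om P a b c := by
  obtain ⟨z, hz⟩ := S.exists_Inn h
  have h1 := S.om_spec h hz
  have h2 := S.om_spec h.cyc (z := z) (by rwa [D.Inn_cyc])
  rw [D.wd_cyc, h1] at h2
  exact_mod_cast h2.symm

theorem om_swap (S : Setup D P) {a b c : Fin n} (h : Dis a b c) :
    D.om P b a c = - D.om P a b c := by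
  obtain ⟨z, hz⟩ := S.exists_Inn h
  have h1 := S.om_spec h hz
  have h2 := S.om_spec h.swap (z := z) (by rwa [D.Inn_swap])
  rw [D.wd_swap, h1] at h2
  exact_mod_cast h2.symm

end Setup


namespace GoodDrawing

variable {n : ℕ} {X : Type*} [TopologicalSpace X] (D : GoodDrawing n X)

theorem arc_split {a b : Fin n} (h : a ≠ b) {x : X} (hx : x ∈ D.arc a b) (hxa : x ≠ D.vtx a)
    (hxb : x ≠ D.vtx b) : ∃ L R : Set X, IsPreconnected L ∧ IsPreconnected R ∧ D.vtx a ∈ L ∧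
      D.vtx b ∈ R ∧ (∀ z ∈ D.arc a b, z ≠ x → z ∈ L ∨ z ∈ R) ∧
      (∀ z ∈ L, z ∈ D.arc a b ∧ z ≠ x ∧ z ≠ D.vtx b) ∧
      (∀ z ∈ R, z ∈ D.arc a b ∧ z ≠ x ∧ z ≠ D.vtx a) := by
  obtain ⟨f, hc, hi, h0, h1, hf⟩ := D.isArc a b h
  rw [hf] at hx ⊢
  obtain ⟨t, ht, rfl⟩ := hx
  have ht0 : 0 < t := lt_of_le_of_ne ht.1 (fun h' => hxa (by rw [← h', h0]))
  have ht1 : t < 1 := lt_of_le_of_ne ht.2 (fun h' => hxb (by rw [h', h1]))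
  have s1 : Ico 0 t ⊆ Icc (0 : ℝ) 1 := fun y hy => ⟨hy.1, hy.2.le.trans ht.2⟩
  have s2 : Ioc t 1 ⊆ Icc (0 : ℝ) 1 := fun y hy => ⟨ht.1.trans hy.1.le, hy.2⟩
  refine ⟨f '' Ico 0 t, f '' Ioc t 1, isPreconnected_Ico.image _ (hc.mono s1),
    isPreconnected_Ioc.image _ (hc.mono s2), ⟨0, ⟨le_rfl, ht0⟩, h0⟩, ⟨1, ⟨ht1, le_rfl⟩, h1⟩,
    ?_, ?_, ?_⟩
  · rintro z ⟨y, hy, rfl⟩ hne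
    rcases lt_trichotomy y t with h' | h' | h'
    · exact Or.inl ⟨y, ⟨hy.1, h'⟩, rfl⟩
    · exact (hne (by rw [h'])).elim
    · exact Or.inr ⟨y, ⟨h', hy.2⟩, rfl⟩
  · rintro z ⟨y, hy, rfl⟩
    refine ⟨⟨y, s1 hy, rfl⟩, fun h' => hy.2.ne (hi (s1 hy) ht h'), fun h' => ?_⟩
    have := hi (s1 hy) (by simp) (h'.trans h1.symm)
    linarith [hy.2]
  · rintro z ⟨y, hy, rfl⟩
    refine ⟨⟨y, s2 hy, rfl⟩, fun h' => hy.1.ne' (hi (s2 hy) ht h'), fun h' => ?_⟩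
    have := hi (s2 hy) (by simp) (h'.trans h0.symm)
    linarith [hy.1]

theorem arc_pre_left {a b : Fin n} (h : a ≠ b) : IsPreconnected (D.arc a b \ {D.vtx b}) := by
  obtain ⟨f, hc, hi, h0, h1, hf⟩ := D.isArc a b h
  have : D.arc a b \ {D.vtx b} = f '' Ico 0 1 := by
    rw [hf, ← h1]
    ext z
    constructor
    · rintro ⟨⟨y, hy, rfl⟩, hne⟩
      exact ⟨y, ⟨hy.1, lt_of_le_of_ne hy.2 (fun h' => hne (by rw [h']; rfl))⟩, rfl⟩
    · rintro ⟨y, hy, rfl⟩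
      exact ⟨⟨y, Ico_subset_Icc_self hy, rfl⟩,
        fun h' => hy.2.ne (hi (Ico_subset_Icc_self hy) (by simp) h')⟩
  rw [this]
  exact isPreconnected_Ico.image _ (hc.mono Ico_subset_Icc_self)

theorem arc_pre_right {a b : Fin n} (h : a ≠ b) : IsPreconnected (D.arc a b \ {D.vtx a}) := by
  rw [D.arc_symm]; exact D.arc_pre_left h.symm

theorem arc_pre_open {a b : Fin n} (h : a ≠ b) :
    IsPreconnected (D.arc a b \ {D.vtx a, D.vtx b}) := by
  obtain ⟨f, hc, hi, h0, h1, hf⟩ := D.isArc a b h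
  have : D.arc a b \ {D.vtx a, D.vtx b} = f '' Ioo 0 1 := by
    rw [hf, ← h1, ← h0]
    ext z
    constructor
    · rintro ⟨⟨y, hy, rfl⟩, hne⟩
      exact ⟨y, ⟨lt_of_le_of_ne hy.1 (fun h' => hne (by rw [← h']; simp)),
        lt_of_le_of_ne hy.2 (fun h' => hne (by rw [h']; simp))⟩, rfl⟩
    · rintro ⟨y, hy, rfl⟩
      refine ⟨⟨y, Ioo_subset_Icc_self hy, rfl⟩, ?_⟩
      rintro (h' | h')
      · exact hy.1.ne' (hi (Ioo_subset_Icc_self hy) (by simp) h')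
      · exact hy.2.ne (hi (Ioo_subset_Icc_self hy) (by simp) h')
  rw [this]
  exact isPreconnected_Ioo.image _ (hc.mono Ioo_subset_Icc_self)

theorem arc_near {a b : Fin n} (h : a ≠ b) {V : Set X} (hV : V ∈ 𝓝 (D.vtx a)) :
    ∃ z ∈ V, z ∈ D.arc a b ∧ z ≠ D.vtx a ∧ z ≠ D.vtx b := by
  obtain ⟨f, hc, hi, h0, h1, hf⟩ := D.isArc a b h
  have hev : ∀ᶠ s in 𝓝[Icc 0 1] (0 : ℝ), f s ∈ V := (hc 0 (by simp)) (by rw [h0]; exact hV)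
  have hev2 : ∀ᶠ s in 𝓝[Ioo 0 1] (0 : ℝ), f s ∈ V :=
    hev.filter_mono (nhdsWithin_mono _ Ioo_subset_Icc_self)
  have : (𝓝[Ioo 0 1] (0 : ℝ)).NeBot := by
    rw [← mem_closure_iff_nhdsWithin_neBot, closure_Ioo (by norm_num)]; simp
  obtain ⟨s, hs, hs'⟩ := (hev2.and self_mem_nhdsWithin).exists
  refine ⟨f s, hs, ?_, ?_, ?_⟩
  · rw [hf]; exact ⟨s, Ioo_subset_Icc_self hs', rfl⟩
  · rw [← h0]; exact fun h' => hs'.1.ne' (hi (Ioo_subset_Icc_self hs') (by simp) h')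
  · rw [← h1]; exact fun h' => hs'.2.ne (hi (Ioo_subset_Icc_self hs') (by simp) h')

theorem arc_mid {a b : Fin n} (h : a ≠ b) :
    ∃ z, z ∈ D.arc a b ∧ z ≠ D.vtx a ∧ z ≠ D.vtx b := by
  obtain ⟨z, _, hz⟩ := D.arc_near h (V := univ) Filter.univ_mem
  exact ⟨z, hz⟩

theorem arc_off {a b c : Fin n} (h : Dis a b c) {m : X} (hm : m ∈ D.arc a b) (ha : m ≠ D.vtx a)
    (hb : m ≠ D.vtx b) : m ∉ D.arc b c ∧ m ∉ D.arc c a :=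
  ⟨fun h' => hb (D.adj_inter h hm h'), fun h' => ha (D.adj_inter h.cyc.cyc h' hm)⟩

theorem vtx_off {a b c : Fin n} (h : Dis a b c) : D.vtx c ∉ D.arc a b :=
  D.vtx_not_mem a b c h.1 h.2.2 h.2.1.symm

end GoodDrawing

namespace Setup

variable {n : ℕ} {X : Type*} [TopologicalSpace X] [T2Space X] [CompactSpace X]
  {D : GoodDrawing n X} {P : PlaneChart X}

theorem jump (S : Setup D P) {a b c d : Fin n} (hc : Dis a b c) (hd : Dis a b d) {m : X}
    (hm : m ∈ D.arc a b) (ha : m ≠ D.vtx a) (hb : m ≠ D.vtx b) :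
    ∃ k : ℂ, ∀ᶠ z in 𝓝 m, z ∉ D.arc b c ∧ z ∉ D.arc c a ∧ z ∉ D.arc b d ∧ z ∉ D.arc d a ∧
      D.wd P a b c z - D.wd P a b d z = k := by
  set U : Set X := ((D.arc b c ∪ D.arc c a) ∪ (D.arc b d ∪ D.arc d a))ᶜ with hU
  have hUo : IsOpen U := (((S.closed hc.2.1).union (S.closed hc.2.2)).union
    ((S.closed hd.2.1).union (S.closed hd.2.2))).isOpen_compl
  have hmem : ∀ z ∈ U, z ∉ D.arc b c ∧ z ∉ D.arc c a ∧ z ∉ D.arc b d ∧ z ∉ D.arc d a := by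
    intro z hz
    simp only [hU, mem_compl_iff, mem_union, not_or] at hz
    tauto
  have hmU : m ∈ U := by
    have h1 := D.arc_off hc hm ha hb
    have h2 := D.arc_off hd hm ha hb
    simp only [hU, mem_compl_iff, mem_union, not_or]
    tauto
  set η : X → ℂ := fun z => D.th P b c z + D.th P c a z - (D.th P b d z + D.th P d a z) with hη
  have hcont : ContinuousOn η U := by
    refine ((((S.th_cont hc.2.1).mono ?_).add ((S.th_cont hc.2.2).mono ?_))).sub
      (((S.th_cont hd.2.1).mono ?_).add ((S.th_cont hd.2.2).mono ?_))
    all_goals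
      intro z hz
      have := hmem z hz
      simp only [mem_compl_iff]
      tauto
  have hintv : ∀ z ∈ U, ∃ k : ℤ, η z = k := by
    intro z hz
    by_cases hi : z = P.inf
    · exact ⟨0, by simp [hη, hi, D.th_inf]⟩
    obtain ⟨z1, z2, z3, z4⟩ := hmem z hz
    apply int_of_exp
    have n1 := S.vtx_ne hc.2.1 z1 hi
    have n2 := S.vtx_ne hc.2.2 z2 hi
    have n3 := S.vtx_ne hd.2.2 z4 hi
    have n4 := S.vtx_ne hc.2.2.symm (by rwa [D.arc_symm]) hi
    rw [hη]
    simp only [mul_add, mul_sub]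
    rw [Complex.exp_sub, Complex.exp_add, Complex.exp_add, S.exp_th hc.2.1 z1 hi,
      S.exp_th hc.2.2 z2 hi, S.exp_th hd.2.1 z3 hi, S.exp_th hd.2.2 z4 hi]
    field_simp
  refine ⟨η m, ?_⟩
  filter_upwards [hUo.mem_nhds hmU, int_valued_eventually hUo hcont hintv hmU] with z hz hz'
  obtain ⟨z1, z2, z3, z4⟩ := hmem z hz
  refine ⟨z1, z2, z3, z4, ?_⟩
  rw [← hz', hη]
  simp only [GoodDrawing.wd]
  ring

variable [LocallyConnectedSpace X]

/-- (F1) a vertex inside a triangle sees an edge with the same orientation. -/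
theorem F1 (S : Setup D P) {t p q s : Fin n} (h : Dis t p q) (hs : D.vtx s ∈ D.Inn P t p q) :
    D.om P t p s = D.om P t p q := by
  have hsne : ∀ w : Fin n, D.vtx w ∈ D.tri t p q → s ≠ w := by
    rintro w hw rfl; exact hs.1 hw
  have ht := hsne t (by rw [D.mem_tri]; exact Or.inl (D.vtx_mem_left h.1))
  have hp := hsne p (by rw [D.mem_tri]; exact Or.inl (D.vtx_mem_right h.1))
  have h' : Dis t p s := ⟨h.1, hp.symm, ht⟩
  have hvt : D.vtx t ∉ D.Ext P t p q := fun h' =>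
    h'.1 (by rw [D.mem_tri]; exact Or.inl (D.vtx_mem_left h.1))
  have hvp : D.vtx p ∉ D.Ext P t p q := fun h' =>
    h'.1 (by rw [D.mem_tri]; exact Or.inl (D.vtx_mem_right h.1))
  have hvs : D.vtx s ∉ D.Ext P t p q := fun h' => Inn_Ext hs h'
  have hsub : ∀ z ∈ D.Ext P t p q, z ∉ D.tri t p s := by
    intro z hz hz'
    rw [D.mem_tri] at hz'
    rcases hz' with h1 | h1 | h1
    · exact S.convex h h'.1 hvt hvp h1 hz
    · exact S.convex h h'.2.1 hvp hvs h1 hz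
    · exact S.convex h h'.2.2 hvs hvt h1 hz
  have hEE : ∀ z ∈ D.Ext P t p q, z ∈ D.Ext P t p s := fun z hz =>
    S.Ext_prop h' (S.Ext_preconn h) hsub (S.inf_Ext h) hz (S.inf_Ext h')
  obtain ⟨m, hm, hm1, hm2⟩ := D.arc_mid h.1
  obtain ⟨k, hk⟩ := S.jump h h' hm hm1 hm2
  obtain ⟨z, hz, hzE⟩ := S.near_ext h hm hm1 hm2 hk
  have hk0 : k = 0 := by
    rw [← hz.2.2.2.2, hzE.2, (hEE z hzE).2, sub_zero]
  obtain ⟨y, hy, hyI⟩ := S.near_inn h hm hm1 hm2 hk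
  have e1 : D.wd P t p q y = D.wd P t p s y := sub_eq_zero.1 (hy.2.2.2.2.trans hk0)
  have hyI' : y ∈ D.Inn P t p s := by
    refine ⟨?_, by rw [← e1]; exact hyI.2⟩
    rw [D.mem_tri]
    have := hyI.1
    rw [D.mem_tri] at this
    have hy' : y ∉ D.arc p s ∧ y ∉ D.arc s t := ⟨hy.2.2.1, hy.2.2.2.1⟩
    tauto
  have e2 := S.om_spec h hyI
  have e3 := S.om_spec h' hyI'
  rw [e1, e3] at e2
  exact_mod_cast e2

theorem V_of_cross {σ γ : Set X} {x : X} (h : CrossesAt σ γ x) {Q : X → Prop}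
    (hQ : ∀ᶠ z in 𝓝 x, Q z) : ∃ V ∈ 𝓝 x, ∃ C₁ C₂ : Set X, V \ σ = C₁ ∪ C₂ ∧
      IsPreconnected C₁ ∧ IsPreconnected C₂ ∧ (γ ∩ C₁).Nonempty ∧ (γ ∩ C₂).Nonempty ∧
      (∀ z ∈ C₁, z ∉ σ ∧ Q z) ∧ (∀ z ∈ C₂, z ∉ σ ∧ Q z) ∧ ∀ z ∈ V, Q z := by
  obtain ⟨V, hV, hVU, C₁, C₂, e, _, p1, p2, n1, n2⟩ := h.2.2 _ hQ
  refine ⟨V, hV, C₁, C₂, e, p1, p2, n1, n2, fun z hz => ?_, fun z hz => ?_, fun z hz => hVU hz⟩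
  · have : z ∈ V \ σ := by rw [e]; exact Or.inl hz
    exact ⟨this.2, hVU this.1⟩
  · have : z ∈ V \ σ := by rw [e]; exact Or.inr hz
    exact ⟨this.2, hVU this.1⟩

/-- the four-tuple is pairwise distinct -/
theorem cross_interior {a b c d : Fin n} (hc : Dis a b c) (hd : Dis a b d) (D : GoodDrawing n X)
    (hcd : c ≠ d) {x : X} (hx : x ∈ D.arc a b) (hx' : x ∈ D.arc c d) :
    x ≠ D.vtx a ∧ x ≠ D.vtx b ∧ x ≠ D.vtx c ∧ x ≠ D.vtx d := by
  refine ⟨?_, ?_, ?_, ?_⟩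
  · rintro rfl; exact D.vtx_not_mem c d a hcd hc.2.2.symm hd.2.2.symm hx'
  · rintro rfl; exact D.vtx_not_mem c d b hcd hc.2.1 hd.2.1 hx'
  · rintro rfl; exact D.vtx_off hc hx
  · rintro rfl; exact D.vtx_off hd hx

/-- Local structure at a crossing. -/
theorem cross_local (S : Setup D P) {a b c : Fin n} (hc : Dis a b c) {γ : Set X} {x : X}
    (hx : x ∈ D.arc a b) (hxa : x ≠ D.vtx a) (hxb : x ≠ D.vtx b)
    (hcr : CrossesAt (D.arc a b) γ x) {Q : X → Prop} (hQ : ∀ᶠ z in 𝓝 x, Q z) :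
    ∃ V ∈ 𝓝 x, ∃ C₁ C₂ : Set X, V \ D.arc a b = C₁ ∪ C₂ ∧ IsPreconnected C₁ ∧
      IsPreconnected C₂ ∧ (γ ∩ C₁).Nonempty ∧ (γ ∩ C₂).Nonempty ∧ C₁ ⊆ D.Inn P a b c ∧
      C₂ ⊆ D.Ext P a b c ∧ (∀ z ∈ C₁, z ∉ D.arc a b ∧ Q z) ∧
      (∀ z ∈ C₂, z ∉ D.arc a b ∧ Q z) ∧ ∀ z ∈ V, Q z := by
  have hoff := D.arc_off hc hx hxa hxb
  have hQ' : ∀ᶠ z in 𝓝 x, (z ∉ D.arc b c ∧ z ∉ D.arc c a) ∧ Q z :=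
    (((S.closed hc.2.1).isOpen_compl.mem_nhds hoff.1 |> Filter.Eventually.and <|
      (S.closed hc.2.2).isOpen_compl.mem_nhds hoff.2)).and hQ
  obtain ⟨V, hV, C₁, C₂, e, p1, p2, n1, n2, q1, q2, qV⟩ := V_of_cross hcr hQ'
  have t1 : ∀ z ∈ C₁, z ∉ D.tri a b c := fun z hz => by
    have := q1 z hz; rw [D.mem_tri]; tauto
  have t2 : ∀ z ∈ C₂, z ∉ D.tri a b c := fun z hz => by
    have := q2 z hz; rw [D.mem_tri]; tauto
  have hI : ∀ z ∈ V, z ∉ D.tri a b c → z ∈ C₁ ∨ z ∈ C₂ := by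
    intro z hz hz'
    have : z ∈ V \ D.arc a b := ⟨hz, fun h' => hz' (by rw [D.mem_tri]; exact Or.inl h')⟩
    rw [e] at this; exact this
  obtain ⟨y, hyV, hy⟩ := S.near_inn hc hx hxa hxb hV
  obtain ⟨w, hwV, hw⟩ := S.near_ext hc hx hxa hxb hV
  rcases hI y hyV hy.1 with hy1 | hy1 <;> rcases hI w hwV hw.1 with hw1 | hw1
  · exact (Inn_Ext hy (S.Ext_prop hc p1 t1 hw1 hy1 hw)).elim
  · exact ⟨V, hV, C₁, C₂, e, p1, p2, n1, n2, fun z hz => S.Inn_prop hc p1 t1 hy1 hz hy,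
      fun z hz => S.Ext_prop hc p2 t2 hw1 hz hw, fun z hz => ⟨(q1 z hz).1, (q1 z hz).2.2⟩,
      fun z hz => ⟨(q2 z hz).1, (q2 z hz).2.2⟩, fun z hz => (qV z hz).2⟩
  · exact ⟨V, hV, C₂, C₁, by rw [e, union_comm], p2, p1, n2, n1,
      fun z hz => S.Inn_prop hc p2 t2 hy1 hz hy,
      fun z hz => S.Ext_prop hc p1 t1 hw1 hz hw, fun z hz => ⟨(q2 z hz).1, (q2 z hz).2.2⟩,
      fun z hz => ⟨(q1 z hz).1, (q1 z hz).2.2⟩, fun z hz => (qV z hz).2⟩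
  · exact (Inn_Ext hy (S.Ext_prop hc p2 t2 hw1 hy1 hw)).elim

theorem cross_ext (S : Setup D P) {a b c d : Fin n} (hc : Dis a b c) (hd : Dis a b d)
    (hcd : c ≠ d) {x : X} (hx : x ∈ D.arc a b) (hx' : x ∈ D.arc c d) :
    D.vtx d ∈ D.Ext P a b c := by
  obtain ⟨xa, xb, xc, xd⟩ := cross_interior hc hd D hcd hx hx'
  have hcr := ((D.indep_arcs a b c d hc.1 hcd hc.2.2.symm hd.2.2.symm hc.2.1 hd.2.1).2 x
    ⟨hx, hx'⟩).1
  obtain ⟨V, hV, C₁, C₂, e, p1, p2, n1, ⟨w, hwγ, hw⟩, s1, s2, _⟩ :=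
    S.cross_local hc hx xa xb hcr (Q := fun _ => True) (by simp)
  by_contra hne
  exact S.convex hc hcd
    (fun h' => h'.1 (by rw [D.mem_tri]; exact Or.inr (Or.inl (D.vtx_mem_right hc.2.1)))) hne hwγ
    (s2 hw)

/-- (F2) crossing edges. -/
theorem F2 (S : Setup D P) {a b c d : Fin n} (hc : Dis a b c) (hd : Dis a b d)
    (hcd : c ≠ d) {x : X} (hx : x ∈ D.arc a b) (hx' : x ∈ D.arc c d) :
    D.om P a b d = - D.om P a b c ∧
      ∀ᶠ z in 𝓝 x, z ∉ D.Ext P a b c ∨ z ∉ D.Ext P a b d := by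
  obtain ⟨xa, xb, xc, xd⟩ := cross_interior hc hd D hcd hx hx'
  have hind := D.indep_arcs a b c d hc.1 hcd hc.2.2.symm hd.2.2.symm hc.2.1 hd.2.1
  have hcr := (hind.2 x ⟨hx, hx'⟩).1
  have hEd := S.cross_ext hc hd hcd hx hx'
  have hEc := S.cross_ext hd hc hcd.symm hx (by rwa [D.arc_symm])
  obtain ⟨k, hk⟩ := S.jump hc hd hx xa xb
  obtain ⟨V, hV, C₁, C₂, e, p1, p2, ⟨y, hyγ, hy⟩, ⟨w, hwγ, hw⟩, s1, s2, q1, q2, qV⟩ :=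
    S.cross_local hc hx xa xb hcr hk
  obtain ⟨L, R, pL, pR, cL, dR, hLR, hL, hR⟩ := D.arc_split hcd hx' xc xd
  have hab : ∀ z ∈ D.arc c d, z ≠ x → z ∉ D.arc a b := fun z hz hne hz' =>
    hne (hind.1 ⟨hz', hz⟩ ⟨hx, hx'⟩)
  have hLt : ∀ z ∈ L, z ∉ D.tri a b d := by
    intro z hz hz'
    obtain ⟨z1, z2, zd⟩ := hL z hz
    rw [D.mem_tri] at hz'
    rcases hz' with h' | h' | h'
    · exact hab z z1 z2 h'
    · exact zd (D.adj_inter ⟨hcd, hd.2.1.symm, hc.2.1⟩ z1 (by rwa [D.arc_symm]))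
    · exact zd (D.adj_inter ⟨hcd, hd.2.2, hc.2.2.symm⟩ z1 h')
  have hRt : ∀ z ∈ R, z ∉ D.tri a b c := by
    intro z hz hz'
    obtain ⟨z1, z2, zc⟩ := hR z hz
    rw [D.mem_tri] at hz'
    rw [D.arc_symm] at z1
    rcases hz' with h' | h' | h'
    · exact hab z (by rwa [D.arc_symm]) z2 h'
    · exact zc (D.adj_inter ⟨hcd.symm, hc.2.1.symm, hd.2.1⟩ z1 (by rwa [D.arc_symm]))
    · exact zc (D.adj_inter ⟨hcd.symm, hc.2.2, hd.2.2.symm⟩ z1 h')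
  have hyx : y ≠ x := fun h' => (q1 y hy).1 (h' ▸ hx)
  have hyL : y ∈ L := by
    rcases hLR y hyγ hyx with h' | h'
    · exact h'
    · exact (Inn_Ext (s1 hy) (S.Ext_prop hc pR hRt dR h' hEd)).elim
  have hyE : y ∈ D.Ext P a b d := S.Ext_prop hd pL hLt cL hyL hEc
  have hk1 : (D.om P a b c : ℂ) = k := by
    rw [← (q1 y hy).2.2.2.2.2, hyE.2, S.om_spec hc (s1 hy), sub_zero]
  have hk0 : k ≠ 0 := by rw [← hk1]; exact_mod_cast S.om_ne hc
  have hC2 : ∀ z ∈ C₂, D.wd P a b d z = -k := by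
    intro z hz
    rw [← (q2 z hz).2.2.2.2.2, (s2 hz).2]; ring
  constructor
  · have hwI : w ∈ D.Inn P a b d := by
      refine ⟨?_, by rw [hC2 w hw]; exact neg_ne_zero.2 hk0⟩
      have := q2 w hw
      rw [D.mem_tri]; tauto
    have h1 := S.om_spec hd hwI
    rw [hC2 w hw, ← hk1] at h1
    exact_mod_cast h1.symm
  · filter_upwards [hV] with z hz
    by_cases hzab : z ∈ D.arc a b
    · exact Or.inl (fun h' => h'.1 (by rw [D.mem_tri]; exact Or.inl hzab))
    have : z ∈ C₁ ∪ C₂ := by rw [← e]; exact ⟨hz, hzab⟩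
    rcases this with h' | h'
    · exact Or.inl (fun h2 => Inn_Ext (s1 h') h2)
    · exact Or.inr (fun h2 => hk0 (by have := h2.2; rw [hC2 z h'] at this; simpa using this))

/-- (F3) positively surrounded vertices are inside. -/
theorem F3 (S : Setup D P) {t p q r : Fin n} {ε : ℤ} (h : Dis p q r) (hp : t ≠ p) (hq : t ≠ q)
    (hr : t ≠ r) (h1 : 0 < ε * D.om P t p q) (h2 : 0 < ε * D.om P t q r)
    (h3 : 0 < ε * D.om P t r p) : D.vtx t ∈ D.Inn P p q r := by
  have d1 : Dis t p q := ⟨hp, h.1, hq.symm⟩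
  have d2 : Dis t q r := ⟨hq, h.2.1, hr.symm⟩
  have d3 : Dis t r p := ⟨hr, h.2.2, hp.symm⟩
  -- points of the arc tp off qr are inside
  have key : ∀ m ∈ D.arc t p, m ≠ D.vtx t → m ≠ D.vtx p → m ∉ D.arc q r → m ∈ D.Inn P p q r := by
    intro m hm mt mp mqr
    have o1 := D.arc_off d1 hm mt mp
    have o2 := D.arc_off ⟨hp, h.2.2.symm, hr.symm⟩ hm mt mp
    have hmJ : m ∉ D.tri p q r := by
      rw [D.mem_tri, D.arc_symm r p]
      tauto
    have c1 : IsOpen (D.arc q t ∪ D.arc r t)ᶜ :=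
      ((S.closed hq.symm).union (S.closed hr.symm)).isOpen_compl
    have hmc : m ∈ (D.arc q t ∪ D.arc r t)ᶜ := by
      simp only [mem_compl_iff, mem_union, not_or]
      exact ⟨o1.2, o2.2⟩
    obtain ⟨z, ⟨⟨hzJ, hzw⟩, hzc⟩, hzI⟩ :=
      S.near_inn d1 hm mt mp ((S.wd_ev h hmJ).and (c1.mem_nhds hmc))
    refine ⟨hmJ, ?_⟩
    rw [← hzw, D.wd_sum P t p q r]
    simp only [mem_compl_iff, mem_union, not_or] at hzc
    have hzI1 := hzI.1
    rw [D.mem_tri] at hzJ hzI1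
    have z2 : z ∉ D.tri t q r := by
      rw [D.mem_tri, D.arc_symm t q]; tauto
    have z3 : z ∉ D.tri t r p := by
      rw [D.mem_tri, D.arc_symm t r, D.arc_symm p t]; tauto
    have w2 : ∃ k : ℤ, D.wd P t q r z = k ∧ 0 ≤ ε * k := by
      rcases trich D P t q r z with h' | h' | h'
      · exact (z2 h').elim
      · exact ⟨_, S.om_spec d2 h', h2.le⟩
      · exact ⟨0, by simpa using h'.2, by simp⟩
    have w3 : ∃ k : ℤ, D.wd P t r p z = k ∧ 0 ≤ ε * k := by
      rcases trich D P t r p z with h' | h' | h'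
      · exact (z3 h').elim
      · exact ⟨_, S.om_spec d3 h', h3.le⟩
      · exact ⟨0, by simpa using h'.2, by simp⟩
    obtain ⟨k2, e2, p2⟩ := w2
    obtain ⟨k3, e3, p3⟩ := w3
    rw [e2, e3, S.om_spec d1 hzI]
    intro h0
    have h0' : D.om P t p q + k2 + k3 = 0 := by exact_mod_cast h0
    have : ε * D.om P t p q + ε * k2 + ε * k3 = 0 := by rw [← mul_add, ← mul_add, h0', mul_zero]
    linarith
  -- the arc tp does not cross qr
  have hno : ∀ x ∈ D.arc t p, x ∉ D.arc q r := by
    intro x hx hx'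
    have dq : Dis q r t := d2.cyc
    have dp : Dis q r p := h.cyc
    obtain ⟨xq, xr, xt, xp⟩ := cross_interior dq dp D hp hx' hx
    have hcr := ((D.indep_arcs q r t p h.2.1 hp hq.symm h.1.symm hr.symm h.2.2).2 x ⟨hx', hx⟩).1
    obtain ⟨V, hV, C₁, C₂, e, p1, p2, n1, ⟨w, hwγ, hw⟩, s1, s2, q1, q2, _⟩ :=
      S.cross_local dp hx' xq xr hcr (Q := fun z => z ∉ ({D.vtx t, D.vtx p} : Set X)) (by
        have : IsClosed ({D.vtx t, D.vtx p} : Set X) := (Set.toFinite _).isClosed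
        refine this.isOpen_compl.mem_nhds ?_
        simp [xt, xp])
    have hw2 := q2 w hw
    simp only [mem_insert_iff, mem_singleton_iff, not_or] at hw2
    have := key w hwγ hw2.2.1 hw2.2.2 hw2.1
    rw [← D.Inn_cyc] at this
    exact Inn_Ext this (s2 hw)
  obtain ⟨m, hm, mt, mp⟩ := D.arc_mid hp
  refine S.Inn_prop h (D.arc_pre_left hp) ?_ ⟨hm, mp⟩
    ⟨D.vtx_mem_left hp, fun h' => hp (D.vtx_inj h')⟩ (key m hm mt mp (hno m hm))
  rintro z ⟨hz, hzp⟩ hz'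
  rw [D.mem_tri] at hz'
  rcases hz' with h' | h' | h'
  · exact hzp (D.adj_inter d1 hz h')
  · exact hno z hz h'
  · exact hzp (D.adj_inter ⟨hp, h.2.2.symm, hr.symm⟩ hz (by rwa [D.arc_symm]))

/-- Interiority. -/
theorem ax4 (S : Setup D P) {t p q r : Fin n} {ε : ℤ} (h : Dis p q r) (hp : t ≠ p) (hq : t ≠ q)
    (hr : t ≠ r) (h1 : 0 < ε * D.om P t p q) (h2 : 0 < ε * D.om P t q r)
    (h3 : 0 < ε * D.om P t r p) : 0 < ε * D.om P p q r := by
  have := S.F1 h (S.F3 h hp hq hr h1 h2 h3)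
  rw [← this, S.om_cyc (a := t) (b := p) (c := q) ⟨hp, h.1, hq.symm⟩]
  exact h1

theorem ax5_aux (S : Setup D P) {t s p q : Fin n} {ε : ℤ} (h : Dis t p q) (hst : t ≠ s)
    (hsp : s ≠ p) (hsq : s ≠ q) (h1 : 0 < ε * D.om P t s p) (h2 : 0 < ε * D.om P t s q)
    (h3 : 0 < ε * D.om P t p q) {z : X} (hz : z ∈ D.arc t s) (hzI : z ∈ D.Inn P t p q) :
    False := by
  have dp : Dis t s p := ⟨hst, hsp, h.1.symm⟩
  have dq : Dis t s q := ⟨hst, hsq, h.2.2⟩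
  by_cases hcr : ∃ x ∈ D.arc t s, x ∈ D.arc p q
  · obtain ⟨x, hx, hx'⟩ := hcr
    have := (S.F2 dp dq h.2.1 hx hx').1
    rw [this, mul_neg] at h2
    linarith
  · push Not at hcr
    have hzt : z ≠ D.vtx t := by
      rintro rfl
      exact hzI.1 (by rw [D.mem_tri]; exact Or.inl (D.vtx_mem_left h.1))
    have hs : D.vtx s ∈ D.Inn P t p q := by
      refine S.Inn_prop h (D.arc_pre_right hst) ?_ ⟨hz, hzt⟩
        ⟨D.vtx_mem_right hst, fun h' => hst (D.vtx_inj h').symm⟩ hzI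
      rintro y ⟨hy, hyt⟩ hy'
      rw [D.mem_tri] at hy'
      rcases hy' with h' | h' | h'
      · exact hyt (D.adj_inter ⟨hst.symm, h.1, hsp.symm⟩ (by rwa [D.arc_symm]) h')
      · exact hcr y hy h'
      · exact hyt (D.adj_inter ⟨h.2.2, hst, hsq⟩ h' hy)
    have e1 := S.F1 h hs
    have e2 := S.om_swap (a := s) (b := t) (c := p) ⟨hst.symm, h.1, hsp.symm⟩
    have e3 := S.om_cyc (a := t) (b := p) (c := s) ⟨h.1, hsp.symm, hst.symm⟩
    have e4 := S.om_cyc (a := p) (b := s) (c := t) ⟨hsp.symm, hst.symm, h.1⟩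
    rw [e2, e4, e3, e1, mul_neg] at h1
    linarith

/-- Transitivity. -/
theorem ax5 (S : Setup D P) {t s p q r : Fin n} {ε : ℤ} (h : Dis p q r) (hp : t ≠ p) (hq : t ≠ q)
    (hr : t ≠ r) (hst : t ≠ s) (hsp : s ≠ p) (hsq : s ≠ q) (hsr : s ≠ r)
    (s1 : 0 < ε * D.om P t s p) (s2 : 0 < ε * D.om P t s q) (s3 : 0 < ε * D.om P t s r)
    (h1 : 0 < ε * D.om P t p q) (h2 : 0 < ε * D.om P t q r)
    (h3 : 0 < ε * D.om P t r p) : False := by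
  have d1 : Dis t p q := ⟨hp, h.1, hq.symm⟩
  have d2 : Dis t q r := ⟨hq, h.2.1, hr.symm⟩
  have d3 : Dis t r p := ⟨hr, h.2.2, hp.symm⟩
  have ht := S.F3 h hp hq hr h1 h2 h3
  obtain ⟨z, hzI, hz, hzt, hzs⟩ := D.arc_near hst ((S.Inn_open h).mem_nhds ht)
  have hzJ := hzI.1
  have hw := hzI.2
  rw [D.mem_tri] at hzJ
  have o : ∀ w, w ≠ t → w ≠ s → z ∉ D.arc t w := fun w hwt hws h' =>
    hzt (D.adj_inter ⟨hst.symm, hwt.symm, hws⟩ (by rwa [D.arc_symm]) h')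
  have op := o p hp.symm hsp.symm
  have oq := o q hq.symm hsq.symm
  have or := o r hr.symm hsr.symm
  rw [D.wd_sum P t p q r] at hw
  by_cases w1 : D.wd P t p q z = 0
  · by_cases w2 : D.wd P t q r z = 0
    · by_cases w3 : D.wd P t r p z = 0
      · exact hw (by rw [w1, w2, w3]; simp)
      · exact S.ax5_aux d3 hst hsr hsp s3 s1 h3 hz
          ⟨by rw [D.mem_tri, D.arc_symm p t]; tauto, w3⟩
    · exact S.ax5_aux d2 hst hsq hsr s2 s3 h2 hz
          ⟨by rw [D.mem_tri, D.arc_symm r t]; tauto, w2⟩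
  · exact S.ax5_aux d1 hst hsp hsq s1 s2 h1 hz
          ⟨by rw [D.mem_tri, D.arc_symm q t]; tauto, w1⟩

end Setup


/-- Positive orientation of a triple. -/
def PS {n : ℕ} {X : Type*} [TopologicalSpace X] (D : GoodDrawing n X) (P : PlaneChart X) (ε : ℤ)
    (a b c : Fin n) : Prop := Dis a b c ∧ 0 < ε * D.om P a b c

/-- Two vertex sets on different sides of the edge `uv`. -/
structure Sepa {n : ℕ} {X : Type*} [TopologicalSpace X] (D : GoodDrawing n X) (P : PlaneChart X)
    (ε : ℤ) (u v : Fin n) (A B : Set (Fin n)) : Prop where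
  ne : ε ≠ 0
  uv : u ≠ v
  hA : ∀ a ∈ A, a ≠ u → a ≠ v → PS D P ε u v a
  hB : ∀ b ∈ B, b ≠ u → b ≠ v → PS D P ε v u b

section
variable {n : ℕ} {X : Type*} [TopologicalSpace X] [T2Space X] [CompactSpace X]
  [LocallyConnectedSpace X] {D : GoodDrawing n X} {P : PlaneChart X} {ε : ℤ}

namespace PS

theorem cyc (S : Setup D P) {a b c : Fin n} (h : PS D P ε a b c) : PS D P ε b c a :=
  ⟨h.1.cyc, by rw [S.om_cyc h.1]; exact h.2⟩

theorem neg (S : Setup D P) {a b c : Fin n} (h : PS D P ε a b c) : PS D P (-ε) b a c :=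
  ⟨h.1.swap, by rw [S.om_swap h.1]; simpa using h.2⟩

theorem neg' (S : Setup D P) {a b c : Fin n} (h : PS D P (-ε) a b c) : PS D P ε b a c := by
  simpa using h.neg S

theorem asym (S : Setup D P) {a b c : Fin n} (h : PS D P ε a b c) (h' : PS D P ε b a c) :
    False := by
  have := h'.2
  rw [S.om_swap h.1] at this
  have := h.2
  simp only [mul_neg] at *
  omega

theorem tot (S : Setup D P) {a b c : Fin n} (h : Dis a b c) (hε : ε ≠ 0) :
    PS D P ε a b c ∨ PS D P ε b a c := by
  have h1 : ε * D.om P a b c ≠ 0 := mul_ne_zero hε (S.om_ne h)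
  rcases lt_or_gt_of_ne h1 with h2 | h2
  · exact Or.inr ⟨h.swap, by rw [S.om_swap h, mul_neg]; omega⟩
  · exact Or.inl ⟨h, h2⟩

theorem ax4 (S : Setup D P) {t p q r : Fin n} (h1 : PS D P ε t p q) (h2 : PS D P ε t q r)
    (h3 : PS D P ε t r p) : PS D P ε p q r :=
  ⟨⟨h1.1.2.1, h2.1.2.1, h3.1.2.1⟩, S.ax4 ⟨h1.1.2.1, h2.1.2.1, h3.1.2.1⟩ h1.1.1 h2.1.1 h3.1.1
    h1.2 h2.2 h3.2⟩

theorem ax5 (S : Setup D P) {t s p q r : Fin n} (s1 : PS D P ε t s p) (s2 : PS D P ε t s q)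
    (s3 : PS D P ε t s r) (h1 : PS D P ε t p q) (h2 : PS D P ε t q r)
    (h3 : PS D P ε t r p) : False :=
  S.ax5 ⟨h1.1.2.1, h2.1.2.1, h3.1.2.1⟩ h1.1.1 h2.1.1 h3.1.1 s1.1.1 s1.1.2.1 s2.1.2.1 s3.1.2.1
    s1.2 s2.2 s3.2 h1.2 h2.2 h3.2

theorem ax5m (S : Setup D P) {t s p q r : Fin n} (s1 : PS D P ε s t p) (s2 : PS D P ε s t q)
    (s3 : PS D P ε s t r) (h1 : PS D P ε t p q) (h2 : PS D P ε t q r)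
    (h3 : PS D P ε t r p) : False :=
  ax5 S (s1.neg S) (s3.neg S) (s2.neg S) (((h3.cyc S).cyc S).neg S) (((h2.cyc S).cyc S).neg S)
    (((h1.cyc S).cyc S).neg S)

theorem F1 (S : Setup D P) {t p q s : Fin n} (h : PS D P ε t p q)
    (hs : D.vtx s ∈ D.Inn P t p q) : PS D P ε t p s := by
  have hne : ∀ w : Fin n, D.vtx w ∈ D.tri t p q → s ≠ w := by
    rintro w hw rfl; exact hs.1 hw
  refine ⟨⟨h.1.1, (hne p ?_).symm, hne t ?_⟩, by rw [S.F1 h.1 hs]; exact h.2⟩ <;> rw [D.mem_tri]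
  · exact Or.inl (D.vtx_mem_right h.1.1)
  · exact Or.inl (D.vtx_mem_left h.1.1)

theorem F2 (S : Setup D P) {a b c d : Fin n} (h : PS D P ε a b c) (ha : d ≠ a) (hb : d ≠ b)
    (hcd : c ≠ d) {x : X} (hx : x ∈ D.arc a b) (hx' : x ∈ D.arc c d) : PS D P ε b a d := by
  have hd : Dis a b d := ⟨h.1.1, hb.symm, ha⟩
  refine ⟨hd.swap, ?_⟩
  rw [S.om_swap hd, (S.F2 h.1 hd hcd hx hx').1, neg_neg]
  exact h.2

end PS

namespace Sepa

variable {u v : Fin n} {A B : Set (Fin n)}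

theorem symm (H : Sepa D P ε u v A B) : Sepa D P ε v u B A :=
  ⟨H.ne, H.uv.symm, fun b hb h1 h2 => H.hB b hb h2 h1, fun b hb h1 h2 => H.hA b hb h2 h1⟩

theorem mirror (S : Setup D P) (H : Sepa D P ε u v A B) : Sepa D P (-ε) v u A B :=
  ⟨neg_ne_zero.2 H.ne, H.uv.symm, fun b hb h1 h2 => (H.hA b hb h2 h1).neg S,
    fun b hb h1 h2 => (H.hB b hb h2 h1).neg S⟩

theorem ne_AB (S : Setup D P) (H : Sepa D P ε u v A B) {a b : Fin n} (ha : a ∈ A) (hb : b ∈ B)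
    (hu : a ≠ u) (hv : a ≠ v) : a ≠ b := by
  rintro rfl
  exact (H.hA a ha hu hv).asym S (H.hB a hb hu hv)

theorem nx0 (S : Setup D P) (H : Sepa D P ε u v A B) {c d : Fin n} (hc : c ∈ B) (hd : d ∈ B)
    (cu : c ≠ u) (cv : c ≠ v) (du : d ≠ u) (dv : d ≠ v) (hcd : c ≠ d) {x : X}
    (hx : x ∈ D.arc u v) (hx' : x ∈ D.arc c d) : False :=
  ((H.hB c hc cu cv).F2 S dv du hcd (by rwa [D.arc_symm]) hx').asym S (H.hB d hd du dv)

theorem nx1 (S : Setup D P) (H : Sepa D P ε u v A B) {a c : Fin n} (ha : a ∈ A) (hc : c ∈ B)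
    (au : a ≠ u) (av : a ≠ v) (cu : c ≠ u) (cv : c ≠ v) {x : X}
    (hx : x ∈ D.arc u a) (hx' : x ∈ D.arc v c) : False := by
  have hac := H.ne_AB S ha hc au av
  have h1 := H.hA a ha au av
  have h2 := H.hB c hc cu cv
  have h3 : PS D P ε u a c :=
    ((h1.cyc S).cyc S).F2 S hac.symm cu cv.symm (by rwa [D.arc_symm]) hx'
  have h4 : PS D P ε v c a :=
    ((h2.cyc S).cyc S).F2 S hac av au.symm (by rwa [D.arc_symm]) hx
  have h5 := PS.ax4 S h1 h3 (h2.cyc S)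
  exact h4.asym S ((h5.cyc S).cyc S)

theorem nx2_aux (S : Setup D P) (H : Sepa D P ε u v A B) {a c d : Fin n} (ha : a ∈ A) (hc : c ∈ B)
    (hd : d ∈ B) (au : a ≠ u) (av : a ≠ v) (cu : c ≠ u) (cv : c ≠ v) (du : d ≠ u) (dv : d ≠ v)
    (hcd : c ≠ d) {x : X} (hx : x ∈ D.arc u a) (hx' : x ∈ D.arc c d) (h : PS D P ε u a c) :
    False := by
  have hac := H.ne_AB S ha hc au av
  have had := H.ne_AB S ha hd au av
  have h1 := H.hA a ha au av
  have h2 := H.hB c hc cu cv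
  have h3 := H.hB d hd du dv
  have h4 : PS D P ε a u d := h.F2 S du had.symm hcd hx hx'
  rcases PS.tot S (⟨hcd, du, cu.symm⟩ : Dis c d u) H.ne with h5 | h5
  · have h6 : PS D P ε d c a := h5.F2 S hac had au.symm hx' hx
    have h7 := PS.ax4 S h ((h5.cyc S).cyc S) (h4.cyc S)
    exact h6.asym S (h7.cyc S)
  · exact PS.ax5 S (h3.cyc S) (h4.cyc S) ((h5.cyc S).cyc S) h1 h (h2.cyc S)

theorem nx2 (S : Setup D P) (H : Sepa D P ε u v A B) {a c d : Fin n} (ha : a ∈ A) (hc : c ∈ B)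
    (hd : d ∈ B) (au : a ≠ u) (av : a ≠ v) (cu : c ≠ u) (cv : c ≠ v) (du : d ≠ u) (dv : d ≠ v)
    (hcd : c ≠ d) {x : X} (hx : x ∈ D.arc u a) (hx' : x ∈ D.arc c d) : False := by
  have hac := H.ne_AB S ha hc au av
  have had := H.ne_AB S ha hd au av
  rcases PS.tot S (⟨au.symm, hac, cu⟩ : Dis u a c) H.ne with h5 | h5
  · exact H.nx2_aux S ha hc hd au av cu cv du dv hcd hx hx' h5
  · exact H.nx2_aux S ha hd hc au av du dv cu cv hcd.symm hx (by rwa [D.arc_symm])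
      (h5.F2 S had.symm du hcd (by rwa [D.arc_symm]) hx')

/-- an edge at `u` on side `A` avoids all edges of `B` not through `u`. -/
theorem nxu (S : Setup D P) (H : Sepa D P ε u v A B) {a c d : Fin n} (ha : a ∈ A) (hc : c ∈ B)
    (hd : d ∈ B) (au : a ≠ u) (av : a ≠ v) (cu : c ≠ u) (du : d ≠ u)
    (hcd : c ≠ d) {x : X} (hx : x ∈ D.arc u a) (hx' : x ∈ D.arc c d) : False := by
  by_cases cv : c = v
  · subst cv; exact H.nx1 S ha hd au av du hcd.symm hx hx'
  by_cases dv : d = v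
  · subst dv; exact H.nx1 S ha hc au av cu cv hx (by rwa [D.arc_symm])
  exact H.nx2 S ha hc hd au av cu cv du dv hcd hx hx'

theorem Ib_aux (S : Setup D P) (H : Sepa D P ε u v A B) {a x y : Fin n} (ha : a ∈ A) (hx : x ∈ B)
    (hy : y ∈ B) (au : a ≠ u) (av : a ≠ v) (xu : x ≠ u) (xv : x ≠ v) (yu : y ≠ u) (yv : y ≠ v)
    (h : PS D P ε u x y) (hI : D.vtx a ∈ D.Inn P u x y) : False := by
  have h1 := h.F1 S hI
  have h2 := ((h.cyc S).cyc S).F1 S (by rwa [D.Inn_cyc, D.Inn_cyc])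
  exact PS.ax5 S ((H.hB x hx xu xv).cyc S) h1 h (H.hA a ha au av) (h2.cyc S)
    ((H.hB y hy yu yv).cyc S)

theorem Ib (S : Setup D P) (H : Sepa D P ε u v A B) {a x y : Fin n} (ha : a ∈ A) (hx : x ∈ B)
    (hy : y ∈ B) (au : a ≠ u) (av : a ≠ v) (xu : x ≠ u) (xv : x ≠ v) (yu : y ≠ u) (yv : y ≠ v)
    (hxy : x ≠ y) (hI : D.vtx a ∈ D.Inn P u x y) : False := by
  rcases PS.tot S (⟨xu.symm, hxy, yu⟩ : Dis u x y) H.ne with h | h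
  · exact H.Ib_aux S ha hx hy au av xu xv yu yv h hI
  · exact H.Ib_aux S ha hy hx au av yu yv xu xv (h.cyc S)
      (by rwa [D.Inn_cyc, D.Inn_swap])

theorem nx3 (S : Setup D P) (H : Sepa D P ε u v A B) {a b c d : Fin n} (ha : a ∈ A) (hb : b ∈ A)
    (hc : c ∈ B) (hd : d ∈ B) (au : a ≠ u) (av : a ≠ v) (bu : b ≠ u) (bv : b ≠ v)
    (cu : c ≠ u) (cv : c ≠ v) (du : d ≠ u) (dv : d ≠ v)
    (hab : a ≠ b) (hcd : c ≠ d) {x : X} (hx : x ∈ D.arc a b) (hx' : x ∈ D.arc c d) : False := by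
  have hac := H.ne_AB S ha hc au av
  have had := H.ne_AB S ha hd au av
  have hbc := H.ne_AB S hb hc bu bv
  have hbd := H.ne_AB S hb hd bu bv
  have hD : Dis a b u := ⟨hab, bu, au.symm⟩
  have hind := D.indep_arcs a b c d hab hcd hac had hbc hbd
  obtain ⟨xa, xb, xc, xd⟩ := Setup.cross_interior ⟨hab, hbc, hac.symm⟩ ⟨hab, hbd, had.symm⟩ D hcd hx hx'
  obtain ⟨V, hV, C₁, C₂, e, p1, p2, ⟨y, hyγ, hy⟩, n2, s1, s2, q1, -⟩ :=
    S.cross_local hD hx xa xb (hind.2 x ⟨hx, hx'⟩).1 (Q := fun _ => True) (by simp)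
  have hyI := s1 hy
  have key : ∀ z ∈ D.arc c d, z ≠ x → z ∉ D.tri a b u := by
    intro z hz hzx h'
    rw [D.mem_tri] at h'
    rcases h' with h' | h' | h'
    · exact hzx (hind.1 ⟨h', hz⟩ ⟨hx, hx'⟩)
    · exact H.nxu S hb hc hd bu bv cu du hcd (by rwa [D.arc_symm]) hz
    · exact H.nxu S ha hc hd au av cu du hcd h' hz
  obtain ⟨L, R, pL, pR, hcL, hdR, hs, hL, hR⟩ := D.arc_split hcd hx' xc xd
  have hyx : y ≠ x := by
    rintro rfl; exact (q1 _ hy).1 hx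
  have H' := H.symm.mirror S
  rcases hs y hyγ hyx with h' | h'
  · have := S.Inn_prop hD pL (fun z hz => key z (hL z hz).1 (hL z hz).2.1) h' hcL hyI
    exact H'.Ib S hc ha hb cu cv au av bu bv hab (by rw [← D.Inn_cyc]; exact this)
  · have := S.Inn_prop hD pR (fun z hz => key z (hR z hz).1 (hR z hz).2.1) h' hdR hyI
    exact H'.Ib S hd ha hb du dv au av bu bv hab (by rw [← D.Inn_cyc]; exact this)

end Sepa
end


section
variable {n : ℕ} {X : Type*} [TopologicalSpace X] [T2Space X] [CompactSpace X]
  [LocallyConnectedSpace X] {D : GoodDrawing n X} {P : PlaneChart X} {ε : ℤ}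

namespace Sepa

variable {u v : Fin n} {A B : Set (Fin n)}

theorem nxu' (S : Setup D P) (H : Sepa D P ε u v A B) {a c d : Fin n} (ha : a ∈ A) (hc : c ∈ B)
    (hd : d ∈ B) (au : a ≠ u) (av : a ≠ v)
    (hcd : c ≠ d) {x : X} (hx : x ∈ D.arc u a) (hx' : x ∈ D.arc c d) : x = D.vtx u := by
  by_cases cu : c = u
  · subst cu
    exact D.adj_inter ⟨au, hcd, (H.ne_AB S ha hd au av).symm⟩ (by rwa [D.arc_symm]) hx'
  by_cases du : d = u
  · subst du
    exact D.adj_inter ⟨au, cu ∘ Eq.symm, (H.ne_AB S ha hc au av).symm⟩ (by rwa [D.arc_symm])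
      (by rwa [D.arc_symm])
  exact (H.nxu S ha hc hd au av cu du hcd hx hx').elim

/-- edges of `A` other than `uv` meet edges of `B` only in `u`, `v`. -/
theorem nx (S : Setup D P) (H : Sepa D P ε u v A B) {a b c d : Fin n} (ha : a ∈ A) (hb : b ∈ A)
    (hc : c ∈ B) (hd : d ∈ B) (au : a ≠ u) (av : a ≠ v) (hab : a ≠ b)
    (hcd : c ≠ d) {x : X} (hx : x ∈ D.arc a b) (hx' : x ∈ D.arc c d) :
    x = D.vtx b ∧ (b = u ∨ b = v) := by
  have H1 := H.mirror S
  by_cases bu : b = u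
  · subst bu
    exact ⟨H.nxu' S ha hc hd au av hcd (by rwa [D.arc_symm]) hx', Or.inl rfl⟩
  by_cases bv : b = v
  · subst bv
    exact ⟨H1.nxu' S ha hc hd av au hcd (by rwa [D.arc_symm]) hx', Or.inr rfl⟩
  exfalso
  -- now `a`, `b` are both off `u`, `v`
  have key : ∀ {ε : ℤ} {u v : Fin n} {d : Fin n} (_ : Sepa D P ε u v A B) (_ : d ∈ B) (_ : d ≠ u)
      (_ : a ≠ u) (_ : a ≠ v) (_ : b ≠ u) (_ : b ≠ v) (_ : x ∈ D.arc u d), False := by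
    intro ε u v d H hd du au av bu bv hx'
    by_cases dv : d = v
    · subst dv
      exact (H.symm).nx0 S ha hb av au bv bu hab (by rwa [D.arc_symm]) hx
    · have := ((H.symm).mirror S).nxu' S hd ha hb du dv hab hx' hx
      rw [this] at hx
      exact D.vtx_not_mem a b u hab au.symm bu.symm hx
  by_cases cu : c = u
  · subst cu; exact key H hd hcd.symm au av bu bv hx'
  by_cases du : d = u
  · subst du; exact key H hc hcd au av bu bv (by rwa [D.arc_symm])
  by_cases cv : c = v
  · subst cv; exact key H1 hd hcd.symm av au bv bu hx'
  by_cases dv : d = v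
  · subst dv; exact key H1 hc hcd av au bv bu (by rwa [D.arc_symm])
  exact H.nx3 S ha hb hc hd au av bu bv cu cv du dv hab hcd hx hx'

theorem nx_uv (S : Setup D P) (H : Sepa D P ε u v A B) {a b c d : Fin n} (ha : a ∈ A) (hb : b ∈ A)
    (hc : c ∈ B) (hd : d ∈ B) (hab : a ≠ b) (hcd : c ≠ d) {x : X} (hx : x ∈ D.arc a b)
    (hx' : x ∈ D.arc c d) : x ∈ D.arc u v := by
  have fin : ∀ b : Fin n, (x = D.vtx b ∧ (b = u ∨ b = v)) → x ∈ D.arc u v := by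
    rintro b ⟨rfl, rfl | rfl⟩
    · exact D.vtx_mem_left H.uv
    · exact D.vtx_mem_right H.uv
  by_cases h1 : a ≠ u ∧ a ≠ v
  · exact fin _ (H.nx S ha hb hc hd h1.1 h1.2 hab hcd hx hx')
  by_cases h2 : b ≠ u ∧ b ≠ v
  · exact fin _ (H.nx S hb ha hc hd h2.1 h2.2 hab.symm hcd (by rwa [D.arc_symm]) hx')
  have : (a = u ∧ b = v) ∨ (a = v ∧ b = u) := by
    rw [not_and_or, not_not, not_not] at h1 h2
    rcases h1 with rfl | rfl <;> rcases h2 with rfl | rfl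
    · exact (hab rfl).elim
    · exact Or.inl ⟨rfl, rfl⟩
    · exact Or.inr ⟨rfl, rfl⟩
    · exact (hab rfl).elim
  rcases this with ⟨rfl, rfl⟩ | ⟨rfl, rfl⟩
  · exact hx
  · rwa [D.arc_symm]

theorem Iu (S : Setup D P) (H : Sepa D P ε u v A B) {a y z : Fin n} (ha : a ∈ A)
    (hy : y ∈ B) (hz : z ∈ B) (au : a ≠ u) (av : a ≠ v) (h : Dis u y z) :
    D.vtx a ∉ D.Inn P u y z := by
  have Ia : ∀ x ∈ B, Dis u v x → D.vtx a ∉ D.Inn P u v x := by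
    intro x hx hd hI
    exact (H.hA a ha au av).asym S ((((H.hB x hx hd.2.2 hd.2.1.symm).neg S).F1 S hI).neg' S)
  intro hI
  by_cases yv : y = v
  · subst yv; exact Ia z hz h hI
  by_cases zv : z = v
  · subst zv
    exact Ia y hy ⟨H.uv, h.2.1.symm, h.1.symm⟩ (by rwa [← D.Inn_cyc, ← D.Inn_cyc, D.Inn_swap] at hI)
  exact H.Ib S ha hy hz au av h.1.symm yv h.2.2 zv h.2.1 hI

theorem ne_of_Inn {a x y z : Fin n} (hd : Dis x y z) (h : D.vtx a ∈ D.Inn P x y z) :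
    a ≠ x ∧ a ≠ y ∧ a ≠ z := by
  refine ⟨?_, ?_, ?_⟩ <;> rintro rfl <;> refine h.1 ?_ <;> rw [D.mem_tri]
  · exact Or.inl (D.vtx_mem_left hd.1)
  · exact Or.inl (D.vtx_mem_right hd.1)
  · exact Or.inr (Or.inl (D.vtx_mem_right hd.2.1))

theorem uI (S : Setup D P) (H : Sepa D P ε u v A B) {x y z : Fin n} (hx : x ∈ B)
    (hy : y ∈ B) (hz : z ∈ B) (h : Dis x y z) : D.vtx u ∉ D.Inn P x y z := by
  have Id : ∀ x ∈ B, ∀ y ∈ B, Dis v x y → D.vtx u ∉ D.Inn P v x y := by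
    intro x hx y hy h hI
    obtain ⟨-, h2, h3⟩ := ne_of_Inn h hI
    have e1 := H.hB x hx h2.symm h.1.symm
    have e2 := H.hB y hy h3.symm h.2.2
    rcases PS.tot S h H.ne with h' | h'
    · exact (e1.cyc S).asym S ((h'.F1 S hI).cyc S |> fun q => (q : PS D P ε x u v))
    · have h'' := (h'.cyc S).F1 S (by rwa [D.Inn_cyc, D.Inn_swap])
      exact (e2.cyc S).asym S (h''.cyc S)
  intro hI
  obtain ⟨h1, h2, h3⟩ := ne_of_Inn h hI
  by_cases xv : x = v
  · subst xv; exact Id y hy z hz h hI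
  by_cases yv : y = v
  · subst yv; exact Id z hz x hx h.cyc (by rwa [D.Inn_cyc])
  by_cases zv : z = v
  · subst zv; exact Id x hx y hy h.cyc.cyc (by rwa [D.Inn_cyc, D.Inn_cyc])
  have ex := H.hB x hx h1.symm xv
  have ey := H.hB y hy h2.symm yv
  have ez := H.hB z hz h3.symm zv
  have aux : ∀ x y z : Fin n, PS D P ε v u x → PS D P ε v u y → PS D P ε v u z →
      PS D P ε x y z → D.vtx u ∈ D.Inn P x y z → False := by
    intro x y z ex ey ez h hI
    exact PS.ax5m S ex ey ez (((h.F1 S hI).cyc S).cyc S)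
      ((((h.cyc S).F1 S (by rwa [D.Inn_cyc])).cyc S).cyc S)
      (((((h.cyc S).cyc S).F1 S (by rwa [D.Inn_cyc, D.Inn_cyc])).cyc S).cyc S)
  rcases PS.tot S h H.ne with h' | h'
  · exact aux x y z ex ey ez h' hI
  · exact aux y x z ey ex ez h' (by rwa [D.Inn_swap])

/-- No vertex of `A` lies inside a triangle of `B`. -/
theorem notInn (S : Setup D P) (H : Sepa D P ε u v A B) {a x y z : Fin n} (ha : a ∈ A) (hx : x ∈ B)
    (hy : y ∈ B) (hz : z ∈ B) (h : Dis x y z) : D.vtx a ∉ D.Inn P x y z := by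
  have H1 := H.mirror S
  by_cases au : a = u
  · subst au; exact H.uI S hx hy hz h
  by_cases av : a = v
  · subst av; exact H1.uI S hx hy hz h
  by_cases xu : x = u
  · subst xu; exact H.Iu S ha hy hz au av h
  by_cases xv : x = v
  · subst xv; exact H1.Iu S ha hy hz av au h
  by_cases yu : y = u
  · subst yu; rw [← D.Inn_cyc]; exact H.Iu S ha hz hx au av h.cyc
  by_cases yv : y = v
  · subst yv; rw [← D.Inn_cyc]; exact H1.Iu S ha hz hx av au h.cyc
  by_cases zu : z = u
  · subst zu; rw [← D.Inn_cyc, ← D.Inn_cyc]; exact H.Iu S ha hx hy au av h.cyc.cyc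
  by_cases zv : z = v
  · subst zv; rw [← D.Inn_cyc, ← D.Inn_cyc]; exact H1.Iu S ha hx hy av au h.cyc.cyc
  intro hI
  have off : ∀ w ∈ D.arc a u, w ∉ D.tri x y z := by
    intro w hw h'
    rw [D.arc_symm] at hw
    rw [D.mem_tri] at h'
    rcases h' with h' | h' | h'
    · exact H.nxu S ha hx hy au av xu yu h.1 hw h'
    · exact H.nxu S ha hy hz au av yu zu h.2.1 hw h'
    · exact H.nxu S ha hz hx au av zu xu h.2.2 hw h'
  have pc : IsPreconnected (D.arc a u) := by
    obtain ⟨f, hc, -, -, -, hf⟩ := D.isArc a u au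
    rw [hf]; exact isPreconnected_Icc.image _ hc
  exact H.uI S hx hy hz h (S.Inn_prop h pc off (D.vtx_mem_left au) (D.vtx_mem_right au) hI)

/-- No point of an edge of `A` lies inside a triangle of `B`. -/
theorem edge_notInn (S : Setup D P) (H : Sepa D P ε u v A B) {a b x y z : Fin n} (ha : a ∈ A)
    (hb : b ∈ A) (hab : a ≠ b) (hu : u ∈ B) (hv : v ∈ B)
    (hx : x ∈ B) (hy : y ∈ B) (hz : z ∈ B) (h : Dis x y z) {w : X} (hw : w ∈ D.arc a b) :
    w ∉ D.Inn P x y z := by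
  intro hI
  have hn := fun a ha => H.notInn S (a := a) ha hx hy hz h
  have main : ∀ a ∈ A, ∀ b ∈ A, a ≠ b → a ≠ u → a ≠ v → w ∈ D.arc a b → False := by
    intro a ha b hb hab au av hw
    have hwb : w ≠ D.vtx b := by rintro rfl; exact hn b hb hI
    have off : ∀ w ∈ D.arc a b \ {D.vtx b}, w ∉ D.tri x y z := by
      rintro w ⟨hw, hwb⟩ h'
      rw [D.mem_tri] at h'
      rcases h' with h' | h' | h'
      · exact hwb (H.nx S ha hb hx hy au av hab h.1 hw h').1
      · exact hwb (H.nx S ha hb hy hz au av hab h.2.1 hw h').1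
      · exact hwb (H.nx S ha hb hz hx au av hab h.2.2 hw h').1
    exact hn a ha (S.Inn_prop h (D.arc_pre_left hab) off ⟨hw, hwb⟩
      ⟨D.vtx_mem_left hab, fun h' => hab (D.vtx_inj h')⟩ hI)
  by_cases h1 : a ≠ u ∧ a ≠ v
  · exact main a ha b hb hab h1.1 h1.2 hw
  by_cases h2 : b ≠ u ∧ b ≠ v
  · exact main b hb a ha hab.symm h2.1 h2.2 (by rwa [D.arc_symm])
  have huv : ({a, b} : Set (Fin n)) = {u, v} ∧ w ∈ D.arc u v ∧ u ∈ A ∧ v ∈ A := by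
    rw [not_and_or, not_not, not_not] at h1 h2
    rcases h1 with rfl | rfl <;> rcases h2 with rfl | rfl
    · exact (hab rfl).elim
    · exact ⟨rfl, hw, ha, hb⟩
    · exact ⟨pair_comm _ _, by rwa [D.arc_symm], hb, ha⟩
    · exact (hab rfl).elim
  obtain ⟨-, hw, huA, hvA⟩ := huv
  have wu : w ≠ D.vtx u := by rintro rfl; exact hn u huA hI
  have wv : w ≠ D.vtx v := by rintro rfl; exact hn v hvA hI
  -- some vertex of the triangle is off `u`, `v`; if both `u` and `v` are vertices, trivial
  have offe : ∀ c ∈ B, ∀ d ∈ B, c ≠ d → ∀ w ∈ D.arc u v, w ≠ D.vtx u → w ≠ D.vtx v →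
      w ∈ D.arc c d → (c = u ∨ c = v) ∧ (d = u ∨ d = v) := by
    have one : ∀ c ∈ B, ∀ d ∈ B, c ≠ d → ∀ w ∈ D.arc u v, w ≠ D.vtx u → w ≠ D.vtx v →
        w ∈ D.arc c d → (c = u ∨ c = v) := by
      intro c hc d hd hcd w hw wu wv hw'
      by_contra h'
      rw [not_or] at h'
      have := H.symm.nx S hc hd huA hvA h'.2 h'.1 hcd H.uv hw' hw
      rcases this with ⟨rfl, rfl | rfl⟩
      · exact wv rfl
      · exact wu rfl
    intro c hc d hd hcd w hw wu wv hw'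
    exact ⟨one c hc d hd hcd w hw wu wv hw',
      one d hd c hc hcd.symm w hw wu wv (by rwa [D.arc_symm])⟩
  have triv : ∀ c d : Fin n, c ≠ d → (c = u ∨ c = v) ∧ (d = u ∨ d = v) →
      D.arc c d = D.arc u v := by
    rintro c d hcd ⟨rfl | rfl, rfl | rfl⟩
    · exact (hcd rfl).elim
    · rfl
    · exact D.arc_symm _ _
    · exact (hcd rfl).elim
  have sub : ∀ c d : Fin n, c ≠ d → ((c = u ∨ c = v) ∧ (d = u ∨ d = v)) → D.arc c d ⊆ D.tri x y z →
      False := fun c d hcd hh hs => hI.1 (hs (by rwa [triv c d hcd hh]))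
  have s1 : D.arc x y ⊆ D.tri x y z := fun z hz => by rw [D.mem_tri]; exact Or.inl hz
  have s2 : D.arc y z ⊆ D.tri x y z := fun z hz => by rw [D.mem_tri]; exact Or.inr (Or.inl hz)
  have s3 : D.arc z x ⊆ D.tri x y z := fun z hz => by rw [D.mem_tri]; exact Or.inr (Or.inr hz)
  have off : ∀ w ∈ D.arc u v \ {D.vtx u, D.vtx v}, w ∉ D.tri x y z := by
    rintro w ⟨hw, hwb⟩ h'
    simp only [mem_insert_iff, mem_singleton_iff, not_or] at hwb
    rw [D.mem_tri] at h'
    rcases h' with h' | h' | h'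
    · exact sub x y h.1 (offe x hx y hy h.1 w hw hwb.1 hwb.2 h') s1
    · exact sub y z h.2.1 (offe y hy z hz h.2.1 w hw hwb.1 hwb.2 h') s2
    · exact sub z x h.2.2 (offe z hz x hx h.2.2 w hw hwb.1 hwb.2 h') s3
  have all : ∀ q ∈ D.arc u v \ {D.vtx u, D.vtx v}, q ∈ D.Inn P x y z := fun q hq =>
    S.Inn_prop h (D.arc_pre_open H.uv) off ⟨hw, by simp [wu, wv]⟩ hq hI
  have ends : ∀ s t : Fin n, s ≠ t → D.arc s t \ {D.vtx s, D.vtx t} ⊆ D.Inn P x y z → s ∈ A →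
      s = x ∨ s = y ∨ s = z := by
    intro s t hst hsub hs
    rcases Setup.trich D P x y z (D.vtx s) with h' | h' | h'
    · by_contra hne
      simp only [not_or] at hne
      rw [D.mem_tri] at h'
      rcases h' with h' | h' | h'
      · exact D.vtx_not_mem _ _ _ h.1 hne.1 hne.2.1 h'
      · exact D.vtx_not_mem _ _ _ h.2.1 hne.2.1 hne.2.2 h'
      · exact D.vtx_not_mem _ _ _ h.2.2 hne.2.2 hne.1 h'
    · exact (hn s hs h').elim
    · obtain ⟨q, hq, hq1, hq2, hq3⟩ := D.arc_near hst ((S.Ext_open h).mem_nhds h')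
      exact (Setup.Inn_Ext (hsub ⟨hq1, by simp [hq2, hq3]⟩) hq).elim
  have e1 := ends u v H.uv all huA
  have e2 := ends v u H.uv.symm (by rw [D.arc_symm, pair_comm]; exact all) hvA
  have huv := H.uv
  have k1 := sub x y h.1
  have k2 := sub y z h.2.1
  have k3 := sub z x h.2.2
  rcases e1 with rfl | rfl | rfl <;> rcases e2 with rfl | rfl | rfl <;> simp_all

theorem Inn_disj (S : Setup D P) (H : Sepa D P ε u v A B) {a b c x y z : Fin n} (ha : a ∈ A)
    (hb : b ∈ A) (hc : c ∈ A) (hT : Dis a b c) (huA : u ∈ A) (hvA : v ∈ A) (hu : u ∈ B) (hv : v ∈ B)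
    (hx : x ∈ B) (hy : y ∈ B) (hz : z ∈ B) (h : Dis x y z) {w : X} (hw : w ∈ D.Inn P a b c) :
    w ∉ D.Inn P x y z := by
  intro hI
  have off : ∀ q ∈ D.Inn P a b c, q ∉ D.tri x y z := by
    intro q hq h'
    rw [D.mem_tri] at h'
    rcases h' with h' | h' | h'
    · exact H.symm.edge_notInn S hx hy h.1 hvA huA ha hb hc hT h' hq
    · exact H.symm.edge_notInn S hy hz h.2.1 hvA huA ha hb hc hT h' hq
    · exact H.symm.edge_notInn S hz hx h.2.2 hvA huA ha hb hc hT h' hq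
  have sub : ∀ q ∈ D.Inn P a b c, q ∈ D.Inn P x y z := fun q hq =>
    S.Inn_prop h (S.Inn_preconn hT) off hw hq hI
  have main : ∀ a ∈ A, ∀ b ∈ A, ∀ c ∈ A, Dis a b c → (∀ q ∈ D.Inn P a b c, q ∈ D.Inn P x y z) →
      a ≠ u → a ≠ v → False := by
    intro a ha b hb c hc hT sub au av
    obtain ⟨m, hm, ma, mb⟩ := D.arc_mid hT.1
    rcases Setup.trich D P x y z m with h' | h' | h'
    · rw [D.mem_tri] at h'
      rcases h' with h' | h' | h'
      · exact mb (H.nx S ha hb hx hy au av hT.1 h.1 hm h').1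
      · exact mb (H.nx S ha hb hy hz au av hT.1 h.2.1 hm h').1
      · exact mb (H.nx S ha hb hz hx au av hT.1 h.2.2 hm h').1
    · exact H.edge_notInn S ha hb hT.1 hu hv hx hy hz h hm h'
    · obtain ⟨q, hq, hq'⟩ := S.near_inn hT hm ma mb ((S.Ext_open h).mem_nhds h')
      exact Setup.Inn_Ext (sub q hq') hq
  by_cases h1 : a ≠ u ∧ a ≠ v
  · exact main a ha b hb c hc hT sub h1.1 h1.2
  by_cases h2 : b ≠ u ∧ b ≠ v
  · exact main b hb c hc a ha hT.cyc (by rwa [D.Inn_cyc]) h2.1 h2.2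
  by_cases h3 : c ≠ u ∧ c ≠ v
  · exact main c hc a ha b hb hT.cyc.cyc (by rwa [D.Inn_cyc, D.Inn_cyc]) h3.1 h3.2
  rw [not_and_or, not_not, not_not] at h1 h2 h3
  obtain ⟨t1, t2, t3⟩ := hT
  rcases h1 with rfl | rfl <;> rcases h2 with rfl | rfl <;> rcases h3 with rfl | rfl <;> simp_all

theorem final (S : Setup D P) (H : Sepa D P ε u v A B) {a b c x y z : Fin n} (ha : a ∈ A)
    (hb : b ∈ A) (hc : c ∈ A) (hT : Dis a b c) (huA : u ∈ A) (hvA : v ∈ A) (hu : u ∈ B) (hv : v ∈ B)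
    (hx : x ∈ B) (hy : y ∈ B) (hz : z ∈ B) (h : Dis x y z) {w : X} (hw : w ∉ D.Ext P a b c)
    (hw' : w ∉ D.Ext P x y z) : w ∈ D.arc u v := by
  have eA : w ∈ D.tri a b c → ∃ s ∈ A, ∃ t ∈ A, s ≠ t ∧ w ∈ D.arc s t := by
    intro h'
    rw [D.mem_tri] at h'
    rcases h' with h' | h' | h'
    · exact ⟨a, ha, b, hb, hT.1, h'⟩
    · exact ⟨b, hb, c, hc, hT.2.1, h'⟩
    · exact ⟨c, hc, a, ha, hT.2.2, h'⟩
  have eB : w ∈ D.tri x y z → ∃ s ∈ B, ∃ t ∈ B, s ≠ t ∧ w ∈ D.arc s t := by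
    intro h'
    rw [D.mem_tri] at h'
    rcases h' with h' | h' | h'
    · exact ⟨x, hx, y, hy, h.1, h'⟩
    · exact ⟨y, hy, z, hz, h.2.1, h'⟩
    · exact ⟨z, hz, x, hx, h.2.2, h'⟩
  rcases Setup.trich D P a b c w with h1 | h1 | h1
  · obtain ⟨s, hs, t, ht, hst, hw1⟩ := eA h1
    rcases Setup.trich D P x y z w with h2 | h2 | h2
    · obtain ⟨s', hs', t', ht', hst', hw1'⟩ := eB h2
      exact H.nx_uv S hs ht hs' ht' hst hst' hw1 hw1'
    · exact (H.edge_notInn S hs ht hst hu hv hx hy hz h hw1 h2).elim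
    · exact (hw' h2).elim
  · rcases Setup.trich D P x y z w with h2 | h2 | h2
    · obtain ⟨s', hs', t', ht', hst', hw1'⟩ := eB h2
      exact (H.symm.edge_notInn S hs' ht' hst' hvA huA ha hb hc hT hw1' h1).elim
    · exact (H.Inn_disj S ha hb hc hT huA hvA hu hv hx hy hz h h1 h2).elim
    · exact (hw' h2).elim
  · exact (hw h1).elim

end Sepa
end


/-- Union of consecutive arcs. -/
def chain {n : ℕ} {X : Type*} [TopologicalSpace X] (D : GoodDrawing n X) (e : ℕ → Fin n) :
    ℕ → Set X
  | 0 => D.arc (e 0) (e 1)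
  | (k + 1) => chain D e k ∪ D.arc (e (k + 1)) (e (k + 2))

section
variable {n : ℕ} {X : Type*} [TopologicalSpace X] {D : GoodDrawing n X} {P : PlaneChart X}

theorem mem_chain {e : ℕ → Fin n} {k : ℕ} {z : X} :
    z ∈ chain D e k ↔ ∃ j ≤ k, z ∈ D.arc (e j) (e (j + 1)) := by
  induction k with
  | zero => simp [chain]
  | succ k ih =>
    rw [chain, mem_union, ih]
    constructor
    · rintro (⟨j, hj, h⟩ | h)
      · exact ⟨j, by omega, h⟩
      · exact ⟨k + 1, le_rfl, h⟩
    · rintro ⟨j, hj, h⟩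
      rcases Nat.lt_or_ge k j with h' | h'
      · obtain rfl : j = k + 1 := by omega
        exact Or.inr h
      · exact Or.inl ⟨j, h', h⟩

theorem fan_sum (D : GoodDrawing n X) (P : PlaneChart X) (e : ℕ → Fin n) (z : X) (k : ℕ) :
    (∑ j ∈ Finset.range (k + 1), D.th P (e j) (e (j + 1)) z) + D.th P (e (k + 1)) (e 0) z =
      ∑ j ∈ Finset.range k, D.wd P (e 0) (e (j + 1)) (e (j + 2)) z := by
  induction k with
  | zero => simp [D.th_symm P (e 0) (e 1)]
  | succ k ih =>
    rw [Finset.sum_range_succ, Finset.sum_range_succ (fun j => D.wd P (e 0) (e (j + 1)) (e (j + 2)) z) k, ← ih, GoodDrawing.wd,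
      D.th_symm P (e (k + 1)) (e 0)]
    ring

variable [T2Space X] 

/-- Hypotheses on a closed polygon. -/
structure Polyg (D : GoodDrawing n X) (m : ℕ) (e : ℕ → Fin n) : Prop where
  inj : ∀ i j, i < m + 3 → j < m + 3 → e i = e j → i = j
  per : e (m + 3) = e 0
  nc : ∀ j k, j < m + 3 → k < m + 3 → e j ≠ e k → e j ≠ e (k + 1) → e (j + 1) ≠ e k →
    e (j + 1) ≠ e (k + 1) → ∀ z ∈ D.arc (e j) (e (j + 1)), z ∉ D.arc (e k) (e (k + 1))

namespace Polyg

variable {m : ℕ} {e : ℕ → Fin n}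

theorem ne (H : Polyg D m e) {i j : ℕ} (hi : i < m + 3) (hj : j < m + 3) (h : i ≠ j) : e i ≠ e j :=
  fun h' => h (H.inj i j hi hj h')

theorem tame (S : Setup D P) (H : Polyg D m e) {k : ℕ} (hk : k ≤ m + 1) :
    P.Tame (chain D e k) := by
  induction k with
  | zero => exact S.tame (H.ne (by omega) (by omega) (by omega))
  | succ k ih =>
    refine PlaneChart.tame_union (c := D.vtx (e (k + 1))) (ih (by omega))
      (S.tame (H.ne (by omega) (by omega) (by omega))) ?_
    ext z
    constructor
    · rintro ⟨h1, h2⟩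
      obtain ⟨j, hj, h3⟩ := mem_chain.1 h1
      rcases Nat.lt_or_ge j k with h' | h'
      · exact (H.nc j (k + 1) (by omega) (by omega) (H.ne (by omega) (by omega) (by omega))
          (H.ne (by omega) (by omega) (by omega)) (H.ne (by omega) (by omega) (by omega))
          (H.ne (by omega) (by omega) (by omega)) z h3 h2).elim
      · obtain rfl : j = k := by omega
        exact D.adj_inter ⟨H.ne (by omega) (by omega) (by omega),
          H.ne (by omega) (by omega) (by omega), H.ne (by omega) (by omega) (by omega)⟩ h3 h2
    · rintro rfl
      exact ⟨mem_chain.2 ⟨k, le_rfl, D.vtx_mem_right (H.ne (by omega) (by omega) (by omega))⟩,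
        D.vtx_mem_left (H.ne (by omega) (by omega) (by omega))⟩

theorem mem0 (H : Polyg D m e) (k : ℕ) : D.vtx (e 0) ∈ chain D e k :=
  mem_chain.2 ⟨0, by omega, D.vtx_mem_left (H.ne (by omega) (by omega) (by omega))⟩

theorem mem1 (H : Polyg D m e) {k : ℕ} (hk : k ≤ m + 1) : D.vtx (e (k + 1)) ∈ chain D e k :=
  mem_chain.2 ⟨k, le_rfl, D.vtx_mem_right (H.ne (by omega) (by omega) (by omega))⟩

theorem theta (S : Setup D P) (H : Polyg D m e) {k : ℕ} (hk : k ≤ m + 1) {z : X}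
    (hz : z ∉ chain D e k) : P.theta (chain D e k) (D.vtx (e 0)) (D.vtx (e (k + 1))) z =
      ∑ j ∈ Finset.range (k + 1), D.th P (e j) (e (j + 1)) z := by
  induction k with
  | zero => simp [chain, GoodDrawing.th]
  | succ k ih =>
    have t1 := H.tame S (k := k) (by omega)
    have t2 := H.tame S hk
    have hne : e (k + 1) ≠ e (k + 2) := H.ne (by omega) (by omega) (by omega)
    rw [Finset.sum_range_succ, ← ih (by omega) (fun h => hz (Or.inl h)),
      PlaneChart.theta_mono t1 t2 subset_union_left (H.mem0 k) (H.mem1 (by omega)) hz,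
      GoodDrawing.th, PlaneChart.theta_mono (S.tame hne) t2 subset_union_right
        (D.vtx_mem_left hne) (D.vtx_mem_right hne) hz,
      PlaneChart.theta_add t2 (H.mem0 _) (Or.inl (H.mem1 (by omega))) (H.mem1 hk) hz]

theorem jordan (S : Setup D P) (H : Polyg D m e) :
    P.Jordan (chain D e (m + 1)) (D.arc (e (m + 2)) (e 0)) (D.vtx (e 0)) (D.vtx (e (m + 2))) where
  tA := H.tame S le_rfl
  tB := S.tame (H.ne (by omega) (by omega) (by omega))
  inter := by
    ext z
    constructor
    · rintro ⟨h1, h2⟩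
      obtain ⟨j, hj, h1⟩ := mem_chain.1 h1
      by_cases j0 : j = 0
      · subst j0
        exact Or.inl (D.adj_inter ⟨H.ne (by omega) (by omega) (by omega),
          H.ne (by omega) (by omega) (by omega), H.ne (by omega) (by omega) (by omega)⟩ h2 h1)
      by_cases j1 : j = m + 1
      · subst j1
        exact Or.inr (D.adj_inter ⟨H.ne (by omega) (by omega) (by omega),
          H.ne (by omega) (by omega) (by omega), H.ne (by omega) (by omega) (by omega)⟩ h1 h2)
      · have e0 := H.per
        refine (H.nc j (m + 2) (by omega) (by omega) (H.ne (by omega) (by omega) (by omega))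
          ?_ (H.ne (by omega) (by omega) (by omega)) ?_ z h1 ?_).elim
        · rw [show m + 2 + 1 = m + 3 from rfl, e0]; exact H.ne (by omega) (by omega) (by omega)
        · rw [show m + 2 + 1 = m + 3 from rfl, e0]; exact H.ne (by omega) (by omega) (by omega)
        · rw [show m + 2 + 1 = m + 3 from rfl, e0]; exact h2
    · rintro (rfl | rfl)
      · exact ⟨H.mem0 _, D.vtx_mem_right (H.ne (by omega) (by omega) (by omega))⟩
      · exact ⟨H.mem1 le_rfl, D.vtx_mem_left (H.ne (by omega) (by omega) (by omega))⟩
  ne := fun h' => H.ne (i := 0) (j := m + 2) (by omega) (by omega) (by omega) (D.vtx_inj h')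

theorem fan (S : Setup D P) (H : Polyg D m e) {z : X}
    (hz : z ∉ chain D e (m + 1) ∪ D.arc (e (m + 2)) (e 0))
    (hW : P.W (chain D e (m + 1)) (D.arc (e (m + 2)) (e 0)) (D.vtx (e 0)) (D.vtx (e (m + 2))) z
      ≠ 0) : ∃ j < m + 1, z ∉ D.Ext P (e 0) (e (j + 1)) (e (j + 2)) := by
  rw [PlaneChart.W, H.theta S le_rfl (fun h => hz (Or.inl h))] at hW
  have := fan_sum D P e z (m + 1)
  rw [GoodDrawing.th] at this
  rw [this] at hW
  obtain ⟨j, hj, h⟩ := Finset.exists_ne_zero_of_sum_ne_zero hW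
  exact ⟨j, Finset.mem_range.1 hj, fun h' => h h'.2⟩

end Polyg

variable [CompactSpace X] [LocallyConnectedSpace X]

theorem face_sub (S : Setup D P) {W : Set (Fin n)} {G : Set X} (hG : IsFaceOf (D.image W) G)
    (hf : P.inf ∈ G) {a b c : Fin n} (ha : a ∈ W) (hb : b ∈ W) (hc : c ∈ W) (h : Dis a b c) :
    G ⊆ D.Ext P a b c := by
  obtain ⟨q, hq, rfl⟩ := hG
  have arcs : ∀ a ∈ W, ∀ b ∈ W, a ≠ b → D.arc a b ⊆ D.image W := by
    intro a ha b hb hab z hz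
    refine Or.inr ?_
    simp only [mem_iUnion]
    exact ⟨a, ha, b, hb, hab, hz⟩
  intro z hz
  refine S.Ext_prop h isPreconnected_connectedComponentIn ?_ hf hz (S.inf_Ext h)
  intro w hw h'
  refine connectedComponentIn_subset _ _ hw ?_
  rw [D.mem_tri] at h'
  rcases h' with h' | h' | h'
  · exact arcs a ha b hb h.1 h'
  · exact arcs b hb c hc h.2.1 h'
  · exact arcs c hc a ha h.2.2 h'

theorem hull_main (S : Setup D P) {F : Set X} (hf : P.inf ∈ F) {W : Set (Fin n)} {Δ : Set X}
    (h : D.IsHull F W Δ) :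
    (∀ z ∈ Δ, ∃ a ∈ W, ∃ b ∈ W, ∃ c ∈ W, Dis a b c ∧ z ∉ D.Ext P a b c) ∧
    ∀ u ∈ W, ∀ v ∈ W, u ≠ v → D.arc u v ⊆ Δ := by
  obtain ⟨m, c, hinj, hcW, ⟨G, hG, hFG, hfr⟩, ⟨q, hq, rfl⟩, hdis⟩ := h
  set e : ℕ → Fin n := fun k => c (Fin.ofNat (m + 3) k) with he
  have heW : ∀ k, e k ∈ W := fun k => hcW _
  have hcyc : ∀ z, z ∈ D.cycCurve c ↔ ∃ k < m + 3, z ∈ D.arc (e k) (e (k + 1)) := by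
    intro z
    rw [GoodDrawing.cycCurve, mem_iUnion]
    constructor
    · rintro ⟨i, hi⟩
      refine ⟨i, i.2, ?_⟩
      have e1 : Fin.ofNat (m + 3) (i : ℕ) = i := by ext; simp [Nat.mod_eq_of_lt i.2]
      have e2 : Fin.ofNat (m + 3) ((i : ℕ) + 1) = i + 1 := by
        ext; simp [Fin.val_add]
      rw [he]; simp only; rwa [e1, e2]
    · rintro ⟨k, hk, h⟩
      refine ⟨Fin.ofNat (m + 3) k, ?_⟩
      have e2 : Fin.ofNat (m + 3) (k + 1) = Fin.ofNat (m + 3) k + 1 := by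
        ext; simp [Fin.val_add]
      rw [← e2]; exact h
  have hP : Polyg D m e := by
    have inj : ∀ i j, i < m + 3 → j < m + 3 → e i = e j → i = j := by
      intro i j hi hj h
      have := congrArg Fin.val (hinj h)
      simpa [Nat.mod_eq_of_lt hi, Nat.mod_eq_of_lt hj] using this
    have per : e (m + 3) = e 0 := by
      have : Fin.ofNat (m + 3) (m + 3) = Fin.ofNat (m + 3) 0 := by ext; simp
      rw [he]; simp only; rw [this]
    have step : ∀ j < m + 3, e j ≠ e (j + 1) := by
      intro j hj h'
      rcases Nat.lt_or_ge (j + 1) (m + 3) with h1 | h1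
      · have := inj _ _ hj h1 h'; omega
      · obtain rfl : j = m + 2 := by omega
        rw [show m + 2 + 1 = m + 3 from rfl, per] at h'
        have := inj _ _ hj (by omega) h'; omega
    refine ⟨inj, per, ?_⟩
    intro j k hj hk h1 h2 h3 h4 z hz hz'
    have hc : Dis (e j) (e (j + 1)) (e k) := ⟨step j hj, h3, h1.symm⟩
    have hd : Dis (e j) (e (j + 1)) (e (k + 1)) := ⟨step j hj, h4, h2.symm⟩
    have hev := (S.F2 hc hd (step k hk) hz hz').2
    have hzc : z ∈ closure G := by
      have : z ∈ frontier G := by rw [hfr, hcyc]; exact ⟨j, hj, hz⟩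
      exact this.1
    obtain ⟨w, hw, hwG⟩ := mem_closure_iff_nhds.1 hzc _ hev
    have g1 := face_sub S hG (hFG hf) (heW j) (heW (j + 1)) (heW k) hc hwG
    have g2 := face_sub S hG (hFG hf) (heW j) (heW (j + 1)) (heW (k + 1)) hd hwG
    rcases hw with hw | hw
    · exact hw g1
    · exact hw g2
  have hJ := hP.jordan S
  have hJc : D.cycCurve c = chain D e (m + 1) ∪ D.arc (e (m + 2)) (e 0) := by
    ext z
    rw [hcyc, mem_union, mem_chain]
    constructor
    · rintro ⟨k, hk, h⟩
      rcases Nat.lt_or_ge k (m + 2) with h1 | h1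
      · exact Or.inl ⟨k, by omega, h⟩
      · obtain rfl : k = m + 2 := by omega
        rw [show m + 2 + 1 = m + 3 from rfl, hP.per] at h
        exact Or.inr h
    · rintro (⟨k, hk, h⟩ | h)
      · exact ⟨k, by omega, h⟩
      · refine ⟨m + 2, by omega, ?_⟩
        rw [show m + 2 + 1 = m + 3 from rfl, hP.per]; exact h
  have hfΔ : P.inf ∉ connectedComponentIn (D.cycCurve c)ᶜ q := fun h' =>
    Set.disjoint_left.1 hdis hf (Or.inl h')
  have hqW : P.W (chain D e (m + 1)) (D.arc (e (m + 2)) (e 0)) (D.vtx (e 0)) (D.vtx (e (m + 2))) q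
      ≠ 0 := by
    intro h'
    refine hfΔ ?_
    rw [hJc] at hq ⊢
    exact hJ.mem_outer hq h'
  constructor
  · rintro z (hz | hz)
    · have hzc : z ∉ chain D e (m + 1) ∪ D.arc (e (m + 2)) (e 0) := by
        have := connectedComponentIn_subset _ _ hz
        rw [hJc] at this; exact this
      obtain ⟨j, hj, h⟩ := hP.fan S hzc (by
        rw [hJc] at hz hq
        rw [hJ.W_const isPreconnected_connectedComponentIn (connectedComponentIn_subset _ _) hz
          (mem_connectedComponentIn hq)]
        exact hqW)
      exact ⟨e 0, heW _, e (j + 1), heW _, e (j + 2), heW _,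
        ⟨hP.ne (by omega) (by omega) (by omega), hP.ne (by omega) (by omega) (by omega),
          hP.ne (by omega) (by omega) (by omega)⟩, h⟩
    · rw [hJc, mem_union, mem_chain] at hz
      have fin : ∀ i j k, i < m + 3 → j < m + 3 → k < m + 3 → i ≠ j → j ≠ k → k ≠ i →
          z ∈ D.arc (e i) (e j) →
          ∃ a ∈ W, ∃ b ∈ W, ∃ c ∈ W, Dis a b c ∧ z ∉ D.Ext P a b c := by
        intro i j k hi hj hk h1 h2 h3 hz
        exact ⟨e i, heW _, e j, heW _, e k, heW _, ⟨hP.ne hi hj h1, hP.ne hj hk h2, hP.ne hk hi h3⟩,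
          fun h' => h'.1 (by rw [D.mem_tri]; exact Or.inl hz)⟩
      rcases hz with ⟨j, hj, hz⟩ | hz
      · by_cases j0 : j = 0
        · subst j0
          exact fin 0 1 2 (by omega) (by omega) (by omega) (by omega) (by omega) (by omega) hz
        · exact fin j (j + 1) 0 (by omega) (by omega) (by omega) (by omega) (by omega)
            (by omega) hz
      · exact fin (m + 2) 0 1 (by omega) (by omega) (by omega) (by omega) (by omega) (by omega) hz
  · intro u hu v hv huv z hz
    by_cases hzc : z ∈ D.cycCurve c
    · exact Or.inr hzc
    have hzc' := hzc
    rw [hJc] at hzc'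
    refine Or.inl ?_
    rw [hJc] at hq ⊢
    refine hJ.mem_inner hq hzc' hqW ?_
    intro h'
    have h1 := hJ.mem_outer hzc' h'
    rw [← hJc] at h1
    have hzG : z ∉ G := by
      obtain ⟨q', hq', rfl⟩ := hG
      intro h2
      refine connectedComponentIn_subset _ _ h2 (Or.inr ?_)
      simp only [mem_iUnion]
      exact ⟨u, hu, v, hv, huv, hz⟩
    obtain ⟨w, hw1, hw2⟩ := PlaneChart.preconn_meets_frontier
      (isPreconnected_connectedComponentIn (x := z) (F := (D.cycCurve c)ᶜ))
      ⟨P.inf, h1, hFG hf⟩ ⟨z, mem_connectedComponentIn hzc, hzG⟩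
    rw [hfr] at hw2
    exact connectedComponentIn_subset _ _ hw1 hw2

/-! Sides. -/

theorem onSide_ext (S : Setup D P) {F : Set X} (hf : P.inf ∈ F) (hFp : IsPreconnected F)
    (hFd : ∀ a b, a ≠ b → ∀ z ∈ F, z ∉ D.arc a b) {u v w : Fin n} (huv : u ≠ v) {p : X}
    {C : Fin 2 → Set X} {i : Fin 2} (h : D.OnSide F u v p C i w) :
    Dis u v w ∧ ∀ᶠ z in 𝓝 p, z ∈ C i → z ∉ D.Ext P u v w := by
  obtain ⟨wu, wv, Δ, ⟨q, hq, rfl⟩, hF, V, hV, hs⟩ := h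
  have hd : Dis u v w := ⟨huv, wv.symm, wu⟩
  refine ⟨hd, ?_⟩
  have hFE : F ⊆ D.Ext P u v w := by
    intro z hz
    refine S.Ext_prop hd hFp ?_ hf hz (S.inf_Ext hd)
    intro z hz h'
    rw [D.mem_tri] at h'
    rcases h' with h' | h' | h'
    · exact hFd _ _ hd.1 z hz h'
    · exact hFd _ _ hd.2.1 z hz h'
    · exact hFd _ _ hd.2.2 z hz h'
  filter_upwards [hV] with z hzV hzC hzE
  rcases Setup.trich D P u v w q with h' | h' | h'
  · exact hq h'
  · rw [S.comp_Inn hd h'] at hs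
    rcases hs ⟨hzC, hzV⟩ with h1 | h1
    · exact Setup.Inn_Ext h1 hzE
    · exact hzE.1 h1
  · rw [S.comp_Ext hd h'] at hF
    exact hF (hFE.trans subset_union_left)

theorem sides_opp (S : Setup D P) {u v w₀ w₁ : Fin n} {p : X} {C : Fin 2 → Set X}
    (hC : D.LocalSides u v p C) (d₀ : Dis u v w₀) (d₁ : Dis u v w₁)
    (h₀ : ∀ᶠ z in 𝓝 p, z ∈ C 0 → z ∉ D.Ext P u v w₀)
    (h₁ : ∀ᶠ z in 𝓝 p, z ∈ C 1 → z ∉ D.Ext P u v w₁) : D.om P u v w₁ = - D.om P u v w₀ := by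
  obtain ⟨hp, pu, pv, V, hV, hCV, -⟩ := hC
  obtain ⟨k, hk⟩ := S.jump d₀ d₁ hp pu pv
  have hall := (h₀.and h₁).and (hk.and hV)
  have split : ∀ z, z ∈ V → z ∉ D.arc u v → z ∈ C 0 ∨ z ∈ C 1 := by
    intro z hz hz'
    have : z ∈ C 0 ∪ C 1 := by rw [hCV]; exact ⟨hz, hz'⟩
    exact this
  obtain ⟨z, ⟨⟨a1, a2⟩, ⟨b1, b2, b3, b4, b5⟩, hzV⟩, hzE⟩ := S.near_ext d₀ hp pu pv hall
  obtain ⟨y, ⟨⟨a1', a2'⟩, ⟨b1', b2', b3', b4', b5'⟩, hyV⟩, hyE⟩ := S.near_ext d₁ hp pu pv hall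
  have hzu : z ∉ D.arc u v := fun h => hzE.1 (by rw [D.mem_tri]; exact Or.inl h)
  have hyu : y ∉ D.arc u v := fun h => hyE.1 (by rw [D.mem_tri]; exact Or.inl h)
  have z1 : z ∈ D.Inn P u v w₁ := by
    have hz1 : z ∈ C 1 := (split z hzV hzu).resolve_left (fun h => a1 h hzE)
    rcases Setup.trich D P u v w₁ z with h | h | h
    · rw [D.mem_tri] at h; tauto
    · exact h
    · exact (a2 hz1 h).elim
  have y0 : y ∈ D.Inn P u v w₀ := by
    have hy0 : y ∈ C 0 := (split y hyV hyu).resolve_right (fun h => a2' h hyE)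
    rcases Setup.trich D P u v w₀ y with h | h | h
    · rw [D.mem_tri] at h; tauto
    · exact h
    · exact (a1' hy0 h).elim
  rw [hzE.2, S.om_spec d₁ z1] at b5
  rw [hyE.2, S.om_spec d₀ y0] at b5'
  have : ((D.om P u v w₁ : ℤ) : ℂ) = ((- D.om P u v w₀ : ℤ) : ℂ) := by
    push_cast
    linear_combination - b5 + b5'
  exact_mod_cast this

end

theorem hulls_aux (n : ℕ) (D : GoodDrawing n SpherePt)
    (F : Set SpherePt) (hFC : D.FaceConvex F) (u v : Fin n) (huv : u ≠ v)
    (p : SpherePt) (C : Fin 2 → Set SpherePt) (hC : D.LocalSides u v p C)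
    (h₀ : 3 ≤ (D.SideSet F u v p C 0).ncard) (h₁ : 3 ≤ (D.SideSet F u v p C 1).ncard)
    (Δ₀ Δ₁ : Set SpherePt)
    (hΔ₀ : D.IsHull F (D.SideSet F u v p C 0) Δ₀)
    (hΔ₁ : D.IsHull F (D.SideSet F u v p C 1) Δ₁) :
    Δ₀ ∩ Δ₁ = D.arc u v ∪ {D.vtx u, D.vtx v} := by
  haveI := sphere_locConn
  obtain ⟨⟨f, hf, hF⟩, hconv⟩ := hFC
  have hfF : f ∈ F := by rw [hF]; exact mem_connectedComponentIn hf
  have hFp : IsPreconnected F := by rw [hF]; exact isPreconnected_connectedComponentIn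
  have hFd : ∀ a b, a ≠ b → ∀ z ∈ F, z ∉ D.arc a b := by
    intro a b hab z hz h'
    rw [hF] at hz
    refine connectedComponentIn_subset _ _ hz (Or.inr ?_)
    simp only [mem_iUnion]
    exact ⟨a, trivial, b, trivial, hab, h'⟩
  let P := sphereChart f
  have S : Setup D P := ⟨fun a b hab => hFd a b hab f hfF, fun a b c hab hac hbc Δ hΔ hn =>
    hconv a b c hab hac hbc Δ hΔ (fun h' => hn (h' hfF))⟩
  have hfP : P.inf ∈ F := hfF
  have ex : ∀ i : Fin 2, 3 ≤ (D.SideSet F u v p C i).ncard → ∃ w, D.OnSide F u v p C i w := by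
    intro i hi
    by_contra hne
    push Not at hne
    have : D.SideSet F u v p C i = {u, v} := by
      ext w; simp [GoodDrawing.SideSet, hne]
    rw [this, ncard_pair huv] at hi
    omega
  obtain ⟨w₀, hw₀⟩ := ex 0 h₀
  obtain ⟨w₁, hw₁⟩ := ex 1 h₁
  have O₀ := onSide_ext S hfP hFp hFd huv hw₀
  have O₁ := onSide_ext S hfP hFp hFd huv hw₁
  have H : Sepa D P (D.om P u v w₀) u v (D.SideSet F u v p C 0) (D.SideSet F u v p C 1) := by
    refine ⟨S.om_ne O₀.1, huv, ?_, ?_⟩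
    · intro a ha au av
      have ha : D.OnSide F u v p C 0 a := by
        rcases ha with (rfl | rfl) | ha
        · exact (au rfl).elim
        · exact (av rfl).elim
        · exact ha
      have Oa := onSide_ext S hfP hFp hFd huv ha
      have e1 := sides_opp S hC O₀.1 O₁.1 O₀.2 O₁.2
      have e2 := sides_opp S hC Oa.1 O₁.1 Oa.2 O₁.2
      have e3 : D.om P u v a = D.om P u v w₀ := by omega
      refine ⟨Oa.1, ?_⟩
      rw [e3]
      exact mul_self_pos.2 (S.om_ne O₀.1)
    · intro a ha au av
      have ha : D.OnSide F u v p C 1 a := by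
        rcases ha with (rfl | rfl) | ha
        · exact (au rfl).elim
        · exact (av rfl).elim
        · exact ha
      have Oa := onSide_ext S hfP hFp hFd huv ha
      have e1 := sides_opp S hC O₀.1 Oa.1 O₀.2 Oa.2
      refine ⟨Oa.1.swap, ?_⟩
      rw [S.om_swap Oa.1, e1, neg_neg]
      exact mul_self_pos.2 (S.om_ne O₀.1)
  have mu : ∀ i, u ∈ D.SideSet F u v p C i := fun i => Or.inl (Or.inl rfl)
  have mv : ∀ i, v ∈ D.SideSet F u v p C i := fun i => Or.inl (Or.inr rfl)
  have K₀ := hull_main S hfP hΔ₀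
  have K₁ := hull_main S hfP hΔ₁
  have hs : D.arc u v ∪ {D.vtx u, D.vtx v} = D.arc u v := by
    rw [union_eq_left]
    rintro z (rfl | rfl)
    · exact D.vtx_mem_left huv
    · exact D.vtx_mem_right huv
  rw [hs]
  refine Subset.antisymm ?_ (fun z hz => ⟨K₀.2 u (mu 0) v (mv 0) huv hz,
    K₁.2 u (mu 1) v (mv 1) huv hz⟩)
  rintro z ⟨hz0, hz1⟩
  obtain ⟨a, ha, b, hb, c, hc, hT, hw⟩ := K₀.1 z hz0
  obtain ⟨a', ha', b', hb', c', hc', hT', hw'⟩ := K₁.1 z hz1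
  exact H.final S ha hb hc hT (mu 0) (mv 0) (mu 1) (mv 1) ha' hb' hc' hT' hw hw'

/-- The convex hulls of the two sides of `uv` intersect exactly in the arc `D[uv]`
together with the points of `u` and `v`. -/
theorem hulls_intersect_in_edge (n : ℕ) (D : GoodDrawing n SpherePt)
    (F : Set SpherePt) (hFC : D.FaceConvex F) (u v : Fin n) (huv : u ≠ v)
    (p : SpherePt) (C : Fin 2 → Set SpherePt) (hC : D.LocalSides u v p C)
    (h₀ : 3 ≤ (D.SideSet F u v p C 0).ncard) (h₁ : 3 ≤ (D.SideSet F u v p C 1).ncard)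
    (Δ₀ Δ₁ : Set SpherePt)
    (hΔ₀ : D.IsHull F (D.SideSet F u v p C 0) Δ₀)
    (hΔ₁ : D.IsHull F (D.SideSet F u v p C 1) Δ₁) :
    Δ₀ ∩ Δ₁ = D.arc u v ∪ {D.vtx u, D.vtx v} := by
  exact hulls_aux n D F hFC u v huv p C hC h₀ h₁ Δ₀ Δ₁ hΔ₀ hΔ₁

end
end

section
/- Let n ≥ 1 and let G be a simple graph with vertex set {1, 2, …, n}. Suppose that there are no four vertices i < j < k < ℓ such that ik, iℓ, and jℓ are all edges of G. Then the number of edges of G is at most 3n⌈log₂ n⌉. -/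
lemma bf_log_lt {a b : ℕ} (ha : 0 < a) (hab : 2 * a ≤ b) : Nat.log 2 a < Nat.log 2 b := by
  have h1 : Nat.log 2 (a * 2) = Nat.log 2 a + 1 := Nat.log_mul_base (by norm_num) (by omega)
  have h2 : Nat.log 2 (a * 2) ≤ Nat.log 2 b := Nat.log_mono_right (by omega)
  omega

lemma bf_log_bound {n a : ℕ} (ha : 0 < a) (han : a < n) : Nat.log 2 a < Nat.clog 2 n := by
  apply Nat.log_lt_of_lt_pow (by omega)
  exact lt_of_lt_of_le han (Nat.le_pow_clog (by norm_num) n)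

/-- **Bárány–Füredi Lemma 8.1.** If a simple graph on the linearly ordered vertex set
`{1, …, n}` has no four vertices `i < j < k < ℓ` with `ik`, `iℓ`, `jℓ` all edges, then
it has at most `3n⌈log₂ n⌉` edges. -/
theorem barany_furedi_edge_bound (n : ℕ) (hn : 1 ≤ n) (G : SimpleGraph (Fin n))
    (h : ¬∃ i j k l : Fin n, i < j ∧ j < k ∧ k < l ∧ G.Adj i k ∧ G.Adj i l ∧ G.Adj j l) :
    G.edgeSet.ncard ≤ 3 * n * Nat.clog 2 n := by
  classical
  let A : Finset (Fin n × Fin n) := Finset.univ.filter fun p =>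
    p.1 < p.2 ∧ G.Adj p.1 p.2 ∧
      ∀ k, p.1 < k → k < p.2 → G.Adj p.1 k → 2 * (k.val - p.1.val) ≤ p.2.val - p.1.val
  let B : Finset (Fin n × Fin n) := Finset.univ.filter fun p =>
    p.1 < p.2 ∧ G.Adj p.1 p.2 ∧
      ∀ j, p.1 < j → j < p.2 → G.Adj j p.2 → 2 * (p.2.val - j.val) ≤ p.2.val - p.1.val
  let T : Finset (Fin n × ℕ) := Finset.univ ×ˢ Finset.range (Nat.clog 2 n)
  have hT : T.card = n * Nat.clog 2 n := by simp [T]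
  have hA : A.card ≤ T.card := by
    apply Finset.card_le_card_of_injOn (fun p => (p.1, Nat.log 2 (p.2.val - p.1.val)))
    · rintro ⟨i, l⟩ hp
      simp only [A, Finset.coe_filter, Finset.mem_univ, true_and, Set.mem_setOf_eq] at hp
      obtain ⟨h1, -, -⟩ := hp
      have := bf_log_bound (n := n) (a := l.val - i.val) (by omega) (by omega)
      simpa [T] using this
    · rintro ⟨i, l⟩ hp ⟨i', k⟩ hq hpq
      simp only [A, Finset.coe_filter, Finset.mem_univ, true_and, Set.mem_setOf_eq] at hp hq
      simp only [Prod.mk.injEq] at hpq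
      obtain ⟨rfl, hlog⟩ := hpq
      obtain ⟨h1, h2, h3⟩ := hp
      obtain ⟨g1, g2, g3⟩ := hq
      rcases lt_trichotomy l k with hlt | rfl | hlt
      · have := bf_log_lt (by omega) (g3 l h1 hlt h2)
        omega
      · rfl
      · have := bf_log_lt (by omega) (h3 k g1 hlt g2)
        omega
  have hB : B.card ≤ T.card := by
    apply Finset.card_le_card_of_injOn (fun p => (p.2, Nat.log 2 (p.2.val - p.1.val)))
    · rintro ⟨i, l⟩ hp
      simp only [B, Finset.coe_filter, Finset.mem_univ, true_and, Set.mem_setOf_eq] at hp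
      obtain ⟨h1, -, -⟩ := hp
      have := bf_log_bound (n := n) (a := l.val - i.val) (by omega) (by omega)
      simpa [T] using this
    · rintro ⟨i, l⟩ hp ⟨j, l'⟩ hq hpq
      simp only [B, Finset.coe_filter, Finset.mem_univ, true_and, Set.mem_setOf_eq] at hp hq
      simp only [Prod.mk.injEq] at hpq
      obtain ⟨rfl, hlog⟩ := hpq
      obtain ⟨h1, h2, h3⟩ := hp
      obtain ⟨g1, g2, g3⟩ := hq
      rcases lt_trichotomy i j with hlt | rfl | hlt
      · have := bf_log_lt (by omega) (h3 j hlt g1 g2)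
        omega
      · rfl
      · have := bf_log_lt (by omega) (g3 i hlt h1 h2)
        omega
  have key : ∀ i l : Fin n, i < l → G.Adj i l → (i, l) ∈ A ∪ B := by
    intro i l hil hadj
    by_contra hc
    simp only [A, B, Finset.mem_union, Finset.mem_filter, Finset.mem_univ, true_and, hil, hadj,
      not_or, not_forall, not_le] at hc
    obtain ⟨⟨k, hk1, hk2, hk3, hk4⟩, ⟨j, hj1, hj2, hj3, hj4⟩⟩ := hc
    exact h ⟨i, j, k, l, hj1, by omega, hk2, hk3, hadj, hj3⟩
  have hsub : G.edgeSet ⊆ (((A ∪ B).image fun p => s(p.1, p.2) : Finset (Sym2 (Fin n))) :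
      Set (Sym2 (Fin n))) := by
    intro e
    induction e using Sym2.ind with
    | _ x y =>
      intro he
      rw [SimpleGraph.mem_edgeSet] at he
      rw [Finset.mem_coe, Finset.mem_image]
      rcases lt_trichotomy x y with hlt | heq | hlt
      · exact ⟨(x, y), key x y hlt he, rfl⟩
      · exact absurd heq he.ne
      · exact ⟨(y, x), key y x hlt he.symm, Sym2.eq_swap⟩
  have h1 := Set.ncard_le_ncard hsub (Finset.finite_toSet _)
  rw [Set.ncard_coe_finset] at h1
  have h2 : ((A ∪ B).image fun p => s(p.1, p.2)).card ≤ (A ∪ B).card := Finset.card_image_le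
  have h3 := Finset.card_union_le A B
  have h4 : 3 * n * Nat.clog 2 n = 3 * (n * Nat.clog 2 n) := by ring
  omega
end
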